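/- Let G = (V,E) be a (possibly infinite) graph, T ⊆ V, and suppose G is inner Eulerian w.r.t. T (there is no X ⊆ V∖T with d_G(X) an odd natural number) and there is an s ∈ T admitting no non-trivial s(T−s)-wave. Then for every pair of edges f, h ∈ E there exists a system of pairwise edge-disjoint T-paths in G − f − h covering all edges of G − f − h incident with s. -/

import Mathlib

/-!
Common definitions: multigraphs (parallel edges allowed, no loops), walks,
paths, cuts, waves and related notions used in the statements below.
-/

universe u v

/-- A multigraph with vertex type `V` and edge type `E`: every edge is assigned
an unordered pair of *distinct* end-vertices (parallel edges allowed, no loops). -/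
structure Multigraph (V : Type u) (E : Type v) : Type (max u v) where
  inc : E → Sym2 V
  not_isDiag : ∀ e, ¬ (inc e).IsDiag

namespace Multigraph

variable {V : Type u} {E : Type v}

/-- Walks in a multigraph, recorded together with the edges they traverse. -/
inductive Walk (G : Multigraph V E) : V → V → Type (max u v)
  | nil (v : V) : Walk G v v
  | cons {u v w : V} (e : E) (he : G.inc e = s(u, v)) (p : Walk G v w) : Walk G u w

namespace Walk

variable {G : Multigraph V E}

/-- The list of vertices visited by a walk. -/
def support : ∀ {u w : V}, G.Walk u w → List V
  | _, _, .nil v => [v]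
  | u, _, .cons _ _ p => u :: p.support

/-- The list of edges traversed by a walk. -/
def edges : ∀ {u w : V}, G.Walk u w → List E
  | _, _, .nil _ => []
  | _, _, .cons e _ p => e :: p.edges

end Walk

/-- `δ_G(v)`: the set of edges incident with the vertex `v`. -/
def inci (G : Multigraph V E) (v : V) : Set E := {e | v ∈ G.inc e}

/-- `δ_G(X)`: the set of edges with exactly one end-vertex in `X`. -/
def cut (G : Multigraph V E) (X : Set V) : Set E :=
  {e | ∃ x y, G.inc e = s(x, y) ∧ x ∈ X ∧ y ∉ X}

/-- Connectedness of a multigraph. -/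
def Connected (G : Multigraph V E) : Prop := ∀ u v : V, Nonempty (G.Walk u v)

/-- A `T`-path: a path connecting two distinct vertices of `T`
with no internal vertex in `T`. -/
structure TPath (G : Multigraph V E) (T : Set V) : Type (max u v) where
  first : V
  last : V
  walk : G.Walk first last
  first_mem : first ∈ T
  last_mem : last ∈ T
  ne : first ≠ last
  support_nodup : walk.support.Nodup
  internal : ∀ x ∈ walk.support, x ∈ T → x = first ∨ x = last

/-- A system of pairwise edge-disjoint `T`-paths. -/
def TPathDisjoint (G : Multigraph V E) {T : Set V} (P : Set (G.TPath T)) : Prop :=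
  ∀ p ∈ P, ∀ q ∈ P, p ≠ q → ∀ e, e ∈ p.walk.edges → e ∉ q.walk.edges

/-- An `st`-path: a path from `s` to `t` (no internal vertex is `s` or `t`,
which is automatic as the vertices of a path are distinct). -/
structure STPath (G : Multigraph V E) (s t : V) : Type (max u v) where
  walk : G.Walk s t
  support_nodup : walk.support.Nodup

/-- A system of pairwise edge-disjoint `st`-paths. -/
def STPathDisjoint (G : Multigraph V E) {s t : V} (P : Set (G.STPath s t)) : Prop :=
  ∀ p ∈ P, ∀ q ∈ P, p ≠ q → ∀ e, e ∈ p.walk.edges → e ∉ q.walk.edges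

/-- A nontrivial path starting at `s`. -/
structure SPath (G : Multigraph V E) (s : V) : Type (max u v) where
  last : V
  walk : G.Walk s last
  support_nodup : walk.support.Nodup
  edges_ne_nil : walk.edges ≠ []

/-- A system of pairwise edge-disjoint paths starting at `s`. -/
def SPathDisjoint (G : Multigraph V E) {s : V} (W : Set (G.SPath s)) : Prop :=
  ∀ p ∈ W, ∀ q ∈ W, p ≠ q → ∀ e, e ∈ p.walk.edges → e ∉ q.walk.edges

/-- The set of last edges of a system of paths starting at `s`. -/
def lastEdges (G : Multigraph V E) {s : V} (W : Set (G.SPath s)) : Set E :=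
  {e | ∃ p ∈ W, p.walk.edges.getLast? = some e}

/-- `C` is a cut separating `A` from `B`. -/
def SepCut (G : Multigraph V E) (A B : Set V) (C : Set E) : Prop :=
  ∃ X : Set V, A ⊆ X ∧ (∀ b ∈ B, b ∉ X) ∧ C = G.cut X

/-- `C` is a `⊆`-minimal cut separating `A` from `B`. -/
def IsMinSepCut (G : Multigraph V E) (A B : Set V) (C : Set E) : Prop :=
  G.SepCut A B C ∧ ∀ D : Set E, G.SepCut A B D → D ⊆ C → D = C

/-- An `s`-`B`-wave: a system of pairwise edge-disjoint paths starting at `s`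
whose set of last edges is a `⊆`-minimal cut separating `s` from `B`. -/
def IsWave (G : Multigraph V E) (s : V) (B : Set V) (W : Set (G.SPath s)) : Prop :=
  G.SPathDisjoint W ∧ G.IsMinSepCut {s} B (G.lastEdges W)

/-- An Erdős–Menger `st`-cut: an `st`-cut which is orthogonal to some system of
pairwise edge-disjoint `st`-paths, i.e. it consists of exactly one edge chosen
from each path of the system. -/
def IsEMCut (G : Multigraph V E) (s t : V) (C : Set E) : Prop :=
  (∃ X : Set V, s ∈ X ∧ t ∉ X ∧ C = G.cut X) ∧
  ∃ P : Set (G.STPath s t), G.STPathDisjoint P ∧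
    (∀ p ∈ P, ∃! e, e ∈ C ∧ e ∈ p.walk.edges) ∧
    (∀ e ∈ C, ∃ p ∈ P, e ∈ p.walk.edges)

/-- The order `≼` on `st`-cuts: the `s`-side of `C` is contained in the
`s`-side of `D` (in a connected graph the `s`-side is unique). -/
def CutLE (G : Multigraph V E) (s t : V) (C D : Set E) : Prop :=
  ∃ X Y : Set V, s ∈ X ∧ t ∉ X ∧ C = G.cut X ∧ s ∈ Y ∧ t ∉ Y ∧ D = G.cut Y ∧ X ⊆ Y

/-- A cut of the form `C_W` for some `st`-wave `W`. -/
def IsWaveCut (G : Multigraph V E) (s t : V) (C : Set E) : Prop :=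
  ∃ W : Set (G.SPath s), G.IsWave s {t} W ∧ G.lastEdges W = C

/-- Deletion of a set of edges. -/
def deleteEdges (G : Multigraph V E) (F : Set E) : Multigraph V {e : E // e ∉ F} where
  inc e := G.inc e.1
  not_isDiag e := G.not_isDiag e.1

open Classical in
/-- Contraction of the vertex set `X` to the vertex `s` (edges inside `X` are
deleted, edges leaving `X` are redirected to `s`). -/
noncomputable def contract (G : Multigraph V E) (X : Set V) (s : V) :
    Multigraph V {e : E // ¬ (Sym2.map (fun v => if v ∈ X then s else v) (G.inc e)).IsDiag} where
  inc e := Sym2.map (fun v => if v ∈ X then s else v) (G.inc e.1)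
  not_isDiag e := e.2

/-- Reachability inside a set `S` of vertices. -/
def ReachableIn (G : Multigraph V E) (S : Set V) (x y : V) : Prop :=
  ∃ p : G.Walk x y, ∀ z ∈ p.support, z ∈ S

/-- `Y` is (the vertex set of) a connected component of the subgraph of `G`
induced by `S`. -/
def IsComponentOf (G : Multigraph V E) (Y S : Set V) : Prop :=
  Y.Nonempty ∧ Y ⊆ S ∧ ∀ x ∈ Y, ∀ y ∈ S, (G.ReachableIn S x y ↔ y ∈ Y)

/-- A cycle in a multigraph (a closed walk with distinct edges whose
vertices are distinct except that the first one equals the last one). -/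
structure Cycle (G : Multigraph V E) : Type (max u v) where
  base : V
  walk : G.Walk base base
  edges_ne_nil : walk.edges ≠ []
  edges_nodup : walk.edges.Nodup
  support_tail_nodup : walk.support.tail.Nodup

/-- A graph is Eulerian if its edge set can be partitioned into
edge sets of cycles. -/
def IsEulerian (G : Multigraph V E) : Prop :=
  ∃ C : Set G.Cycle,
    (∀ c ∈ C, ∀ d ∈ C, c ≠ d → ∀ e, e ∈ c.walk.edges → e ∉ d.walk.edges) ∧
    ∀ e : E, ∃ c ∈ C, e ∈ c.walk.edges

/-- A `T`-partition: a family `{A t : t ∈ T}` of pairwise disjoint vertex sets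
with `A t ∩ T = {t}`. -/
def IsTPartition (T : Set V) (A : V → Set V) : Prop :=
  (∀ t ∈ T, A t ∩ T = {t}) ∧
  ∀ t₁ ∈ T, ∀ t₂ ∈ T, t₁ ≠ t₂ → Disjoint (A t₁) (A t₂)

end Multigraph

namespace LK
variable {V : Type u} {E : Type v}

/-- walk with given edge list -/
inductive W (inc : E → Sym2 V) : V → List E → V → Prop
  | nil (v : V) : W inc v [] v
  | cons {u v w : V} {e : E} {l : List E} (he : inc e = s(u, v)) (h : W inc v l w) :
      W inc u (e :: l) w

/-- path with given edge list -/
inductive Pth (inc : E → Sym2 V) : V → List E → V → Prop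
  | nil (v : V) : Pth inc v [] v
  | cons {u v w : V} {e : E} {l : List E} (he : inc e = s(u, v)) (h : Pth inc v l w)
      (hne : u ≠ w) (hav : ∀ g ∈ l, u ∉ inc g) : Pth inc u (e :: l) w

variable {inc : E → Sym2 V}

theorem ends (inc : E → Sym2 V) (e : E) : ∃ x y, inc e = s(x, y) := by
  induction h : inc e using Sym2.ind with
  | _ x y => exact ⟨x, y, rfl⟩

theorem W.eq_of_nil {u v : V} (h : W inc u [] v) : u = v := by cases h; rfl

theorem W.cons_inv {u w : V} {e l} (h : W inc u (e :: l) w) :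
    ∃ v, inc e = s(u, v) ∧ W inc v l w := by
  cases h with | cons he h => exact ⟨_, he, h⟩

theorem W.single {u v : V} {e : E} (he : inc e = s(u, v)) : W inc u [e] v :=
  W.cons he (W.nil v)

theorem W.append {u v w : V} {a b} (h1 : W inc u a v) (h2 : W inc v b w) :
    W inc u (a ++ b) w := by
  induction h1 with
  | nil => exact h2
  | cons he _ ih => exact W.cons he (ih h2)

theorem W.append_inv {a : List E} : ∀ {u w : V} {b}, W inc u (a ++ b) w →
    ∃ v, W inc u a v ∧ W inc v b w := by
  induction a with
  | nil => intro u w b h; exact ⟨u, W.nil u, h⟩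
  | cons e a ih =>
    intro u w b h
    obtain ⟨x, he, h'⟩ := W.cons_inv h
    obtain ⟨v, h1, h2⟩ := ih h'
    exact ⟨v, W.cons he h1, h2⟩

theorem W.reverse {u v : V} {l} (h : W inc u l v) : W inc v l.reverse u := by
  induction h with
  | nil => exact W.nil _
  | cons he _ ih =>
    rw [List.reverse_cons]
    exact ih.append (W.single (by rw [he, Sym2.eq_swap]))

theorem other_eq {e : E} {u v v' : V} (h : inc e = s(u, v)) (h' : inc e = s(u, v')) :
    v = v' := by
  rw [h] at h'
  exact Sym2.congr_right.mp h'

theorem W.det {u v v' : V} {l} (h : W inc u l v) : W inc u l v' → v = v' := by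
  induction h with
  | nil => intro h'; exact h'.eq_of_nil
  | cons he _ ih =>
    intro h'
    obtain ⟨x, he', h''⟩ := h'.cons_inv
    cases other_eq he he'
    exact ih h''

theorem W.congr {inc' : E → Sym2 V} {u v : V} {l} (h : W inc u l v)
    (hc : ∀ e ∈ l, inc' e = inc e) : W inc' u l v := by
  induction h with
  | nil => exact W.nil _
  | cons he _ ih =>
    exact W.cons (by rw [hc _ (by simp), he]) (ih (fun e he => hc e (by simp [he])))

theorem W.map {V' : Type*} (π : V → V') {u v : V} {l} (h : W inc u l v) :
    W (fun e => Sym2.map π (inc e)) (π u) l (π v) := by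
  induction h with
  | nil => exact W.nil _
  | cons he _ ih => exact W.cons (by simp [he]) ih

theorem Pth.toW {u v : V} {l} (h : Pth inc u l v) : W inc u l v := by
  induction h with
  | nil => exact W.nil _
  | cons he _ _ _ ih => exact W.cons he ih

theorem Pth.nodup {u v : V} {l} (h : Pth inc u l v) : l.Nodup := by
  induction h with
  | nil => simp
  | cons he _ _ hav ih =>
    refine List.nodup_cons.2 ⟨fun hm => hav _ hm ?_, ih⟩
    rw [he]; simp

theorem Pth.self {u : V} {l} (h : Pth inc u l u) : l = [] := by
  cases h with
  | nil => rfl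
  | cons _ _ hne _ => exact absurd rfl hne

theorem Pth.suffix {u v w : V} {a b} (h : Pth inc u (a ++ b) w) (hv : W inc u a v) :
    Pth inc v b w := by
  induction a generalizing u with
  | nil => cases hv; exact h
  | cons e a ih =>
    rw [List.cons_append] at h
    cases h with
    | cons he h _ _ =>
      obtain ⟨x, he', h''⟩ := hv.cons_inv
      cases other_eq he he'
      exact ih h h''

/-- a vertex incident with an edge of a walk splits it -/
theorem W.split_at {u w x : V} {l} (h : W inc u l w) {g : E} (hg : g ∈ l) (hx : x ∈ inc g) :
    ∃ a b, l = a ++ b ∧ W inc u a x ∧ W inc x b w := by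
  obtain ⟨a, b, rfl⟩ := List.append_of_mem hg
  obtain ⟨y, h1, h2⟩ := h.append_inv
  obtain ⟨z, he, h3⟩ := h2.cons_inv
  rw [he] at hx
  rcases Sym2.mem_iff.1 hx with rfl | rfl
  · exact ⟨a, g :: b, rfl, h1, h2⟩
  · exact ⟨a ++ [g], b, by simp, h1.append (W.single he), h3⟩

theorem W.toPth {u w : V} {l} (h : W inc u l w) : ∃ l', l'.Sublist l ∧ Pth inc u l' w := by
  induction h with
  | nil => exact ⟨[], by simp, Pth.nil _⟩
  | @cons u v w e l he h ih =>
    obtain ⟨l', hl', hp⟩ := ih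
    by_cases huw : u = w
    · subst huw; exact ⟨[], by simp, Pth.nil _⟩
    by_cases hav : ∀ g ∈ l', u ∉ inc g
    · exact ⟨e :: l', hl'.cons_cons e, Pth.cons he hp huw hav⟩
    · push Not at hav
      obtain ⟨g, hg, hu⟩ := hav
      obtain ⟨a, b, rfl, h1, h2⟩ := hp.toW.split_at hg hu
      exact ⟨b, ((List.sublist_append_right a b).trans hl').cons e, hp.suffix h1⟩

/-- connected by edges of `A` -/
def Cn (inc : E → Sym2 V) (A : Set E) (u v : V) : Prop := ∃ l, (∀ e ∈ l, e ∈ A) ∧ W inc u l v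

theorem Cn.refl (A : Set E) (u : V) : Cn inc A u u := ⟨[], by simp, W.nil u⟩

theorem Cn.symm {A : Set E} {u v : V} (h : Cn inc A u v) : Cn inc A v u := by
  obtain ⟨l, hl, h⟩ := h
  exact ⟨l.reverse, by simpa using hl, h.reverse⟩

theorem Cn.trans {A : Set E} {u v w : V} (h : Cn inc A u v) (h' : Cn inc A v w) :
    Cn inc A u w := by
  obtain ⟨l, hl, h⟩ := h
  obtain ⟨l', hl', h'⟩ := h'
  exact ⟨l ++ l', by simp only [List.mem_append]; rintro e (he | he); exacts [hl e he, hl' e he],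
    h.append h'⟩

theorem Cn.mono {A B : Set E} {u v : V} (h : Cn inc A u v) (hAB : ∀ e ∈ A, e ∈ B) :
    Cn inc B u v := by
  obtain ⟨l, hl, h⟩ := h
  exact ⟨l, fun e he => hAB e (hl e he), h⟩

theorem Cn.edge {A : Set E} {u v : V} {e : E} (he : e ∈ A) (h : inc e = s(u, v)) :
    Cn inc A u v := ⟨[e], by simpa using he, W.single h⟩

theorem Cn.of_mem {A : Set E} {u v : V} {e : E} (he : e ∈ A) (hu : u ∈ inc e) (hv : v ∈ inc e) :
    Cn inc A u v := by
  obtain ⟨x, y, h⟩ := ends inc e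
  rw [h] at hu hv
  rcases Sym2.mem_iff.1 hu with rfl | rfl <;> rcases Sym2.mem_iff.1 hv with rfl | rfl
  · exact Cn.refl _ _
  · exact Cn.edge he h
  · exact (Cn.edge he h).symm
  · exact Cn.refl _ _

theorem Cn.pth {A : Set E} {u v : V} (h : Cn inc A u v) :
    ∃ l, (∀ e ∈ l, e ∈ A) ∧ Pth inc u l v := by
  obtain ⟨l, hl, h⟩ := h
  obtain ⟨l', hl', h'⟩ := h.toPth
  exact ⟨l', fun e he => hl e (hl'.subset he), h'⟩

/-- edge `e` crosses `Y` -/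
def Crs (inc : E → Sym2 V) (Y : Set V) (e : E) : Prop := ∃ x y, inc e = s(x, y) ∧ x ∈ Y ∧ y ∉ Y

/-- exit edges -/
def ExC (inc : E → Sym2 V) (A : Set E) (Y : Set V) : Set E := {e | e ∈ A ∧ Crs inc Y e}

def Ins (inc : E → Sym2 V) (X : Set V) (e : E) : Prop := ∀ v ∈ inc e, v ∈ X

theorem crs_iff {e : E} {x y : V} {Y : Set V} (h : inc e = s(x, y)) :
    Crs inc Y e ↔ (x ∈ Y ∧ y ∉ Y) ∨ (y ∈ Y ∧ x ∉ Y) := by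
  constructor
  · rintro ⟨a, b, h', ha, hb⟩
    rw [h] at h'
    rcases Sym2.eq_iff.1 h' with ⟨rfl, rfl⟩ | ⟨rfl, rfl⟩
    · exact Or.inl ⟨ha, hb⟩
    · exact Or.inr ⟨ha, hb⟩
  · rintro (⟨h1, h2⟩ | ⟨h1, h2⟩)
    · exact ⟨x, y, h, h1, h2⟩
    · exact ⟨y, x, by rw [h, Sym2.eq_swap], h1, h2⟩

theorem ins_iff {e : E} {x y : V} {Y : Set V} (h : inc e = s(x, y)) :
    Ins inc Y e ↔ x ∈ Y ∧ y ∈ Y := by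
  simp [Ins, h]

theorem not_crs_of_ins {e : E} {Y : Set V} (h : Ins inc Y e) : ¬ Crs inc Y e := by
  rintro ⟨x, y, hxy, hx, hy⟩
  exact hy (h y (by simp [hxy]))

theorem Ins.mono {X Y : Set V} {e : E} (h : Ins inc X e) (hXY : X ⊆ Y) : Ins inc Y e :=
  fun v hv => hXY (h v hv)

open Classical in
/-- inner end of a crossing edge -/
noncomputable def inn (inc : E → Sym2 V) (o : V) (X : Set V) (e : E) : V :=
  if h : Crs inc X e then h.choose else o

theorem inn_eq {o : V} {X : Set V} {e : E} {x y : V} (h : inc e = s(x, y)) (hx : x ∈ X)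
    (hy : y ∉ X) : inn inc o X e = x := by
  have hc : Crs inc X e := ⟨x, y, h, hx, hy⟩
  unfold inn
  rw [dif_pos hc]
  obtain ⟨b, h1, h2, h3⟩ := hc.choose_spec
  rcases Sym2.eq_iff.1 (h.symm.trans h1) with ⟨h4, _⟩ | ⟨_, h4⟩
  · exact h4.symm
  · exact absurd h2 (h4 ▸ hy)

theorem Crs.inn {o : V} {X : Set V} {e : E} (h : Crs inc X e) :
    ∃ y, inc e = s(inn inc o X e, y) ∧ inn inc o X e ∈ X ∧ y ∉ X := by
  obtain ⟨x, y, h, hx, hy⟩ := h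
  rw [inn_eq h hx hy]
  exact ⟨y, h, hx, hy⟩

theorem inn_mem {o : V} {X : Set V} {e : E} (ho : o ∈ X) : inn inc o X e ∈ X := by
  by_cases h : Crs inc X e
  · obtain ⟨_, _, h, _⟩ := h.inn (o := o); exact h
  · simpa [inn, h] using ho

/-- first exit -/
theorem W.first_exit {Y : Set V} {u w : V} {l} (h : W inc u l w) (hu : u ∈ Y) (hw : w ∉ Y) :
    ∃ a e b x y, l = a ++ e :: b ∧ W inc u a x ∧ inc e = s(x, y) ∧ x ∈ Y ∧ y ∉ Y ∧
      W inc y b w ∧ ∀ g ∈ a, Ins inc Y g := by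
  induction h with
  | nil => exact absurd hu hw
  | @cons u v w e l he h ih =>
    by_cases hv : v ∈ Y
    · obtain ⟨a, f, b, x, y, rfl, h1, h2, h3, h4, h5, h6⟩ := ih hv hw
      refine ⟨e :: a, f, b, x, y, rfl, W.cons he h1, h2, h3, h4, h5, ?_⟩
      intro g hg
      rcases List.mem_cons.1 hg with rfl | hg
      · exact (ins_iff he).2 ⟨hu, hv⟩
      · exact h6 g hg
    · exact ⟨[], e, l, u, v, rfl, W.nil u, he, hu, hv, h, by simp⟩

/-- last exit -/
theorem W.last_exit {Y : Set V} {u w : V} {l} (h : W inc u l w) (hu : u ∈ Y) (hw : w ∉ Y) :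
    ∃ a e b x y, l = a ++ e :: b ∧ W inc u a x ∧ inc e = s(x, y) ∧ x ∈ Y ∧ y ∉ Y ∧
      W inc y b w ∧ ∀ g ∈ b, Ins inc Yᶜ g := by
  obtain ⟨a, e, b, x, y, h0, h1, h2, h3, h4, h5, h6⟩ := h.reverse.first_exit (Y := Yᶜ) hw (by simpa)
  refine ⟨b.reverse, e, a.reverse, y, x, ?_, h5.reverse, by rw [h2, Sym2.eq_swap], by simpa using h4,
    h3, h1.reverse, by simpa using h6⟩
  have := congrArg List.reverse h0
  simpa using this

theorem W.ins {Y : Set V} {u w : V} {l} (h : W inc u l w) (hu : u ∈ Y)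
    (hl : ∀ g ∈ l, ¬ Crs inc Y g) : w ∈ Y ∧ ∀ g ∈ l, Ins inc Y g := by
  induction h with
  | nil => exact ⟨hu, by simp⟩
  | @cons u v w e l he h ih =>
    have hv : v ∈ Y := by
      by_contra hv
      exact hl e (by simp) ⟨u, v, he, hu, hv⟩
    obtain ⟨h1, h2⟩ := ih hv (fun g hg => hl g (by simp [hg]))
    refine ⟨h1, ?_⟩
    intro g hg
    rcases List.mem_cons.1 hg with rfl | hg
    · exact (ins_iff he).2 ⟨hu, hv⟩
    · exact h2 g hg

/-- walk all of whose edges avoid vertices outside -/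
theorem W.mem_of_ins {Y : Set V} {u w : V} {l} (h : W inc u l w) (hu : u ∈ Y)
    (hl : ∀ g ∈ l, Ins inc Y g) : w ∈ Y :=
  (h.ins hu (fun g hg => not_crs_of_ins (hl g hg))).1

/-- edge-disjoint system of walks from `o` -/
structure Sys (inc : E → Sym2 V) (A : Set E) (o : V) (C : Set E) (y : E → V) (p : E → List E) :
    Prop where
  walk : ∀ c ∈ C, W inc o (p c) (y c)
  mem : ∀ c ∈ C, ∀ e ∈ p c, e ∈ A
  disj : ∀ c ∈ C, ∀ d ∈ C, c ≠ d → ∀ e ∈ p c, e ∉ p d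
  nodup : ∀ c ∈ C, (p c).Nodup

theorem Sys.mono {A B C D : Set E} {o : V} {y : E → V} {p : E → List E}
    (h : Sys inc A o C y p) (hA : ∀ c ∈ D, ∀ e ∈ p c, e ∈ B) (hC : ∀ e ∈ D, e ∈ C) :
    Sys inc B o D y p :=
  ⟨fun c hc => h.walk c (hC c hc), hA,
   fun c hc d hd => h.disj c (hC c hc) d (hC d hd), fun c hc => h.nodup c (hC c hc)⟩

theorem Sys.congr {A C : Set E} {o : V} {y y' : E → V} {p p' : E → List E}
    (h : Sys inc A o C y p) (hy : ∀ c ∈ C, y' c = y c) (hp : ∀ c ∈ C, p' c = p c) :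
    Sys inc A o C y' p' := by
  refine ⟨fun c hc => ?_, fun c hc => ?_, fun c hc d hd => ?_, fun c hc => ?_⟩
  · rw [hy c hc, hp c hc]; exact h.walk c hc
  · rw [hp c hc]; exact h.mem c hc
  · rw [hp c hc, hp d hd]; exact h.disj c hc d hd
  · rw [hp c hc]; exact h.nodup c hc

/-- pruning a family of disjoint walks -/
theorem prune {A C : Set E} {o : V} {y : E → V} {p : E → List E}
    (hw : ∀ c ∈ C, W inc o (p c) (y c)) (hm : ∀ c ∈ C, ∀ e ∈ p c, e ∈ A)
    (hd : ∀ c ∈ C, ∀ d ∈ C, c ≠ d → ∀ e ∈ p c, e ∉ p d) :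
    ∃ p', Sys inc A o C y p' ∧ (∀ c ∈ C, Pth inc o (p' c) (y c)) ∧
      (∀ c ∈ C, ∀ e ∈ p' c, e ∈ p c) := by
  classical
  choose! q hq1 hq2 using fun c (hc : c ∈ C) => (hw c hc).toPth
  exact ⟨q, ⟨fun c hc => (hq2 c hc).toW, fun c hc e he => hm c hc e ((hq1 c hc).subset he),
    fun c hc d hd' hcd e he he' => hd c hc d hd' hcd e ((hq1 c hc).subset he)
      ((hq1 d hd').subset he'), fun c hc => (hq2 c hc).nodup⟩, hq2,
    fun c hc e he => (hq1 c hc).subset he⟩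

/-- pruning only those walks that are not nodup -/
theorem prune_nodup {A C : Set E} {o : V} {y : E → V} {p : E → List E}
    (hw : ∀ c ∈ C, W inc o (p c) (y c)) (hm : ∀ c ∈ C, ∀ e ∈ p c, e ∈ A)
    (hd : ∀ c ∈ C, ∀ d ∈ C, c ≠ d → ∀ e ∈ p c, e ∉ p d) :
    ∃ p', Sys inc A o C y p' ∧ (∀ c ∈ C, (p c).Nodup → p' c = p c) ∧
      (∀ c ∈ C, ∀ e ∈ p' c, e ∈ p c) := by
  classical
  have : ∀ c, ∃ q, c ∈ C → W inc o q (y c) ∧ q.Nodup ∧ (∀ e ∈ q, e ∈ p c) ∧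
      ((p c).Nodup → q = p c) := by
    intro c
    by_cases hc : c ∈ C
    · by_cases hn : (p c).Nodup
      · exact ⟨p c, fun _ => ⟨hw c hc, hn, fun e he => he, fun _ => rfl⟩⟩
      · obtain ⟨q, hq1, hq2⟩ := (hw c hc).toPth
        exact ⟨q, fun _ => ⟨hq2.toW, hq2.nodup, fun e he => hq1.subset he, fun h => absurd h hn⟩⟩
    · exact ⟨[], fun h => absurd h hc⟩
  choose q hq using this
  refine ⟨q, ⟨fun c hc => (hq c hc).1, fun c hc e he => hm c hc e ((hq c hc).2.2.1 e he),
    fun c hc d hd' hcd e he he' => hd c hc d hd' hcd e ((hq c hc).2.2.1 e he)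
      ((hq d hd').2.2.1 e he'), fun c hc => (hq c hc).2.1⟩,
    fun c hc => (hq c hc).2.2.2, fun c hc => (hq c hc).2.2.1⟩

/-- edges of `A` not used by the system -/
def Free (A C : Set E) (p : E → List E) : Set E := {e | e ∈ A ∧ ∀ c ∈ C, e ∉ p c}

/-- residual step -/
def RStep (inc : E → Sym2 V) (A : Set E) (o : V) (C : Set E) (p : E → List E) (u u' : V) : Prop :=
  (∃ e ∈ Free A C p, inc e = s(u, u')) ∨
    ∃ c ∈ C, ∃ l1 l2 l3, p c = l1 ++ l2 ++ l3 ∧ W inc o l1 u ∧ W inc u l2 u'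

theorem augment_aux {A C : Set E} {o v : V} {y : E → V} (n : ℕ) :
    ∀ (p : E → List E), Sys inc A o C y p → ∀ u : ℕ → V, u 0 = v →
      (∀ i < n, RStep inc A o C p (u i) (u (i + 1))) → Cn inc (Free A C p) o (u n) →
      ∃ p', Sys inc A o C y p' ∧ Cn inc (Free A C p') o v := by
  classical
  induction n using Nat.strong_induction_on with
  | _ n ih =>
  intro p hp u hu0 hst hend
  have hex : ∃ k, Cn inc (Free A C p) o (u k) := ⟨n, hend⟩
  obtain ⟨k, hk, hkmin⟩ : ∃ k, Cn inc (Free A C p) o (u k) ∧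
      ∀ j < k, ¬ Cn inc (Free A C p) o (u j) :=
    ⟨Nat.find hex, Nat.find_spec hex, fun j hj => Nat.find_min hex hj⟩
  have hkn : k ≤ n := by
    by_contra h
    exact hkmin n (by omega) hend
  rcases k with _ | m
  · exact ⟨p, hp, hu0 ▸ hk⟩
  rcases hst m (by omega) with ⟨e, he, hee⟩ | ⟨c, hc, l1, l2, l3, hpc, hw1, hw2⟩
  · exact absurd (hk.trans (Cn.edge he hee).symm) (hkmin m (by omega))
  obtain ⟨f, hf, hfp⟩ := hk.pth
  have hw12 : W inc o (l1 ++ l2) (u (m + 1)) := hw1.append hw2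
  have hw3 : W inc (u (m + 1)) l3 (y c) := by
    have h := hp.walk c hc
    rw [hpc] at h
    obtain ⟨x, h1, h2⟩ := h.append_inv
    cases h1.det hw12
    exact h2
  have hnd := hp.nodup c hc
  rw [hpc] at hnd
  set p' : E → List E := Function.update p c (f ++ l3) with hp'
  have hp'c : p' c = f ++ l3 := by simp [hp']
  have hp'd : ∀ d, d ≠ c → p' d = p d := fun d hd => by simp [hp', hd]
  have hfl3 : ∀ e ∈ l3, e ∈ p c := fun e he => by rw [hpc]; simp [he]
  have hsys' : Sys inc A o C y p' := by
    refine ⟨fun d hd => ?_, fun d hd => ?_, fun d hd d' hd' hdd => ?_, fun d hd => ?_⟩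
    · by_cases h : d = c
      · subst h; rw [hp'c]; exact hfp.toW.append hw3
      · rw [hp'd d h]; exact hp.walk d hd
    · by_cases h : d = c
      · subst h; rw [hp'c]
        intro e he
        rcases List.mem_append.1 he with he | he
        · exact (hf e he).1
        · exact hp.mem d hd e (hfl3 e he)
      · rw [hp'd d h]; exact hp.mem d hd
    · by_cases h : d = c
      · subst h
        rw [hp'c, hp'd d' (Ne.symm hdd)]
        intro e he
        rcases List.mem_append.1 he with he | he
        · exact (hf e he).2 d' hd'
        · exact hp.disj d hd d' hd' hdd e (hfl3 e he)
      · by_cases h' : d' = c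
        · subst h'
          rw [hp'c, hp'd d h]
          intro e he he'
          rcases List.mem_append.1 he' with h2 | h2
          · exact (hf e h2).2 d hd he
          · exact hp.disj d hd d' hd' hdd e he (hfl3 e h2)
        · rw [hp'd d h, hp'd d' h']; exact hp.disj d hd d' hd' hdd
    · by_cases h : d = c
      · subst h; rw [hp'c]
        refine List.nodup_append.2 ⟨hfp.nodup, (List.nodup_append.1 hnd).2.1, ?_⟩
        intro a ha b hb hab
        subst hab
        exact (hf a ha).2 d hd (hfl3 a hb)
      · rw [hp'd d h]; exact hp.nodup d hd
  have hexj : ∃ j, ∃ a b, l1 ++ l2 = a ++ b ∧ W inc o a (u j) := ⟨m, l1, l2, rfl, hw1⟩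
  obtain ⟨j, ⟨a, b, hab, hwa⟩, hjmin⟩ : ∃ j, (∃ a b, l1 ++ l2 = a ++ b ∧ W inc o a (u j)) ∧
      ∀ i < j, ¬ ∃ a b, l1 ++ l2 = a ++ b ∧ W inc o a (u i) :=
    ⟨Nat.find hexj, Nat.find_spec hexj, fun j hj => Nat.find_min hexj hj⟩
  have hjm : j ≤ m := by
    by_contra h
    exact hjmin m (by omega) ⟨l1, l2, rfl, hw1⟩
  refine ih j (by omega) p' hsys' u hu0 ?_ ?_
  · intro i hi
    rcases hst i (by omega) with ⟨e, he, hee⟩ | ⟨d, hd, a1, a2, a3, hpd, hwa1, hwa2⟩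
    · left
      refine ⟨e, ⟨he.1, fun d hd hed => ?_⟩, hee⟩
      by_cases h : d = c
      · subst h
        rw [hp'c] at hed
        rcases List.mem_append.1 hed with h2 | h2
        · apply hkmin i (by omega)
          obtain ⟨f1, f2, rfl, hf1, -⟩ := hfp.toW.split_at (x := u i) h2 (by rw [hee]; simp)
          exact ⟨f1, fun e he => hf e (by simp [he]), hf1⟩
        · exact he.2 d hd (hfl3 e h2)
      · rw [hp'd d h] at hed
        exact he.2 d hd hed
    · right
      by_cases h : d = c
      · subst h
        rw [hpc, List.append_assoc a1] at hpd
        rcases List.append_eq_append_iff.1 hpd with ⟨r, hr1, hr2⟩ | ⟨r, hr1, hr2⟩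
        · refine ⟨d, hd, f ++ r, a2, a3, ?_, ?_, hwa2⟩
          · rw [hp'c, hr2]; simp
          · rw [hr1] at hwa1
            obtain ⟨x, h1, h2⟩ := hwa1.append_inv
            cases h1.det hw12
            exact hfp.toW.append h2
        · exact absurd ⟨a1, r, hr1, hwa1⟩ (hjmin i hi)
      · exact ⟨d, hd, a1, a2, a3, by rw [hp'd d h, hpd], hwa1, hwa2⟩
  · refine ⟨a, fun e he => ?_, hwa⟩
    have hek : e ∈ l1 ++ l2 := by rw [hab]; simp [he]
    have hec : e ∈ p c := by rw [hpc]; exact List.mem_append_left _ hek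
    refine ⟨hp.mem c hc e hec, fun d hd hed => ?_⟩
    by_cases h : d = c
    · subst h
      rw [hp'c] at hed
      rcases List.mem_append.1 hed with h2 | h2
      · exact (hf e h2).2 d hd hec
      · exact (List.nodup_append.1 hnd).2.2 e hek e h2 rfl
    · rw [hp'd d h] at hed
      exact hp.disj c hc d hd (Ne.symm h) e hec hed

/-- blocking certificate -/
structure Cert (inc : E → Sym2 V) (A : Set E) (o : V) (C : Set E) (p : E → List E) (Y : Set V) :
    Prop where
  notmem : o ∉ Y
  used : ∀ e ∈ A, Crs inc Y e → ∃ c ∈ C, e ∈ p c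
  later : ∀ c ∈ C, ∀ l1 l2 l3 x x', p c = l1 ++ l2 ++ l3 → W inc o l1 x → x ∈ Y →
    W inc x l2 x' → x' ∈ Y

theorem augment {A C : Set E} {o : V} {y : E → V} {p : E → List E} (hp : Sys inc A o C y p)
    (v : V) :
    (∃ p', Sys inc A o C y p' ∧ Cn inc (Free A C p') o v) ∨
      ∃ Y, v ∈ Y ∧ Cert inc A o C p Y := by
  classical
  set Y : Set V := {w | Relation.ReflTransGen (RStep inc A o C p) v w} with hY
  by_cases ho : o ∈ Y
  · left
    have key : ∀ w, Relation.ReflTransGen (RStep inc A o C p) v w →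
        ∃ (n : ℕ) (u : ℕ → V), u 0 = v ∧ u n = w ∧
          ∀ i < n, RStep inc A o C p (u i) (u (i + 1)) := by
      intro w hw
      induction hw with
      | refl => exact ⟨0, fun _ => v, rfl, rfl, by simp⟩
      | @tail b c _ hbc ih =>
        obtain ⟨n, u, h0, hn, hs⟩ := ih
        refine ⟨n + 1, fun i => if i ≤ n then u i else c, by simp [h0], by simp, ?_⟩
        intro i hi
        by_cases h : i = n
        · subst h; simpa [hn] using hbc
        · have h1 : i ≤ n := by omega
          have h2 : i + 1 ≤ n := by omega
          simpa [h1, h2] using hs i (by omega)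
    obtain ⟨n, u, h0, hn, hs⟩ := key o ho
    exact augment_aux n p hp u h0 hs (hn ▸ Cn.refl _ _)
  · right
    refine ⟨Y, Relation.ReflTransGen.refl, ho, ?_, ?_⟩
    · rintro e he ⟨x, z, hxz, hx, hz⟩
      by_contra hcon
      push Not at hcon
      exact hz (Relation.ReflTransGen.tail hx (Or.inl ⟨e, ⟨he, hcon⟩, hxz⟩))
    · intro c hc l1 l2 l3 x x' h1 h2 h3 h4
      exact Relation.ReflTransGen.tail h3 (Or.inr ⟨c, hc, l1, l2, l3, h1, h2, h4⟩)

/-- crossing edges of a certificate -/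
theorem Cert.edge {A C : Set E} {o : V} {y : E → V} {p : E → List E} {Y : Set V}
    (hp : Sys inc A o C y p) (hY : Cert inc A o C p Y) {g : E} (hg : g ∈ A) (hc : Crs inc Y g) :
    ∃ c ∈ C, ∃ a b u u', p c = a ++ g :: b ∧ W inc o a u ∧ inc g = s(u, u') ∧ u ∉ Y ∧ u' ∈ Y ∧
      ∀ h ∈ a, Ins inc Yᶜ h := by
  obtain ⟨c, hcC, hgc⟩ := hY.used g hg hc
  obtain ⟨a, b, hab⟩ := List.append_of_mem hgc
  have hw := hp.walk c hcC
  rw [hab] at hw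
  obtain ⟨u, h1, h2⟩ := hw.append_inv
  obtain ⟨u', h3, h4⟩ := h2.cons_inv
  have huY : u ∉ Y := by
    intro hu
    have := hY.later c hcC a [g] b u u' (by rw [hab]; simp) h1 hu (W.single h3)
    rcases (crs_iff h3).1 hc with h | h
    · exact h.2 this
    · exact h.2 hu
  refine ⟨c, hcC, a, b, u, u', hab, h1, h3, huY, ?_, ?_⟩
  · rcases (crs_iff h3).1 hc with h | h
    · exact absurd h.1 huY
    · exact h.1
  · intro h hh x hx hxY
    obtain ⟨a1, a2, rfl, h5, h6⟩ := h1.split_at hh hx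
    exact huY (hY.later c hcC a1 a2 (g :: b) x u hab h5 hxY h6)

theorem Cert.avoid {A C : Set E} {o : V} {y : E → V} {p : E → List E} {Y : Set V}
    (hp : Sys inc A o C y p) (hY : Cert inc A o C p Y) {c : E} (hc : c ∈ C) (hy : y c ∉ Y) :
    ∀ h ∈ p c, Ins inc Yᶜ h := by
  intro h hh x hx hxY
  obtain ⟨a1, a2, h0, h5, h6⟩ := (hp.walk c hc).split_at hh hx
  exact hy (hY.later c hc a1 a2 [] x (y c) (by rw [h0]; simp) h5 hxY h6)

end LK

namespace LK
variable {V : Type u} {E : Type v} {inc : E → Sym2 V}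

def Cover (inc : E → Sym2 V) (A : Set E) (o : V) (X : Set V) (D : Set E) (p : E → List E) : Prop :=
  Sys inc {e | e ∈ A ∧ Ins inc X e} o D (inn inc o X) p

structure Wave (inc : E → Sym2 V) (A : Set E) (o t : V) (X : Set V) (p : E → List E) : Prop where
  ho : o ∈ X
  ht : t ∉ X
  cov : Cover inc A o X (ExC inc A X) p

def Loose (inc : E → Sym2 V) (A : Set E) (o t : V) : Prop :=
  ∀ X p, Wave inc A o t X p → ∀ e ∈ A, ∀ x ∈ X, x ≠ o → inc e ≠ s(o, x)

def Euler (inc : E → Sym2 V) (A : Set E) (o t : V) : Prop :=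
  ∀ Y : Set V, o ∉ Y → t ∉ Y → (ExC inc A Y).Finite → Even (ExC inc A Y).ncard

open Classical in
theorem W.sum {Y : Set V} {u v : V} {l} (h : W inc u l v) :
    (l.map (fun e => if Crs inc Y e then (1 : ZMod 2) else 0)).sum =
      (if u ∈ Y then 1 else 0) + (if v ∈ Y then 1 else 0) := by
  induction h with
  | nil v =>
    by_cases h : v ∈ Y
    · simp [h]; decide
    · simp [h]
  | @cons u v w e l he h ih =>
    simp only [List.map_cons, List.sum_cons, ih, crs_iff he]
    by_cases h1 : u ∈ Y <;> by_cases h2 : v ∈ Y <;> by_cases h3 : w ∈ Y <;> simp [h1, h2, h3] <;>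
      decide

open Classical in
theorem count_sum {P : E → Prop} {L : List E} (hL : L.Nodup) :
    (({e | e ∈ L ∧ P e} : Set E).ncard : ZMod 2) =
      (L.map (fun e => if P e then (1 : ZMod 2) else 0)).sum := by
  have h1 : ({e | e ∈ L ∧ P e} : Set E) = ↑((L.filter (fun e => P e)).toFinset) := by
    ext e; simp
  rw [h1, Set.ncard_coe_finset, List.toFinset_card_of_nodup (hL.filter _)]
  induction L with
  | nil => simp
  | cons a L ih =>
    have ih' := ih (List.nodup_cons.1 hL).2 (by ext e; simp)
    by_cases h : P a
    · simp [h, add_comm, ← ih']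
    · simp [h, ← ih']

theorem shift_step {A Fz : Set E} {o t : V} {X : Set V} {b0 : E} {p : E → List E}
    (hE : Euler inc A o t) (ho : o ∈ X) (ht : t ∉ X) (hb0 : b0 ∈ ExC inc A X)
    {C : Set E} (hC : C = (ExC inc A X \ Fz) \ {b0})
    (hp : Cover inc (A \ Fz) o X C p)
    {H : Set E} (hH : H = Free {e | e ∈ A \ Fz ∧ Ins inc X e} C p)
    (hno : ¬ Cn inc H (inn inc o X b0) o)
    (hstar : ∀ v', Cn inc H (inn inc o X b0) v' → (∃ f ∈ Fz, f ∈ A ∧ v' ∈ inc f) →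
      ∀ N : Set E, N.Finite → Cn inc ((A \ Fz) \ N) v' o)
    (S : Finset E) (T : List E) (w : V) (hS : ∀ c ∈ S, c ∈ C) (hT : T.Nodup)
    (hTH : ∀ e ∈ T, e ∈ H) (hw : W inc w T (inn inc o X b0)) :
    ∃ c ∈ C, c ∉ S ∧ ∃ l1 l2 w' τ, p c = l1 ++ l2 ∧ W inc o l1 w' ∧ (∀ e ∈ τ, e ∈ H) ∧
      τ.Nodup ∧ (∀ e ∈ τ, e ∉ T) ∧ W inc w' τ w := by
  classical
  set v := inn inc o X b0 with hv
  set H' : Set E := {e | e ∈ H ∧ e ∉ T} with hH'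
  set Y : Set V := {x | Cn inc H' w x} with hY
  have hHX : ∀ e ∈ H, Ins inc X e := by
    intro e he; rw [hH] at he; exact he.1.2
  have hHA : ∀ e ∈ H, e ∈ A ∧ e ∉ Fz := by
    intro e he; rw [hH] at he; exact he.1.1
  have hvX : v ∈ X := inn_mem ho
  have hvw : Cn inc H v w := Cn.symm ⟨T, hTH, hw⟩
  have hYv : ∀ x ∈ Y, Cn inc H v x := fun x hx => hvw.trans (hx.mono (fun e he => he.1))
  have hYX : ∀ x ∈ Y, x ∈ X := by
    intro x hx
    obtain ⟨l, hl, hlw⟩ := hYv x hx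
    exact hlw.mem_of_ins hvX (fun g hg => hHX g (hl g hg))
  have hoY : o ∉ Y := fun h => hno (hYv o h)
  have htY : t ∉ Y := fun h => ht (hYX t h)
  by_contra hcon
  have hfresh : ∀ c ∈ C, c ∉ S → ∀ l1 l2 w', p c = l1 ++ l2 → W inc o l1 w' → w' ∉ Y := by
    intro c hc hcS l1 l2 w' h1 h2 h3
    obtain ⟨τ, hτ, hτp⟩ := (Cn.symm h3).pth
    exact hcon ⟨c, hc, hcS, l1, l2, w', τ, h1, h2, fun e he => (hτ e he).1, hτp.nodup,
      fun e he => (hτ e he).2, hτp.toW⟩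
  set L : List E := S.toList.flatMap (fun c => p c ++ [c]) ++ (T ++ [b0]) with hL
  have hLmem : ∀ e, e ∈ L ↔ (∃ c ∈ S, e ∈ p c ∨ e = c) ∨ e ∈ T ∨ e = b0 := by
    intro e; simp [hL]
  have hCX : ∀ c ∈ C, c ∈ A ∧ c ∉ Fz ∧ Crs inc X c ∧ c ≠ b0 := by
    intro c hc; rw [hC] at hc
    exact ⟨hc.1.1.1, hc.1.2, hc.1.1.2, hc.2⟩
  have hK : ∀ e ∈ A, e ∉ Fz → Crs inc Y e → e ∈ L := by
    rintro e he hef ⟨x, y, hxy, hx, hy⟩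
    by_contra heL
    rw [hLmem] at heL
    push Not at heL
    obtain ⟨h1, h2, h3⟩ := heL
    by_cases hyX : y ∈ X
    · by_cases heH : e ∈ H
      · exact hy (Cn.trans hx (Cn.edge ⟨heH, h2⟩ hxy))
      · have : ∃ c ∈ C, e ∈ p c := by
          by_contra h
          push Not at h
          apply heH
          rw [hH]
          exact ⟨⟨⟨he, hef⟩, (ins_iff hxy).2 ⟨hYX x hx, hyX⟩⟩, h⟩
        obtain ⟨c, hc, hec⟩ := this
        have hcS : c ∉ S := fun h => (h1 c h).1 hec
        obtain ⟨a, b, hab, h4, -⟩ := (hp.walk c hc).split_at (x := x) hec (by rw [hxy]; simp)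
        exact hfresh c hc hcS a b x hab h4 hx
    · have heC : e ∈ C := by
        rw [hC]
        exact ⟨⟨⟨he, x, y, hxy, hYX x hx, hyX⟩, hef⟩, h3⟩
      have heS : e ∉ S := fun h => (h1 e h).2 rfl
      have := hfresh e heC heS (p e) [] _ (by simp) (hp.walk e heC)
      rw [inn_eq hxy (hYX x hx) hyX] at this
      exact this hx
  have hFzY : ∀ f ∈ Fz, f ∈ A → ∀ x ∈ inc f, x ∉ Y := by
    intro f hf hfA x hx hxY
    obtain ⟨l, hl, hlw⟩ := hstar x (hYv x hxY) ⟨f, hf, hfA, hx⟩ {e | e ∈ L} (List.finite_toSet L)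
    obtain ⟨a, e, b, x1, y1, rfl, _, hxy, hx1, hy1, -, -⟩ := hlw.first_exit hxY hoY
    have hee := hl e (by simp)
    exact hee.2 (hK e hee.1.1 hee.1.2 ⟨x1, y1, hxy, hx1, hy1⟩)
  have hpA : ∀ c ∈ C, ∀ e ∈ p c, e ∈ A ∧ Ins inc X e := fun c hc e he =>
    ⟨(hp.mem c hc e he).1.1, (hp.mem c hc e he).2⟩
  have hLA : ∀ e ∈ L, e ∈ A := by
    intro e he
    rw [hLmem] at he
    rcases he with ⟨c, hc, he | rfl⟩ | he | rfl
    · exact (hpA c (hS c hc) e he).1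
    · exact (hCX e (hS e hc)).1
    · exact (hHA e (hTH e he)).1
    · exact hb0.1
  have hEx : ExC inc A Y = {e | e ∈ L ∧ Crs inc Y e} := by
    ext e
    constructor
    · rintro ⟨he, hc⟩
      refine ⟨hK e he (fun hf => ?_) hc, hc⟩
      obtain ⟨x, y, hxy, hx, hy⟩ := hc
      exact hFzY e hf he x (by rw [hxy]; simp) hx
    · rintro ⟨he, hc⟩
      exact ⟨hLA e he, hc⟩
  have hnX : ∀ c ∈ C, ¬ Ins inc X c := fun c hc h => not_crs_of_ins h (hCX c hc).2.2.1
  have hb0X : ¬ Ins inc X b0 := fun h => not_crs_of_ins h hb0.2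
  have hLn : L.Nodup := by
    rw [hL, List.nodup_append]
    refine ⟨?_, ?_, ?_⟩
    · rw [List.nodup_flatMap]
      refine ⟨?_, ?_⟩
      · intro c hc
        have hcC : c ∈ C := hS c (by simpa using hc)
        rw [List.nodup_append]
        refine ⟨hp.nodup c hcC, by simp, ?_⟩
        intro a ha b hb hab
        simp at hb
        subst hb; subst hab
        exact hnX a hcC (hpA a hcC a ha).2
      · refine List.Nodup.pairwise_of_forall_ne S.nodup_toList ?_
        intro c hc d hd hcd
        have hcC : c ∈ C := hS c (by simpa using hc)
        have hdC : d ∈ C := hS d (by simpa using hd)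
        intro e he1 he2
        simp at he1 he2
        rcases he1 with he1 | rfl <;> rcases he2 with he2 | rfl
        · exact hp.disj c hcC d hdC hcd e he1 he2
        · exact hnX e hdC (hpA c hcC e he1).2
        · exact hnX e hcC (hpA d hdC e he2).2
        · exact hcd rfl
    · rw [List.nodup_append]
      refine ⟨hT, by simp, ?_⟩
      intro a ha b hb hab
      simp at hb
      subst hb; subst hab
      exact hb0X (hHX a (hTH a ha))
    · intro a ha b hb hab
      subst hab
      simp at ha hb
      obtain ⟨c, hc, ha⟩ := ha
      have hcC := hS c hc
      rcases hb with hb | rfl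
      · rcases ha with ha | rfl
        · have := hTH a hb
          rw [hH] at this
          exact this.2 c hcC ha
        · exact hnX a hcC (hHX a (hTH a hb))
      · rcases ha with ha | rfl
        · exact hb0X (hpA c hcC a ha).2
        · exact (hCX a hcC).2.2.2 rfl
  have hev := hE Y hoY htY (by rw [hEx]; exact (List.finite_toSet L).subset (fun e he => he.1))
  have hz : ((ExC inc A Y).ncard : ZMod 2) = 0 := by
    rw [ZMod.natCast_eq_zero_iff]; exact hev.two_dvd
  rw [hEx, count_sum hLn, hL, List.map_append, List.map_append, List.sum_append,
    List.sum_append, hw.sum] at hz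
  have hz1 : ∀ S' : List E, (∀ c ∈ S', c ∈ C) → ((S'.flatMap (fun c => p c ++ [c])).map
      (fun e => if Crs inc Y e then (1 : ZMod 2) else 0)).sum = 0 := by
    intro S' hS'
    induction S' with
    | nil => simp
    | cons c S' ih =>
      have hc : c ∈ C := hS' c (by simp)
      rw [List.flatMap_cons, List.map_append, List.sum_append,
        ih (fun d hd => hS' d (by simp [hd]))]
      obtain ⟨y, hy, -, hyX⟩ := (hCX c hc).2.2.1.inn (o := o)
      have hw' := (hp.walk c hc).append (W.single hy)
      rw [hw'.sum]
      have hyY : y ∉ Y := fun h => hyX (hYX y h)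
      simp [hoY, hyY]
  rw [hz1 _ (by simpa using hS)] at hz
  obtain ⟨y, hy, -, hyX⟩ := hb0.2.inn (o := o)
  have hyY : y ∉ Y := fun h => hyX (hYX y h)
  have hwY : w ∈ Y := Cn.refl _ _
  have hb := (W.single hy).sum (Y := Y)
  rw [hb, ← hv] at hz
  revert hz
  by_cases hvY : v ∈ Y <;> simp [hwY, hyY, hvY] <;> decide

theorem shift {A Fz : Set E} {o t : V} {X : Set V} {b0 : E} {p : E → List E}
    (hE : Euler inc A o t) (ho : o ∈ X) (ht : t ∉ X) (hb0 : b0 ∈ ExC inc A X)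
    {C : Set E} (hC : C = (ExC inc A X \ Fz) \ {b0})
    (hp : Cover inc (A \ Fz) o X C p)
    (hstar : ∀ v', Cn inc (Free {e | e ∈ A \ Fz ∧ Ins inc X e} C p) (inn inc o X b0) v' →
      (∃ f ∈ Fz, f ∈ A ∧ v' ∈ inc f) →
      ∀ N : Set E, N.Finite → Cn inc ((A \ Fz) \ N) v' o) :
    ∃ (q : E → List E) (B : Set E), Cover inc (A \ Fz) o X (insert b0 C) q ∧ B.Countable ∧
      ∀ c ∈ C, c ∉ B → q c = p c := by
  classical
  set H : Set E := Free {e | e ∈ A \ Fz ∧ Ins inc X e} C p with hH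
  have hb0C : b0 ∉ C := by rw [hC]; simp
  by_cases hno : Cn inc H (inn inc o X b0) o
  · obtain ⟨l, hl, hlp⟩ := (Cn.symm hno).pth
    refine ⟨Function.update p b0 l, ∅, ?_, Set.countable_empty, ?_⟩
    · have hu : ∀ c ∈ C, Function.update p b0 l c = p c := by
        intro c hc
        rw [Function.update_of_ne]
        rintro rfl; exact hb0C hc
      refine ⟨?_, ?_, ?_, ?_⟩
      · rintro c (rfl | hc)
        · simpa using hlp.toW
        · rw [hu c hc]; exact hp.walk c hc
      · rintro c (rfl | hc)
        · simp only [Function.update_self]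
          intro e he; exact (hl e he).1
        · rw [hu c hc]; exact hp.mem c hc
      · rintro c (rfl | hc) d (rfl | hd) hcd
        · exact absurd rfl hcd
        · rw [hu d hd]; simp only [Function.update_self]
          intro e he; exact (hl e he).2 d hd
        · rw [hu c hc]; simp only [Function.update_self]
          intro e he he'; exact (hl e he').2 c hc he
        · rw [hu c hc, hu d hd]; exact hp.disj c hc d hd hcd
      · rintro c (rfl | hc)
        · simpa using hlp.nodup
        · rw [hu c hc]; exact hp.nodup c hc
    · intro c hc _
      rw [Function.update_of_ne]
      rintro rfl; exact hb0C hc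
  · set v := inn inc o X b0 with hv
    let St := {st : Finset E × List E × V // (∀ c ∈ st.1, c ∈ C) ∧ st.2.1.Nodup ∧
      (∀ e ∈ st.2.1, e ∈ H) ∧ W inc st.2.2 st.2.1 v}
    have step : ∀ st : St, ∃ c ∈ C, c ∉ st.1.1 ∧ ∃ l1 l2 w' τ, p c = l1 ++ l2 ∧ W inc o l1 w' ∧
        (∀ e ∈ τ, e ∈ H) ∧ τ.Nodup ∧ (∀ e ∈ τ, e ∉ st.1.2.1) ∧ W inc w' τ st.1.2.2 := fun st =>
      shift_step hE ho ht hb0 hC hp hH hno hstar st.1.1 st.1.2.1 st.1.2.2 st.2.1 st.2.2.1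
        st.2.2.2.1 st.2.2.2.2
    choose fc hfc hfS fl1 fl2 fw fτ hpc hw1 hτH hτn hτT hτw using step
    let nxt : St → St := fun st => ⟨(insert (fc st) st.1.1, fτ st ++ st.1.2.1, fw st), by
      refine ⟨?_, ?_, ?_, ?_⟩
      · intro c hc
        rcases Finset.mem_insert.1 hc with rfl | hc
        · exact hfc st
        · exact st.2.1 c hc
      · refine List.nodup_append.2 ⟨hτn st, st.2.2.1, ?_⟩
        intro a ha b hb hab
        subst hab; exact hτT st a ha hb
      · intro e he
        rcases List.mem_append.1 he with he | he
        · exact hτH st e he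
        · exact st.2.2.2.1 e he
      · exact (hτw st).append st.2.2.2.2⟩
    let σ : ℕ → St := fun n => nxt^[n] ⟨(∅, [], v), by simp, by simp, by simp, W.nil v⟩
    have hσ : ∀ n, σ (n + 1) = nxt (σ n) := fun n => Function.iterate_succ_apply' nxt n _
    have hσ0 : (σ 0).1.2.2 = v := rfl
    have hwn : ∀ n, (σ (n + 1)).1.2.2 = fw (σ n) := fun n => by rw [hσ]
    have hSn : ∀ n m, n < m → fc (σ n) ∈ (σ m).1.1 := by
      intro n m h
      induction m with
      | zero => omega
      | succ m ih =>
        rw [hσ]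
        by_cases hnm : n = m
        · subst hnm; exact Finset.mem_insert_self _ _
        · exact Finset.mem_insert_of_mem (ih (by omega))
    have hTn : ∀ n m, n < m → ∀ e ∈ fτ (σ n), e ∈ (σ m).1.2.1 := by
      intro n m h e he
      induction m with
      | zero => omega
      | succ m ih =>
        rw [hσ]
        by_cases hnm : n = m
        · subst hnm; exact List.mem_append_left _ he
        · exact List.mem_append_right _ (ih (by omega))
    set c : ℕ → E := fun n => fc (σ n) with hc
    set l1 : ℕ → List E := fun n => fl1 (σ n) with hl1
    set l2 : ℕ → List E := fun n => fl2 (σ n) with hl2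
    set τ : ℕ → List E := fun n => fτ (σ n) with hτ
    have hcC : ∀ n, c n ∈ C := fun n => hfc _
    have hcne : ∀ n m, n ≠ m → c n ≠ c m := by
      have : ∀ n m, n < m → c n ≠ c m := fun n m h h' =>
        hfS (σ m) (show c m ∈ _ from h' ▸ hSn n m h)
      intro n m h
      rcases lt_or_gt_of_ne h with h | h
      · exact this n m h
      · exact (this m n h).symm
    have hττ : ∀ n m, n ≠ m → ∀ e ∈ τ n, e ∉ τ m := by
      have : ∀ n m, n < m → ∀ e ∈ τ n, e ∉ τ m := fun n m h e he he' =>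
        hτT (σ m) e he' (hTn n m h e he)
      intro n m h e he he'
      rcases lt_or_gt_of_ne h with h | h
      · exact this n m h e he he'
      · exact this m n h e he' he
    have hpcn : ∀ n, p (c n) = l1 n ++ l2 n := fun n => hpc (σ n)
    have hl1p : ∀ n, ∀ e ∈ l1 n, e ∈ p (c n) := fun n e he => by rw [hpcn]; simp [he]
    have hl2p : ∀ n, ∀ e ∈ l2 n, e ∈ p (c n) := fun n e he => by rw [hpcn]; simp [he]
    have hτp : ∀ n, ∀ e ∈ τ n, ∀ d ∈ C, e ∉ p d := fun n e he d hd => (hτH (σ n) e he).2 d hd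
    have hhead : ∀ n, W inc o (l1 n ++ τ n) (σ n).1.2.2 := fun n => (hw1 (σ n)).append (hτw (σ n))
    have htail : ∀ n, W inc (σ (n + 1)).1.2.2 (l2 n) (inn inc o X (c n)) := by
      intro n
      have h := hp.walk (c n) (hcC n)
      rw [hpcn] at h
      obtain ⟨x, h1, h2⟩ := h.append_inv
      rw [hwn]
      cases h1.det (hw1 (σ n))
      exact h2
    have hhh : ∀ n m, n ≠ m → ∀ e ∈ l1 n ++ τ n, e ∉ l1 m ++ τ m := by
      intro n m h e he he'
      rcases List.mem_append.1 he with he | he <;> rcases List.mem_append.1 he' with he' | he'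
      · exact hp.disj _ (hcC n) _ (hcC m) (hcne n m h) e (hl1p n e he) (hl1p m e he')
      · exact hτp m e he' _ (hcC n) (hl1p n e he)
      · exact hτp n e he _ (hcC m) (hl1p m e he')
      · exact hττ n m h e he he'
    have hht : ∀ n m, ∀ e ∈ l1 n ++ τ n, e ∉ l2 m := by
      intro n m e he he'
      rcases List.mem_append.1 he with he | he
      · by_cases h : n = m
        · subst h
          have := hp.nodup _ (hcC n)
          rw [hpcn, List.nodup_append] at this
          exact this.2.2 e he e he' rfl
        · exact hp.disj _ (hcC n) _ (hcC m) (hcne n m h) e (hl1p n e he) (hl2p m e he')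
      · exact hτp n e he _ (hcC m) (hl2p m e he')
    have htt : ∀ n m, n ≠ m → ∀ e ∈ l2 n, e ∉ l2 m := fun n m h e he he' =>
      hp.disj _ (hcC n) _ (hcC m) (hcne n m h) e (hl2p n e he) (hl2p m e he')
    have hho : ∀ n, ∀ d ∈ C, d ∉ Set.range c → ∀ e ∈ l1 n ++ τ n, e ∉ p d := by
      intro n d hd hdr e he hed
      rcases List.mem_append.1 he with he | he
      · exact hp.disj _ (hcC n) d hd (fun h => hdr ⟨n, h⟩) e (hl1p n e he) hed
      · exact hτp n e he d hd hed
    have hto : ∀ n, ∀ d ∈ C, d ∉ Set.range c → ∀ e ∈ l2 n, e ∉ p d := by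
      intro n d hd hdr e he hed
      exact hp.disj _ (hcC n) d hd (fun h => hdr ⟨n, h⟩) e (hl2p n e he) hed
    have hhm : ∀ n, ∀ e ∈ l1 n ++ τ n, e ∈ {e | e ∈ A \ Fz ∧ Ins inc X e} := by
      intro n e he
      rcases List.mem_append.1 he with he | he
      · exact hp.mem _ (hcC n) e (hl1p n e he)
      · exact (hτH (σ n) e he).1
    -- the new system
    have hq : ∃ q : E → List E, q b0 = l1 0 ++ τ 0 ∧
        (∀ n, q (c n) = (l1 (n + 1) ++ τ (n + 1)) ++ l2 n) ∧
        ∀ d ∈ C, d ∉ Set.range c → q d = p d := by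
      refine ⟨fun x => if x = b0 then l1 0 ++ τ 0 else
        if h : ∃ n, x = c n then (l1 (h.choose + 1) ++ τ (h.choose + 1)) ++ l2 h.choose else p x,
        by simp, ?_, ?_⟩
      · intro n
        have h0 : c n ≠ b0 := fun h => hb0C (h ▸ hcC n)
        have h1 : ∃ m, c n = c m := ⟨n, rfl⟩
        have h2 : h1.choose = n := by
          by_contra h
          exact hcne _ _ h h1.choose_spec.symm
        simp only [h0, if_false, dif_pos h1, h2]
      · intro d hd hdr
        have h0 : d ≠ b0 := fun h => hb0C (h ▸ hd)
        have h1 : ¬ ∃ m, d = c m := fun ⟨m, hm⟩ => hdr ⟨m, hm.symm⟩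
        simp only [h0, if_false, dif_neg h1]
    obtain ⟨q, hqb, hqc, hqd⟩ := hq
    have hcase : ∀ x ∈ insert b0 C, x = b0 ∨ (∃ n, x = c n) ∨ (x ∈ C ∧ x ∉ Set.range c) := by
      rintro x (rfl | hx)
      · exact Or.inl rfl
      · by_cases h : x ∈ Set.range c
        · obtain ⟨n, rfl⟩ := h; exact Or.inr (Or.inl ⟨n, rfl⟩)
        · exact Or.inr (Or.inr ⟨hx, h⟩)
    obtain ⟨q', hq', hq'2, -⟩ := prune_nodup (inc := inc) (A := {e | e ∈ A \ Fz ∧ Ins inc X e})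
      (C := insert b0 C) (o := o) (y := inn inc o X) (p := q) (by
        intro x hx
        rcases hcase x hx with rfl | ⟨n, rfl⟩ | ⟨h1, h2⟩
        · rw [hqb]; exact hhead 0
        · rw [hqc]; exact (hhead (n + 1)).append (htail n)
        · rw [hqd x h1 h2]; exact hp.walk x h1) (by
        intro x hx
        rcases hcase x hx with rfl | ⟨n, rfl⟩ | ⟨h1, h2⟩
        · rw [hqb]; exact hhm 0
        · rw [hqc]
          intro e he
          rcases List.mem_append.1 he with he | he
          · exact hhm _ e he
          · exact hp.mem _ (hcC n) e (hl2p n e he)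
        · rw [hqd x h1 h2]; exact hp.mem x h1) (by
        intro x hx y hy hxy e he he'
        rcases hcase x hx with rfl | ⟨n, rfl⟩ | ⟨h1, h2⟩ <;>
          rcases hcase y hy with rfl | ⟨m, rfl⟩ | ⟨h3, h4⟩
        · exact hxy rfl
        · rw [hqb] at he; rw [hqc] at he'
          rcases List.mem_append.1 he' with he' | he'
          · exact hhh 0 (m + 1) (by omega) e he he'
          · exact hht 0 m e he he'
        · rw [hqb] at he; rw [hqd y h3 h4] at he'
          exact hho 0 y h3 h4 e he he'
        · rw [hqb] at he'; rw [hqc] at he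
          rcases List.mem_append.1 he with he | he
          · exact hhh 0 (n + 1) (by omega) e he' he
          · exact hht 0 n e he' he
        · rw [hqc] at he he'
          have hnm : n ≠ m := fun h => hxy (by rw [h])
          rcases List.mem_append.1 he with he | he <;> rcases List.mem_append.1 he' with he' | he'
          · exact hhh (n + 1) (m + 1) (by omega) e he he'
          · exact hht (n + 1) m e he he'
          · exact hht (m + 1) n e he' he
          · exact htt n m hnm e he he'
        · rw [hqc] at he; rw [hqd y h3 h4] at he'
          rcases List.mem_append.1 he with he | he
          · exact hho _ y h3 h4 e he he'
          · exact hto n y h3 h4 e he he'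
        · rw [hqb] at he'; rw [hqd x h1 h2] at he
          exact hho 0 x h1 h2 e he' he
        · rw [hqc] at he'; rw [hqd x h1 h2] at he
          rcases List.mem_append.1 he' with he' | he'
          · exact hho _ x h1 h2 e he' he
          · exact hto m x h1 h2 e he' he
        · rw [hqd x h1 h2] at he; rw [hqd y h3 h4] at he'
          exact hp.disj x h1 y h3 hxy e he he')
    refine ⟨q', Set.range c, hq', Set.countable_range c, ?_⟩
    intro d hd hdr
    have := hqd d hd hdr
    rw [hq'2 d (Set.mem_insert_of_mem _ hd) (by rw [this]; exact hp.nodup d hd), this]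

end LK

namespace LK
variable {V : Type u} {E : Type v} {inc : E → Sym2 V}

theorem Sys.extend {A C : Set E} {o : V} {y : E → V} {p : E → List E} {b : E}
    (hp : Sys inc A o C y p) (hb : b ∉ C) (h : Cn inc (Free A C p) o (y b)) :
    ∃ q, Sys inc A o (insert b C) y q ∧ ∀ c ∈ C, q c = p c := by
  classical
  obtain ⟨l, hl, hlp⟩ := h.pth
  have hu : ∀ c ∈ C, Function.update p b l c = p c := by
    intro c hc
    rw [Function.update_of_ne]
    rintro rfl; exact hb hc
  refine ⟨Function.update p b l, ⟨?_, ?_, ?_, ?_⟩, hu⟩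
  · rintro c (rfl | hc)
    · simpa using hlp.toW
    · rw [hu c hc]; exact hp.walk c hc
  · rintro c (rfl | hc)
    · simp only [Function.update_self]
      intro e he; exact (hl e he).1
    · rw [hu c hc]; exact hp.mem c hc
  · rintro c (rfl | hc) d (rfl | hd) hcd
    · exact absurd rfl hcd
    · rw [hu d hd]; simp only [Function.update_self]
      intro e he; exact (hl e he).2 d hd
    · rw [hu c hc]; simp only [Function.update_self]
      intro e he he'; exact (hl e he').2 c hc he
    · rw [hu c hc, hu d hd]; exact hp.disj c hc d hd hcd
  · rintro c (rfl | hc)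
    · simpa using hlp.nodup
    · rw [hu c hc]; exact hp.nodup c hc

theorem append_cons_lt {a b p : List E} {g c : E} (h : p ++ [c] = a ++ g :: b) :
    ∃ r, p = a ++ r := by
  rcases List.append_eq_append_iff.1 h with ⟨r, h1, h2⟩ | ⟨r, h1, h2⟩
  · have : r = [] := by
      have h3 := congrArg List.length h2
      simp at h3
      exact List.length_eq_zero_iff.1 (by omega)
    exact ⟨[], by simp [h1, this]⟩
  · exact ⟨r, h1⟩

theorem truncate_gen {A A' C D : Set E} {o : V} {X : Set V} {y : E → V} {p : E → List E}
    (hp : Sys inc A' o C y p)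
    (hD : ∀ g ∈ D, Crs inc X g ∧ ∃ c ∈ C, ∃ a b, p c ++ [c] = a ++ g :: b ∧
      (∀ h ∈ a, h ∈ A ∧ Ins inc X h) ∧ W inc o a (inn inc o X g)) :
    ∃ p', Cover inc A o X D p' ∧ ∀ g ∈ D, ∃ c ∈ C, ∃ b, p c ++ [c] = p' g ++ g :: b := by
  classical
  choose! hcr c hc a b hab hins hw using hD
  refine ⟨a, ⟨hw, fun g hg h hh => hins g hg h hh, ?_, ?_⟩,
    fun g hg => ⟨c g, hc g hg, b g, hab g hg⟩⟩
  · intro g hg g' hg' hne e he he'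
    obtain ⟨r, hr⟩ := append_cons_lt (hab g hg)
    obtain ⟨r', hr'⟩ := append_cons_lt (hab g' hg')
    by_cases hcc : c g = c g'
    · have h1 := hab g hg
      rw [hcc, hab g' hg'] at h1
      rcases List.append_eq_append_iff.1 h1 with ⟨s, h2, h3⟩ | ⟨s, h2, h3⟩
      · cases s with
        | nil => simp at h3; exact hne h3.1.symm
        | cons z s =>
          simp at h3
          have : g' ∈ a g := by rw [h2, h3.1]; simp
          exact not_crs_of_ins (hins g hg g' this).2 (hcr g' hg')
      · cases s with
        | nil => simp at h3; exact hne h3.1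
        | cons z s =>
          simp at h3
          have : g ∈ a g' := by rw [h2, h3.1]; simp
          exact not_crs_of_ins (hins g' hg' g this).2 (hcr g hg)
    · exact hp.disj _ (hc g hg) _ (hc g' hg') hcc e (by rw [hr]; simp [he]) (by rw [hr']; simp [he'])
  · intro g hg
    obtain ⟨r, hr⟩ := append_cons_lt (hab g hg)
    have := hp.nodup _ (hc g hg)
    rw [hr] at this
    exact (List.nodup_append.1 this).1

theorem truncate {A C : Set E} {o : V} {X Y : Set V} {p : E → List E}
    (hp : Cover inc A o X C p) (hC : ∀ c ∈ C, c ∈ ExC inc A X)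
    (hY : Cert inc {e | e ∈ A ∧ Ins inc X e} o C p Y) :
    ∃ p', Cover inc A o (X \ Y) {g | g ∈ ExC inc A (X \ Y) ∧ (g ∈ ExC inc A X → g ∈ C)} p' ∧
      ∀ g, (g ∈ ExC inc A (X \ Y) ∧ (g ∈ ExC inc A X → g ∈ C)) →
        ∃ c ∈ C, ∃ b, p c ++ [c] = p' g ++ g :: b := by
  refine truncate_gen hp ?_
  rintro g ⟨⟨hgA, hgc⟩, hgC⟩
  refine ⟨hgc, ?_⟩
  obtain ⟨x, y, hxy, hx, hy⟩ := hgc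
  rw [inn_eq hxy hx hy]
  by_cases hyX : y ∈ X
  · have hyY : y ∈ Y := by
      by_contra h; exact hy ⟨hyX, h⟩
    obtain ⟨c, hc, a, b, u, u', h1, h2, h3, h4, h5, h6⟩ :=
      hY.edge hp (g := g) ⟨hgA, (ins_iff hxy).2 ⟨hx.1, hyX⟩⟩
        ((crs_iff hxy).2 (Or.inr ⟨hyY, hx.2⟩))
    have hux : u = x := by
      rw [hxy] at h3
      rcases Sym2.eq_iff.1 h3 with ⟨h, _⟩ | ⟨h, h'⟩
      · exact h.symm
      · exact absurd (h ▸ h5) hx.2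
    subst hux
    refine ⟨c, hc, a, b ++ [c], by rw [h1]; simp, ?_, h2⟩
    intro h hh
    have := hp.mem c hc h (by rw [h1]; simp [hh])
    exact ⟨this.1, fun v hv => ⟨this.2 v hv, h6 h hh v hv⟩⟩
  · have hgX : g ∈ ExC inc A X := ⟨hgA, x, y, hxy, hx.1, hyX⟩
    have hgC' := hgC hgX
    have hinn : inn inc o X g = x := inn_eq hxy hx.1 hyX
    refine ⟨g, hgC', p g, [], rfl, ?_, ?_⟩
    · intro h hh
      have h1 := hp.mem g hgC' h hh
      have h2 := hY.avoid hp hgC' (by rw [hinn]; exact hx.2) h hh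
      exact ⟨h1.1, fun v hv => ⟨h1.2 v hv, h2 v hv⟩⟩
    · rw [← hinn]; exact hp.walk g hgC'

theorem t31 {A : Set E} {o t : V} {X : Set V} {b : E} {p : E → List E}
    (hL : Loose inc A o t) (hE : Euler inc A o t) (ho : o ∈ X) (ht : t ∉ X)
    (hp : Cover inc A o X (ExC inc A X \ {b}) p) :
    ∀ e ∈ A, ∀ x ∈ X, x ≠ o → inc e ≠ s(o, x) := by
  by_cases hb : b ∈ ExC inc A X
  · obtain ⟨q, B, hq, -, -⟩ := shift (Fz := ∅) hE ho ht hb rfl (p := p) (by simpa using hp) (by simp)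
    refine hL X q ⟨ho, ht, ?_⟩
    simpa [Set.insert_eq_of_mem hb] using hq
  · rw [Set.sdiff_singleton_eq_self hb] at hp
    exact hL X p ⟨ho, ht, hp⟩

theorem t32 {A : Set E} {o t : V} {X : Set V} {b1 b2 : E} {p : E → List E}
    (hL : Loose inc A o t) (hE : Euler inc A o t) (ho : o ∈ X) (ht : t ∉ X)
    (hp : Cover inc A o X (ExC inc A X \ {b1, b2}) p) {e : E} (he : e ∈ A) {x : V} (hx : x ∈ X)
    (hxo : x ≠ o) (hex : inc e = s(o, x)) :
    ∃ c ∈ ExC inc A X \ {b1, b2}, e ∈ p c := by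
  by_contra hcon
  push Not at hcon
  by_cases hb12 : b1 = b2
  · subst hb12
    exact t31 hL hE ho ht (b := b1) (p := p) (by simpa using hp) e he x hx hxo hex
  by_cases hb1 : b1 ∈ ExC inc A X
  · rcases augment hp (inn inc o X b1) with ⟨p', hp', hcn⟩ | ⟨Y, hvY, hY⟩
    · obtain ⟨q, hq, -⟩ := hp'.extend (b := b1) (by simp) hcn
      refine t31 hL hE ho ht (b := b2) (p := q) ?_ e he x hx hxo hex
      have hset : ExC inc A X \ {b2} = insert b1 (ExC inc A X \ {b1, b2}) := by
        ext z
        by_cases hz : z = b1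
        · subst hz; simp [hb1, hb12]
        · simp [hz]
      rw [hset]; exact hq
    · obtain ⟨p', hp', -⟩ := truncate hp (fun c hc => hc.1) hY
      have hxY : x ∉ Y := by
        intro hxY
        obtain ⟨c, hc, hec⟩ := hY.used e ⟨he, (ins_iff hex).2 ⟨ho, hx⟩⟩
          ((crs_iff hex).2 (Or.inr ⟨hxY, hY.notmem⟩))
        exact hcon c hc hec
      refine t31 hL hE (X := X \ Y) ⟨ho, hY.notmem⟩ (fun h => ht h.1) (b := b2) (p := p')
        (hp'.mono (fun c hc => ?_) ?_) e he x ⟨hx, hxY⟩ hxo hex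
      swap
      · rintro g ⟨hg, hg2⟩
        refine ⟨hg, fun hgX => ⟨hgX, ?_⟩⟩
        rintro (rfl | h)
        · obtain ⟨y, hy, -, hyX⟩ := hgX.2.inn (o := o)
          rcases (crs_iff hy).1 hg.2 with h | h
          · exact h.1.2 hvY
          · exact hyX h.1.1
        · exact hg2 h
      · refine hp'.mem c ?_
        refine ⟨hc.1, fun hgX => ⟨hgX, ?_⟩⟩
        rintro (rfl | h)
        · obtain ⟨y, hy, -, hyX⟩ := hgX.2.inn (o := o)
          rcases (crs_iff hy).1 hc.1.2 with h | h
          · exact h.1.2 hvY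
          · exact hyX h.1.1
        · exact hc.2 h
  · refine t31 hL hE ho ht (b := b2) (p := p) ?_ e he x hx hxo hex
    convert hp using 1
    ext z
    simp only [Set.mem_sdiff, Set.mem_singleton_iff, Set.mem_insert_iff, not_or]
    constructor
    · rintro ⟨h1, h2⟩
      exact ⟨h1, fun h => hb1 (h ▸ h1), h2⟩
    · rintro ⟨h1, h2, h3⟩
      exact ⟨h1, h3⟩

/-! quotients -/

open Classical in
noncomputable def qi (inc : E → Sym2 V) (o : V) (X : Set V) : E → Sym2 V :=
  fun e => Sym2.map (fun v => if v ∈ X then o else v) (inc e)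

theorem crs_map {V' : Type*} {π : V → V'} {Y : Set V'} {e : E} :
    Crs (fun e => Sym2.map π (inc e)) Y e ↔ Crs inc (π ⁻¹' Y) e := by
  obtain ⟨x, y, h⟩ := ends inc e
  rw [crs_iff h, crs_iff (inc := fun e => Sym2.map π (inc e)) (x := π x) (y := π y) (by simp [h])]
  rfl

theorem ins_map {V' : Type*} {π : V → V'} {Y : Set V'} {e : E} :
    Ins (fun e => Sym2.map π (inc e)) Y e ↔ Ins inc (π ⁻¹' Y) e := by
  obtain ⟨x, y, h⟩ := ends inc e
  rw [ins_iff h, ins_iff (inc := fun e => Sym2.map π (inc e)) (x := π x) (y := π y) (by simp [h])]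
  rfl

theorem qi_pre_in {o : V} {X Y : Set V} (ho : o ∈ Y) :
    (open Classical in (fun v => if v ∈ X then o else v)) ⁻¹' Y = X ∪ Y := by
  ext v
  by_cases h : v ∈ X <;> simp [h, ho]

theorem qi_pre_out {o : V} {X Y : Set V} (ho : o ∉ Y) :
    (open Classical in (fun v => if v ∈ X then o else v)) ⁻¹' Y = Y \ X := by
  ext v
  by_cases h : v ∈ X <;> simp [h, ho]

theorem qi_crs_in {o : V} {X Y : Set V} (ho : o ∈ Y) {e : E} :
    Crs (qi inc o X) Y e ↔ Crs inc (X ∪ Y) e := by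
  unfold qi; rw [crs_map, qi_pre_in ho]

theorem qi_crs_out {o : V} {X Y : Set V} (ho : o ∉ Y) {e : E} :
    Crs (qi inc o X) Y e ↔ Crs inc (Y \ X) e := by
  unfold qi; rw [crs_map, qi_pre_out ho]

theorem qi_ins_in {o : V} {X Y : Set V} (ho : o ∈ Y) {e : E} :
    Ins (qi inc o X) Y e ↔ Ins inc (X ∪ Y) e := by
  unfold qi; rw [ins_map, qi_pre_in ho]

theorem qi_exc_in {o : V} {X Y : Set V} (ho : o ∈ Y) {A : Set E} :
    ExC (qi inc o X) A Y = ExC inc A (X ∪ Y) := by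
  ext e; exact and_congr_right fun _ => qi_crs_in ho

theorem qi_exc_out {o : V} {X Y : Set V} (ho : o ∉ Y) {A : Set E} :
    ExC (qi inc o X) A Y = ExC inc A (Y \ X) := by
  ext e; exact and_congr_right fun _ => qi_crs_out ho

theorem Euler.qi {o t : V} {A : Set E} (h : Euler inc A o t) (X : Set V) :
    Euler (qi inc o X) A o t := by
  intro Y ho ht
  rw [qi_exc_out ho]
  exact h _ (fun h => ho h.1) (fun h => ht h.1)

theorem qi_eq_of_out {o : V} {X : Set V} {e : E} (h : Ins inc Xᶜ e) : qi inc o X e = inc e := by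
  obtain ⟨x, y, hxy⟩ := ends inc e
  obtain ⟨h1, h2⟩ := (ins_iff hxy).1 h
  simp only [Set.mem_compl_iff] at h1 h2
  simp [qi, hxy, h1, h2]

theorem qi_avoid {o : V} {X : Set V} (ho : o ∈ X) {e : E} : o ∉ qi inc o X e ↔ Ins inc Xᶜ e := by
  obtain ⟨x, y, hxy⟩ := ends inc e
  rw [ins_iff hxy]
  by_cases h1 : x ∈ X <;> by_cases h2 : y ∈ X <;> simp [qi, hxy, h1, h2]
  constructor <;> rintro rfl <;> contradiction

theorem qi_o_edge {o : V} {X : Set V} (ho : o ∈ X) {e : E} {z : V} (hz : z ≠ o)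
    (h : qi inc o X e = s(o, z)) : ∃ x ∈ X, inc e = s(x, z) ∧ z ∉ X := by
  obtain ⟨x, y, hxy⟩ := ends inc e
  by_cases h1 : x ∈ X <;> by_cases h2 : y ∈ X <;> simp [qi, hxy, h1, h2] at h
  · exact absurd h.symm hz
  · rcases h with rfl | ⟨h, _⟩
    · exact ⟨x, h1, hxy, h2⟩
    · exact absurd h.symm hz
  · rcases h with ⟨h, h'⟩ | rfl
    · exact absurd h'.symm hz
    · exact ⟨y, h2, by rw [hxy, Sym2.eq_swap], h1⟩
  · rcases h with ⟨rfl, _⟩ | ⟨_, rfl⟩ <;> contradiction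

theorem qi_of_crs {o : V} {X : Set V} {e : E} {x z : V} (hx : x ∈ X) (hz : z ∉ X)
    (h : inc e = s(x, z)) : qi inc o X e = s(o, z) := by
  simp [qi, h, hx, hz]

theorem qi_qi {o : V} {X Y : Set V} (ho : o ∈ Y) :
    qi (qi inc o X) o Y = qi inc o (X ∪ Y) := by
  funext e
  obtain ⟨x, y, hxy⟩ := ends inc e
  simp only [qi, hxy, Sym2.map_mk]
  by_cases h1 : x ∈ X <;> by_cases h2 : y ∈ X <;> by_cases h3 : x ∈ Y <;> by_cases h4 : y ∈ Y <;>
    simp [h1, h2, h3, h4, ho]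

theorem Pth.congr {inc' : E → Sym2 V} {u v : V} {l} (h : Pth inc u l v)
    (hc : ∀ e ∈ l, inc' e = inc e) : Pth inc' u l v := by
  induction h with
  | nil => exact Pth.nil _
  | cons he _ hne hav ih =>
    refine Pth.cons (by rw [hc _ (by simp), he]) (ih (fun e he => hc e (by simp [he]))) hne ?_
    intro g hg
    rw [hc g (by simp [hg])]
    exact hav g hg

/-- a path in the quotient starting at `o` -/
theorem qi_pth {o : V} {X : Set V} (ho : o ∈ X) {d : E} {l : List E} {w : V}
    (h : Pth (qi inc o X) o (d :: l) w) :
    ∃ x ∈ X, ∃ z, inc d = s(x, z) ∧ z ∉ X ∧ Pth inc z l w ∧ (∀ g ∈ l, Ins inc Xᶜ g) ∧ w ∉ X ∧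
      w ≠ o := by
  cases h with
  | @cons _ z _ _ _ he h hne hav =>
    have hz : z ≠ o := by
      rintro rfl
      cases h with
      | nil => exact hne rfl
      | @cons _ _ _ e' _ he' _ _ _ => exact hav e' (by simp) (by rw [he']; simp)
    obtain ⟨x, hx, hxz, hzX⟩ := qi_o_edge ho hz he
    have hl : ∀ g ∈ l, Ins inc Xᶜ g := fun g hg => (qi_avoid ho).1 (hav g hg)
    have hw : Pth inc z l w := h.congr (fun e he => (qi_eq_of_out (hl e he)).symm)
    exact ⟨x, hx, z, hxz, hzX, hw, hl, hw.toW.mem_of_ins (Y := Xᶜ) hzX hl, hne.symm⟩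

theorem Pth.append_sep {X : Set V} {u x z w : V} {a l : List E} {d : E} (ha : Pth inc u a x)
    (hX : ∀ g ∈ a, Ins inc X g) (hx : x ∈ X) (hd : inc d = s(x, z)) (hz : z ∉ X)
    (hl : Pth inc z l w) (hlX : ∀ g ∈ l, Ins inc Xᶜ g) : Pth inc u (a ++ d :: l) w := by
  have hwX : w ∉ X := hl.toW.mem_of_ins (Y := Xᶜ) hz hlX
  induction ha with
  | nil => exact Pth.cons hd hl (fun h => hwX (h ▸ hx)) (fun g hg h => hlX g hg _ h hx)
  | @cons u v x e a he h hne hav ih =>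
    have huX : u ∈ X := hX e (by simp) u (by rw [he]; simp)
    refine Pth.cons he (ih (fun g hg => hX g (by simp [hg])) hx hd) (fun h => hwX (h ▸ huX)) ?_
    intro g hg
    rcases List.mem_append.1 hg with hg | hg
    · exact hav g hg
    · rcases List.mem_cons.1 hg with rfl | hg
      · rw [hd, Sym2.mem_iff, not_or]
        exact ⟨hne, fun h => hz (h ▸ huX)⟩
      · exact fun h => hlX g hg _ h huX

theorem Wave.prune {A : Set E} {o t : V} {X : Set V} {p : E → List E} (h : Wave inc A o t X p) :
    ∃ p', Wave inc A o t X p' ∧ (∀ c ∈ ExC inc A X, Pth inc o (p' c) (inn inc o X c)) ∧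
      ∀ c ∈ ExC inc A X, ∀ e ∈ p' c, e ∈ p c := by
  obtain ⟨p', h1, h2, h3⟩ := LK.prune h.cov.walk h.cov.mem h.cov.disj
  exact ⟨p', ⟨h.ho, h.ht, h1⟩, h2, h3⟩

theorem comp_wave {B : Set E} {o t : V} {X X2 : Set V} {p p2 : E → List E}
    (h1 : Wave inc B o t X p) (h2 : Wave (qi inc o X) B o t X2 p2)
    (hp2 : ∀ c ∈ ExC (qi inc o X) B X2, Pth (qi inc o X) o (p2 c) (inn (qi inc o X) o X2 c)) :
    ∃ p3, Wave inc B o t (X ∪ X2) p3 ∧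
      (∀ c ∈ ExC inc B X, c ∈ ExC inc B (X ∪ X2) → p3 c = p c) ∧
      (∀ c ∈ ExC inc B (X ∪ X2), ∀ d ∈ ExC inc B X, d ∈ p2 c → ∀ e ∈ d :: p d, e ∈ p3 c) ∧
      ((∀ c ∈ ExC inc B X, Pth inc o (p c) (inn inc o X c)) →
        ∀ c ∈ ExC inc B (X ∪ X2), Pth inc o (p3 c) (inn inc o (X ∪ X2) c)) := by
  classical
  have hEx : ExC (qi inc o X) B X2 = ExC inc B (X ∪ X2) := qi_exc_in h2.ho
  set D := ExC inc B (X ∪ X2) with hD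
  rw [hEx] at hp2
  have hcov2 : Sys (qi inc o X) {e | e ∈ B ∧ Ins (qi inc o X) X2 e} o D
    (inn (qi inc o X) o X2) p2 := by
    have := h2.cov; unfold Cover at this; rw [hEx] at this; exact this
  have hq : ∃ p3 : E → List E, (∀ g, p2 g = [] → p3 g = p g) ∧
      ∀ g d l, p2 g = d :: l → p3 g = p d ++ d :: l := by
    refine ⟨fun g => match p2 g with | [] => p g | d :: l => p d ++ d :: l, ?_, ?_⟩
    · intro g hg; simp only [hg]
    · intro g d l hg; simp only [hg]
  obtain ⟨p3, hq1, hq2⟩ := hq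
  -- facts for nil
  have hnil : ∀ g ∈ D, p2 g = [] → g ∈ ExC inc B X ∧ inn inc o X g = inn inc o (X ∪ X2) g := by
    intro g hg hgn
    obtain ⟨y, hy, hx, hyX⟩ := hg.2.inn (o := o)
    set x := inn inc o (X ∪ X2) g
    have hxX : x ∈ X := by
      by_contra hxX
      have hx2 : x ∈ X2 := hx.resolve_left hxX
      have hyX' : y ∉ X := fun h => hyX (Or.inl h)
      have h3 : qi inc o X g = s(x, y) := by simp [qi, hy, hxX, hyX']
      have h4 := hp2 g hg
      rw [hgn, inn_eq h3 hx2 (fun h => hyX (Or.inr h))] at h4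
      have := h4.toW.eq_of_nil
      exact hxX (this ▸ h1.ho)
    have hyX' : y ∉ X := fun h => hyX (Or.inl h)
    exact ⟨⟨hg.1, x, y, hy, hxX, hyX'⟩, inn_eq hy hxX hyX'⟩
  have hcons : ∀ g ∈ D, ∀ d l, p2 g = d :: l → d ∈ ExC inc B X ∧
      (W inc o (p3 g) (inn inc o (X ∪ X2) g) ∧
        ((∀ c ∈ ExC inc B X, Pth inc o (p c) (inn inc o X c)) →
          Pth inc o (p3 g) (inn inc o (X ∪ X2) g))) ∧ (∀ e ∈ l, Ins inc Xᶜ e) := by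
    intro g hg d l hgd
    have h3 := hp2 g hg
    rw [hgd] at h3
    obtain ⟨x, hx, z, hxz, hz, hw, hl, hwX, hwo⟩ := qi_pth h1.ho h3
    have hdB : d ∈ B := (hcov2.mem g hg d (by rw [hgd]; simp)).1
    have hdX : d ∈ ExC inc B X := ⟨hdB, x, z, hxz, hx, hz⟩
    refine ⟨hdX, ?_, hl⟩
    rw [hq2 g d l hgd]
    have h4 := h1.cov.walk d hdX
    rw [inn_eq hxz hx hz] at h4
    have h5 : inn (qi inc o X) o X2 g = inn inc o (X ∪ X2) g := by
      obtain ⟨y, hy, hx, hyX⟩ := (hEx ▸ hg : g ∈ ExC (qi inc o X) B X2).2.inn (o := o)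
      set w := inn (qi inc o X) o X2 g
      obtain ⟨a, b, hab⟩ := ends inc g
      have haX : ∀ {a : V}, a ∈ X → a ∈ X ∪ X2 := fun h => Or.inl h
      have hyo : y ≠ o := fun h => hyX (h ▸ h2.ho)
      by_cases ha : a ∈ X <;> by_cases hb : b ∈ X <;> simp [qi, hab, ha, hb] at hy
      · rcases hy with ⟨h, _⟩ | ⟨_, h⟩ <;> exact absurd h.symm hwo
      · rcases hy with ⟨h, _⟩ | ⟨h, _⟩
        · exact absurd h.symm hwo
        · exact absurd h.symm hyo
      · rcases hy with ⟨_, h⟩ | ⟨_, h⟩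
        · exact absurd h.symm hyo
        · exact absurd h.symm hwo
      · rcases hy with ⟨rfl, rfl⟩ | ⟨rfl, rfl⟩
        · exact (inn_eq hab (Or.inr hx) (by simp [hb, hyX])).symm
        · exact (inn_eq (hab.trans Sym2.eq_swap) (Or.inr hx) (by simp [ha, hyX])).symm
    rw [← h5]
    refine ⟨h4.append (W.cons hxz hw.toW), fun hpp => ?_⟩
    have h6 := hpp d hdX
    rw [inn_eq hxz hx hz] at h6
    exact h6.append_sep (fun e he => (h1.cov.mem d hdX e he).2) hx hxz hz hw hl
  have hinsX : ∀ c ∈ ExC inc B X, ∀ e ∈ p c, e ∈ B ∧ Ins inc X e := fun c hc e he =>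
    h1.cov.mem c hc e he
  have hp2n : ∀ g ∈ D, ∀ e ∈ p2 g, ¬ Ins inc X e := by
    intro g hg e he hi
    cases hgd : p2 g with
    | nil => rw [hgd] at he; simp at he
    | cons d l =>
      obtain ⟨hd, -, hl⟩ := hcons g hg d l hgd
      rw [hgd] at he
      rcases List.mem_cons.1 he with rfl | he
      · exact not_crs_of_ins hi hd.2
      · obtain ⟨x, y, hxy⟩ := ends inc e
        exact ((ins_iff hxy).1 (hl e he)).1 ((ins_iff hxy).1 hi).1
  -- owner description
  have how : ∀ g ∈ D, ∃ d ∈ ExC inc B X, p3 g = p d ++ p2 g ∧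
      ((p2 g = [] ∧ d = g) ∨ d ∈ p2 g) := by
    intro g hg
    cases hgd : p2 g with
    | nil => exact ⟨g, (hnil g hg hgd).1, by rw [hq1 g hgd]; simp, Or.inl ⟨rfl, rfl⟩⟩
    | cons d l => exact ⟨d, (hcons g hg d l hgd).1, hq2 g d l hgd, Or.inr (by simp)⟩
  have hgp2 : ∀ g ∈ D, ∀ g' ∈ D, g ∉ p2 g' := by
    intro g hg g' hg' h
    have h3 := (hcov2.mem g' hg' g h).2
    rw [qi_ins_in h2.ho] at h3
    exact not_crs_of_ins h3 hg.2
  have howne : ∀ g ∈ D, ∀ g' ∈ D, g ≠ g' → ∀ d d', ((p2 g = [] ∧ d = g) ∨ d ∈ p2 g) →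
      ((p2 g' = [] ∧ d' = g') ∨ d' ∈ p2 g') → d ≠ d' := by
    rintro g hg g' hg' hne d d' (⟨_, rfl⟩ | h3) (⟨_, rfl⟩ | h4) hdd
    · exact hne hdd
    · exact hgp2 d hg g' hg' (hdd ▸ h4)
    · exact hgp2 d' hg' g hg (hdd ▸ h3)
    · exact hcov2.disj g hg g' hg' hne d h3 (hdd ▸ h4)
  refine ⟨p3, ⟨Or.inl h1.ho, fun h => h.elim h1.ht h2.ht, ⟨?_, ?_, ?_, ?_⟩⟩, ?_, ?_, ?_⟩
  · intro g hg
    cases hgd : p2 g with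
    | nil =>
      obtain ⟨h3, h4⟩ := hnil g hg hgd
      rw [hq1 g hgd, ← h4]
      exact h1.cov.walk g h3
    | cons d l => exact (hcons g hg d l hgd).2.1.1
  · intro g hg e he
    obtain ⟨d, hd, h3, -⟩ := how g hg
    rw [h3] at he
    rcases List.mem_append.1 he with he | he
    · have := hinsX d hd e he
      exact ⟨this.1, this.2.mono Set.subset_union_left⟩
    · have := hcov2.mem g hg e he
      exact ⟨this.1, (qi_ins_in h2.ho).1 this.2⟩
  · intro g hg g' hg' hne e he he'
    obtain ⟨d, hd, h3, h4⟩ := how g hg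
    obtain ⟨d', hd', h3', h4'⟩ := how g' hg'
    have hdd := howne g hg g' hg' hne d d' h4 h4'
    rw [h3] at he; rw [h3'] at he'
    rcases List.mem_append.1 he with he | he <;> rcases List.mem_append.1 he' with he' | he'
    · exact h1.cov.disj d hd d' hd' hdd e he he'
    · exact hp2n g' hg' e he' (hinsX d hd e he).2
    · exact hp2n g hg e he (hinsX d' hd' e he').2
    · exact hcov2.disj g hg g' hg' hne e he he'
  · intro g hg
    obtain ⟨d, hd, h3, h4⟩ := how g hg
    rw [h3, List.nodup_append]
    refine ⟨h1.cov.nodup d hd, hcov2.nodup g hg, ?_⟩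
    rintro a ha b hb rfl
    exact hp2n g hg a hb (hinsX d hd a ha).2
  · intro c hc hcD
    cases hgd : p2 c with
    | nil => exact hq1 c hgd
    | cons d l =>
      exfalso
      have h3 := hp2 c hcD
      rw [hgd] at h3
      obtain ⟨x, hx, z, hxz, hz, hw, hl, hwX, hwo⟩ := qi_pth h1.ho h3
      obtain ⟨x', y, hxy, hx', hy⟩ := hc.2
      have hyD : y ∉ X2 := by
        rcases (crs_iff hxy).1 hcD.2 with h | h
        · exact fun h' => h.2 (Or.inr h')
        · exact absurd (Or.inl hx') h.2
      have := inn_eq (o := o) (qi_of_crs (o := o) hx' hy hxy) h2.ho hyD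
      exact hwo this
  · intro c hcD d hd hdc e he
    cases hgd : p2 c with
    | nil => rw [hgd] at hdc; simp at hdc
    | cons d' l =>
      obtain ⟨hd', -, hl⟩ := hcons c hcD d' l hgd
      have hdd : d = d' := by
        rw [hgd] at hdc
        rcases List.mem_cons.1 hdc with h | h
        · exact h
        · obtain ⟨x, y, hxy, hx, hy⟩ := hd.2
          exact absurd hx ((ins_iff hxy).1 (hl d h)).1
      subst hdd
      rw [hq2 c d l hgd]
      rcases List.mem_cons.1 he with rfl | he
      · simp
      · simp [he]
  · intro hpp g hg
    cases hgd : p2 g with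
    | nil =>
      obtain ⟨h3, h4⟩ := hnil g hg hgd
      rw [hq1 g hgd, ← h4]
      exact hpp g h3
    | cons d l => exact (hcons g hg d l hgd).2.1.2 hpp

theorem exists_max_wave {A : Set E} {o t : V} {X0 : Set V} {p0 : E → List E}
    (h0 : Wave inc A o t X0 p0) :
    ∃ X p, X0 ⊆ X ∧ Wave inc A o t X p ∧ Loose (qi inc o X) A o t := by
  classical
  let P := {w : Set V × (E → List E) // Wave inc A o t w.1 w.2 ∧ X0 ⊆ w.1}
  let r : P → P → Prop := fun a b => a.1.1 ⊆ b.1.1 ∧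
    ∀ c ∈ ExC inc A a.1.1, c ∈ ExC inc A b.1.1 → b.1.2 c = a.1.2 c
  have hmid : ∀ (X Y Z : Set V) (c : E), X ⊆ Y → Y ⊆ Z → c ∈ ExC inc A X → c ∈ ExC inc A Z →
      c ∈ ExC inc A Y := by
    rintro X Y Z c hXY hYZ ⟨hcA, x, y, hxy, hx, hy⟩ ⟨-, hc⟩
    refine ⟨hcA, x, y, hxy, hXY hx, fun h => ?_⟩
    rcases (crs_iff hxy).1 hc with h' | h'
    · exact h'.2 (hYZ h)
    · exact h'.2 (hYZ (hXY hx))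
  have htr : ∀ {a b c : P}, r a b → r b c → r a c := by
    rintro a b c ⟨h1, h2⟩ ⟨h3, h4⟩
    refine ⟨h1.trans h3, fun e he he' => ?_⟩
    have hb := hmid _ _ _ e h1 h3 he he'
    rw [h4 e hb he', h2 e he hb]
  have hrefl : ∀ a : P, r a a := fun a => ⟨subset_rfl, fun _ _ _ => rfl⟩
  obtain ⟨m, hm⟩ := exists_maximal_of_chains_bounded (r := r) (by
    intro ch hch
    by_cases hne : ch.Nonempty
    swap
    · exact ⟨⟨(X0, p0), h0, subset_rfl⟩, fun a ha => absurd ⟨a, ha⟩ hne⟩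
    have hcomp : ∀ a ∈ ch, ∀ b ∈ ch, r a b ∨ r b a := by
      intro a ha b hb
      by_cases hab : a = b
      · subst hab; exact Or.inl (hrefl a)
      · exact hch ha hb hab
    set U : Set V := {v | ∃ a ∈ ch, v ∈ a.1.1} with hU
    have hsub : ∀ a ∈ ch, a.1.1 ⊆ U := fun a ha v hv => ⟨a, ha, hv⟩
    have hloc : ∀ c ∈ ExC inc A U, ∃ a ∈ ch, c ∈ ExC inc A a.1.1 := by
      rintro c ⟨hcA, x, y, hxy, ⟨a, ha, hx⟩, hy⟩
      exact ⟨a, ha, hcA, x, y, hxy, hx, fun h => hy ⟨a, ha, h⟩⟩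
    have : Nonempty P := ⟨⟨(X0, p0), h0, subset_rfl⟩⟩
    choose! fa hfa hfc using hloc
    have hq : ∀ c ∈ ExC inc A U, ∀ a ∈ ch, c ∈ ExC inc A a.1.1 → (fa c).1.2 c = a.1.2 c := by
      intro c hc a ha hca
      rcases hcomp a ha (fa c) (hfa c hc) with h | h
      · exact h.2 c hca (hfc c hc)
      · exact (h.2 c (hfc c hc) hca).symm
    have hinn : ∀ c ∈ ExC inc A U, ∀ a ∈ ch, c ∈ ExC inc A a.1.1 →
        inn inc o a.1.1 c = inn inc o U c := by
      intro c hc a ha hca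
      obtain ⟨y, hy, hx, hyX⟩ := hca.2.inn (o := o)
      refine (inn_eq hy (hsub a ha hx) ?_).symm
      rcases (crs_iff hy).1 hc.2 with h | h
      · exact h.2
      · exact absurd (hsub a ha hx) h.2
    have hcommon : ∀ c ∈ ExC inc A U, ∀ d ∈ ExC inc A U, ∃ a ∈ ch, c ∈ ExC inc A a.1.1 ∧
        d ∈ ExC inc A a.1.1 := by
      intro c hc d hd
      rcases hcomp (fa c) (hfa c hc) (fa d) (hfa d hd) with h | h
      · exact ⟨fa d, hfa d hd, hmid _ _ _ c h.1 (hsub _ (hfa d hd)) (hfc c hc) hc, hfc d hd⟩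
      · exact ⟨fa c, hfa c hc, hfc c hc, hmid _ _ _ d h.1 (hsub _ (hfa c hc)) (hfc d hd) hd⟩
    obtain ⟨a0, ha0⟩ := hne
    refine ⟨⟨(U, fun c => (fa c).1.2 c), ⟨hsub a0 ha0 a0.2.1.ho, ?_, ⟨?_, ?_, ?_, ?_⟩⟩,
      a0.2.2.trans (hsub a0 ha0)⟩, ?_⟩
    · rintro ⟨a, -, h⟩; exact a.2.1.ht h
    · intro c hc
      have := (fa c).2.1.cov.walk c (hfc c hc)
      rwa [hinn c hc _ (hfa c hc) (hfc c hc)] at this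
    · intro c hc e he
      have := (fa c).2.1.cov.mem c (hfc c hc) e he
      exact ⟨this.1, this.2.mono (hsub _ (hfa c hc))⟩
    · intro c hc d hd hcd
      obtain ⟨a, ha, h1, h2⟩ := hcommon c hc d hd
      simp only [hq c hc a ha h1, hq d hd a ha h2]
      exact a.2.1.cov.disj c h1 d h2 hcd
    · intro c hc
      exact (fa c).2.1.cov.nodup c (hfc c hc)
    · intro a ha
      exact ⟨hsub a ha, fun c hc hcU => hq c hcU a ha hc⟩) htr
  refine ⟨m.1.1, m.1.2, m.2.2, m.2.1, ?_⟩
  intro X2 p2 hw e he x hx hxo hex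
  obtain ⟨p2', hw', hpth, -⟩ := hw.prune
  obtain ⟨p3, h3, h4, -, -⟩ := comp_wave m.2.1 hw' hpth
  have := (hm ⟨(m.1.1 ∪ X2, p3), h3, m.2.2.trans Set.subset_union_left⟩
    ⟨Set.subset_union_left, h4⟩).1
  obtain ⟨_, _, _, hxX⟩ := qi_o_edge m.2.1.ho hxo hex
  exact hxX (this (Or.inr hx))

end LK

namespace LK
variable {V : Type u} {E : Type v} {inc inc' : E → Sym2 V}

/-! congruence -/

theorem crs_congr {e : E} {Y : Set V} (h : inc' e = inc e) : Crs inc' Y e ↔ Crs inc Y e := by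
  unfold Crs; rw [h]

theorem ins_congr {e : E} {Y : Set V} (h : inc' e = inc e) : Ins inc' Y e ↔ Ins inc Y e := by
  unfold Ins; rw [h]

theorem inn_congr {o : V} {e : E} {Y : Set V} (h : inc' e = inc e) :
    inn inc' o Y e = inn inc o Y e := by
  by_cases hc : Crs inc Y e
  · obtain ⟨x, y, hxy, hx, hy⟩ := hc
    rw [inn_eq hxy hx hy, inn_eq (h.trans hxy) hx hy]
  · have hc' : ¬ Crs inc' Y e := fun h' => hc ((crs_congr h).1 h')
    simp [inn, hc, hc']

theorem exc_congr {A : Set E} {Y : Set V} (h : ∀ e ∈ A, inc' e = inc e) :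
    ExC inc' A Y = ExC inc A Y := by
  ext e; exact and_congr_right fun he => crs_congr (h e he)

theorem Cover.congr {A D : Set E} {o : V} {X : Set V} {p : E → List E} (hc : Cover inc A o X D p)
    (h : ∀ c ∈ D, inc' c = inc c) (h' : ∀ c ∈ D, ∀ e ∈ p c, inc' e = inc e) :
    Cover inc' A o X D p := by
  refine ⟨fun c hcD => ?_, fun c hcD e he => ?_, hc.disj, hc.nodup⟩
  · rw [inn_congr (h c hcD)]
    exact (hc.walk c hcD).congr (h' c hcD)
  · have := hc.mem c hcD e he
    exact ⟨this.1, (ins_congr (h' c hcD e he)).2 this.2⟩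

theorem Wave.congr {A : Set E} {o t : V} {X : Set V} {p : E → List E} (hw : Wave inc A o t X p)
    (h : ∀ e ∈ A, inc' e = inc e) : Wave inc' A o t X p := by
  refine ⟨hw.ho, hw.ht, ?_⟩
  rw [exc_congr h]
  exact Cover.congr hw.cov (fun c hc => h c hc.1) (fun c hc e he => h e (hw.cov.mem c hc e he).1)

theorem Loose.congr {A : Set E} {o t : V} (hw : Loose inc A o t)
    (h : ∀ e ∈ A, inc' e = inc e) : Loose inc' A o t := by
  intro X p hp e he x hx hxo
  rw [h e he]
  exact hw X p (hp.congr (fun e he => (h e he).symm)) e he x hx hxo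

theorem Euler.congr {A : Set E} {o t : V} (hw : Euler inc A o t)
    (h : ∀ e ∈ A, inc' e = inc e) : Euler inc' A o t := by
  intro Y
  rw [exc_congr h]; exact hw Y

theorem qi_congr {o : V} {X : Set V} {e : E} (h : inc' e = inc e) :
    qi inc' o X e = qi inc o X e := by
  unfold qi; rw [h]

theorem exc_loops {A Z : Set E} {o : V} (hZ : ∀ e ∈ A, e ∈ Z → inc e = s(o, o)) {Y : Set V} :
    ExC inc (A \ Z) Y = ExC inc A Y := by
  ext e
  refine ⟨fun h => ⟨h.1.1, h.2⟩, fun h => ⟨⟨h.1, fun hz => ?_⟩, h.2⟩⟩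
  rcases (crs_iff (hZ e h.1 hz)).1 h.2 with h | h <;> exact h.2 h.1

theorem Loose.loops {A Z : Set E} {o t : V} (h : Loose inc A o t)
    (hZ : ∀ e ∈ A, e ∈ Z → inc e = s(o, o)) : Loose inc (A \ Z) o t := by
  intro X p hp e he
  refine h X p ⟨hp.ho, hp.ht, ?_⟩ e he.1
  have := hp.cov
  rw [exc_loops hZ] at this
  exact Sys.mono this (fun c hc e he => ⟨(this.mem c hc e he).1.1, (this.mem c hc e he).2⟩)
    (fun e he => he)

theorem Euler.loops {A Z : Set E} {o t : V} (h : Euler inc A o t)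
    (hZ : ∀ e ∈ A, e ∈ Z → inc e = s(o, o)) : Euler inc (A \ Z) o t := by
  intro Y
  rw [exc_loops hZ]; exact h Y

theorem qi_loop {o : V} {X : Set V} {e : E} (h : Ins inc X e) : qi inc o X e = s(o, o) := by
  obtain ⟨x, y, hxy⟩ := ends inc e
  obtain ⟨h1, h2⟩ := (ins_iff hxy).1 h
  simp [qi, hxy, h1, h2]

/-! preloose -/

def OUsed (inc : E → Sym2 V) (B : Set E) (o : V) (X : Set V) (p : E → List E) : Prop :=
  ∀ e ∈ B, ∀ y, y ≠ o → inc e = s(o, y) → e ∈ ExC inc B X ∨ ∃ c ∈ ExC inc B X, e ∈ p c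

def PreLoose (inc : E → Sym2 V) (B : Set E) (o t : V) : Prop :=
  ∃ X p, Wave inc B o t X p ∧ (∀ c ∈ ExC inc B X, Pth inc o (p c) (inn inc o X c)) ∧
    OUsed inc B o X p ∧ Loose (qi inc o X) B o t ∧ Euler (qi inc o X) B o t

theorem PreLoose.congr {A : Set E} {o t : V} (hw : PreLoose inc A o t)
    (h : ∀ e ∈ A, inc' e = inc e) : PreLoose inc' A o t := by
  obtain ⟨X, p, h1, h2, h3, h4, h5⟩ := hw
  refine ⟨X, p, h1.congr h, ?_, ?_, h4.congr (fun e he => qi_congr (h e he)),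
    h5.congr (fun e he => qi_congr (h e he))⟩
  · rw [exc_congr h]
    intro c hc
    rw [inn_congr (h c hc.1)]
    exact (h2 c hc).congr (fun e he => h e (h1.cov.mem c hc e he).1)
  · unfold OUsed
    rw [exc_congr h]
    intro e he y hy hey
    exact h3 e he y hy (by rw [← h e he]; exact hey)

theorem comp_pre {B : Set E} {o t : V} {X : Set V} {p : E → List E} (h1 : Wave inc B o t X p)
    (hP : ∀ c ∈ ExC inc B X, Pth inc o (p c) (inn inc o X c)) (hU : OUsed inc B o X p)
    (h2 : PreLoose (qi inc o X) B o t) : PreLoose inc B o t := by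
  obtain ⟨X2, p2, hw2, hP2, hU2, hL2, hE2⟩ := h2
  obtain ⟨p3, hw3, h4, h5, h6⟩ := comp_wave h1 hw2 hP2
  have hEx : ExC (qi inc o X) B X2 = ExC inc B (X ∪ X2) := qi_exc_in hw2.ho
  rw [qi_qi hw2.ho] at hL2 hE2
  refine ⟨X ∪ X2, p3, hw3, h6 hP, ?_, hL2, hE2⟩
  have key : ∀ d ∈ ExC inc B X, d ∈ ExC inc B (X ∪ X2) ∨ ∃ g ∈ ExC inc B (X ∪ X2), d ∈ p2 g := by
    rintro d ⟨hd, x, y, hxy, hx, hy⟩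
    have := hU2 d hd y (fun h => hy (h ▸ h1.ho)) (qi_of_crs hx hy hxy)
    rwa [hEx] at this
  intro e he y hy hey
  rcases hU e he y hy hey with h | ⟨c, hc, hec⟩
  · rcases key e h with h' | ⟨g, hg, heg⟩
    · exact Or.inl h'
    · exact Or.inr ⟨g, hg, h5 g hg e h heg e (by simp)⟩
  · rcases key c hc with h' | ⟨g, hg, heg⟩
    · exact Or.inr ⟨c, h', by rw [h4 c hc h']; exact hec⟩
    · exact Or.inr ⟨g, hg, h5 g hg c hc heg e (by simp [hec])⟩

theorem qi_single {o : V} : qi inc o {o} = inc := by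
  funext e
  obtain ⟨x, y, hxy⟩ := ends inc e
  by_cases h1 : x = o <;> by_cases h2 : y = o <;> simp [qi, hxy, h1, h2]

theorem inn_single {o : V} {c : E} : inn inc o {o} c = o := by
  have := inn_mem (inc := inc) (o := o) (X := {o}) (e := c) rfl
  simpa using this

theorem Loose.pre {A : Set E} {o t : V} (h : Loose inc A o t) (hE : Euler inc A o t)
    (hot : o ≠ t) : PreLoose inc A o t := by
  refine ⟨{o}, fun _ => [], ⟨rfl, fun h => hot h.symm, ⟨?_, by simp, by simp, by simp⟩⟩,
    ?_, ?_, ?_, ?_⟩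
  · intro c hc; rw [inn_single]; exact W.nil o
  · intro c hc; rw [inn_single]; exact Pth.nil o
  · intro e he y hy hey
    exact Or.inl ⟨he, o, y, hey, rfl, hy⟩
  · rwa [qi_single]
  · rwa [qi_single]

theorem Pth.cons_o {o w : V} {e : E} {l : List E} (h : Pth inc o (e :: l) w) :
    ∃ v, inc e = s(o, v) ∧ v ≠ o ∧ o ≠ w ∧ Pth inc v l w ∧ ∀ g ∈ l, o ∉ inc g := by
  cases h with
  | @cons _ v _ _ _ he h1 hne hav =>
    refine ⟨v, he, ?_, hne, h1, hav⟩
    rintro rfl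
    cases h1 with
    | nil => exact hne rfl
    | @cons _ _ _ e' _ he' _ _ _ => exact hav e' (by simp) (by rw [he']; simp)

theorem Wave.inn_o {A : Set E} {o t : V} {X : Set V} {p : E → List E} (hL : Loose inc A o t)
    (h : Wave inc A o t X p) : ∀ c ∈ ExC inc A X, inn inc o X c = o := by
  intro c hc
  obtain ⟨p', h', hP, -⟩ := h.prune
  have h1 := hP c hc
  have h2 := h'.cov.mem c hc
  cases hl : p' c with
  | nil => rw [hl] at h1; exact h1.toW.eq_of_nil.symm
  | cons e l =>
    rw [hl] at h1 h2
    exfalso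
    obtain ⟨v, he, hv, -, -, -⟩ := h1.cons_o
    have h3 := h2 e (by simp)
    exact hL X p h e h3.1 v (h3.2 v (by rw [he]; simp)) hv he

theorem t31b {A : Set E} {o t : V} {X : Set V} {b : E} {p : E → List E}
    (hL : Loose inc A o t) (hE : Euler inc A o t) (ho : o ∈ X) (ht : t ∉ X)
    (hp : Cover inc A o X (ExC inc A X \ {b}) p) :
    ∀ c ∈ ExC inc A X, inn inc o X c = o := by
  by_cases hb : b ∈ ExC inc A X
  · obtain ⟨q, B, hq, -, -⟩ := shift (Fz := ∅) hE ho ht hb rfl (p := p) (by simpa using hp) (by simp)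
    refine Wave.inn_o (p := q) hL ⟨ho, ht, ?_⟩
    simpa [Set.insert_eq_of_mem hb] using hq
  · rw [Set.sdiff_singleton_eq_self hb] at hp
    exact Wave.inn_o (p := p) hL ⟨ho, ht, hp⟩

theorem loose_path {A : Set E} {o t : V} (hL : Loose inc A o t) (hot : o ≠ t) {b : E} (hb : b ∈ A)
    {x : V} (hbx : inc b = s(o, x)) (hx : x ≠ o) :
    ∃ l, Pth inc x l t ∧ ∀ g ∈ l, g ∈ A ∧ o ∉ inc g := by
  by_contra hcon
  set Z : Set V := {v | Cn inc {e | e ∈ A ∧ o ∉ inc e} x v} with hZ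
  have htZ : t ∉ Z := by
    intro h
    obtain ⟨l, hl, hp⟩ := h.pth
    exact hcon ⟨l, hp, hl⟩
  have hoZ : o ∉ Z := by
    rintro ⟨l, hl, hp⟩
    have := hp.mem_of_ins (Y := {o}ᶜ) (by simpa using hx) (fun g hg v hv => by
      simp only [Set.mem_compl_iff, Set.mem_singleton_iff]
      rintro rfl
      exact (hl g hg).2 hv)
    exact this rfl
  refine hL (insert o Z) (fun _ => []) ⟨by simp, ?_, ⟨?_, by simp, by simp, by simp⟩⟩ b hb x
    (Or.inr (Cn.refl _ _)) hx hbx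
  · rintro (h | h)
    · exact hot h.symm
    · exact htZ h
  · rintro c ⟨hc, x', y, hxy, hx', hy⟩
    rw [inn_eq hxy hx' hy]
    rcases hx' with rfl | hx'
    · exact W.nil _
    · exfalso
      have hyo : y ≠ o := fun h => hy (Or.inl h)
      have hxo : x' ≠ o := fun h => hoZ (h ▸ hx')
      exact hy (Or.inr (Cn.trans hx' (Cn.edge ⟨hc, by rw [hxy]; simp [hyo.symm, hxo.symm]⟩ hxy)))

/-- shifted end of an edge -/
theorem euler_shift {A : Set E} {o t : V} (hE : Euler inc A o t) {b r : E} {x z : V}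
    [DecidableEq E] (hb : b ∈ A) (hr : r ∈ A) (hbr : b ≠ r) (hbx : inc b = s(o, x))
    (hrx : inc r = s(x, z)) :
    Euler (Function.update inc b s(o, z)) (A \ {r}) o t := by
  intro Y ho ht hfin
  set K : Set E := ExC inc (A \ {b, r}) Y with hK
  set inc1 := Function.update inc b s(o, z) with hinc1
  have h1b : inc1 b = s(o, z) := by simp [hinc1]
  have h1 : ∀ e, e ≠ b → inc1 e = inc e := fun e he => by simp [hinc1, he]
  have hbK : b ∉ K := fun h => h.1.2 (by simp)
  have hrK : r ∉ K := fun h => h.1.2 (by simp)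
  have hmem1 : ∀ e, e ∈ ExC inc1 (A \ {r}) Y ↔ e ∈ K ∨ (e = b ∧ z ∈ Y) := by
    intro e
    by_cases he : e = b
    · subst he
      simp only [hbK, false_or, true_and]
      constructor
      · intro h
        rcases (crs_iff h1b).1 h.2 with h | h
        · exact absurd h.1 ho
        · exact h.1
      · intro h
        exact ⟨⟨hb, hbr⟩, (crs_iff h1b).2 (Or.inr ⟨h, ho⟩)⟩
    · simp only [he, false_and, or_false]
      constructor
      · intro h
        exact ⟨⟨h.1.1, by simp [he, show e ≠ r from h.1.2]⟩, (crs_congr (h1 e he)).1 h.2⟩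
      · intro h
        refine ⟨⟨h.1.1, fun h' => h.1.2 (Or.inr h')⟩, (crs_congr (h1 e he)).2 h.2⟩
  have hmem : ∀ e, e ∈ ExC inc A Y ↔ e ∈ K ∨ (e = b ∧ x ∈ Y) ∨
      (e = r ∧ (x ∈ Y ∧ z ∉ Y ∨ z ∈ Y ∧ x ∉ Y)) := by
    intro e
    by_cases he : e = b
    · subst he
      simp only [hbK, false_or, true_and, hbr, false_and, or_false]
      constructor
      · intro h
        rcases (crs_iff hbx).1 h.2 with h | h
        · exact absurd h.1 ho
        · exact h.1
      · intro h
        exact ⟨hb, (crs_iff hbx).2 (Or.inr ⟨h, ho⟩)⟩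
    · by_cases her : e = r
      · subst her
        simp only [hrK, he, false_or, false_and, true_and]
        rw [← crs_iff hrx]
        exact ⟨fun h => h.2, fun h => ⟨hr, h⟩⟩
      · simp only [he, her, false_and, or_false]
        exact ⟨fun h => ⟨⟨h.1, by simp [he, her]⟩, h.2⟩, fun h => ⟨h.1.1, h.2⟩⟩
  have hKfin : K.Finite := hfin.subset (fun e he => (hmem1 e).2 (Or.inl he))
  by_cases hx : x ∈ Y <;> by_cases hz : z ∈ Y <;>
    simp only [hx, hz, and_true, and_false, or_false, not_true, not_false_eq_true, true_and,
      or_true, false_and] at hmem hmem1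
  · have e1 : ExC inc1 (A \ {r}) Y = ExC inc A Y := by ext e; rw [hmem, hmem1]
    rw [e1] at hfin ⊢; exact hE Y ho ht hfin
  · have e1 : ExC inc1 (A \ {r}) Y = K := by ext e; rw [hmem1]
    have e2 : ExC inc A Y = insert r (insert b K) := by
      ext e; rw [hmem]; simp only [Set.mem_insert_iff]; tauto
    have := hE Y ho ht (by rw [e2]; exact (hKfin.insert b).insert r)
    rw [e2, Set.ncard_insert_of_notMem (by simp [hbr.symm, hrK]) (hKfin.insert b),
      Set.ncard_insert_of_notMem hbK hKfin] at this
    rw [e1]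
    rw [Nat.even_iff] at this ⊢
    omega
  · have e1 : ExC inc1 (A \ {r}) Y = insert b K := by
      ext e; rw [hmem1]; simp only [Set.mem_insert_iff]; tauto
    have e2 : ExC inc A Y = insert r K := by
      ext e; rw [hmem]; simp only [Set.mem_insert_iff]; tauto
    have := hE Y ho ht (by rw [e2]; exact hKfin.insert r)
    rw [e2, Set.ncard_insert_of_notMem hrK hKfin] at this
    rw [e1, Set.ncard_insert_of_notMem hbK hKfin]
    exact this
  · have e1 : ExC inc1 (A \ {r}) Y = ExC inc A Y := by ext e; rw [hmem, hmem1]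
    rw [e1] at hfin ⊢; exact hE Y ho ht hfin

theorem exists_owner {D : Set E} {p : E → List E}
    (h : ∀ c ∈ D, ∀ d ∈ D, c ≠ d → ∀ e ∈ p c, e ∉ p d) (b : E) :
    ∃ c0, (∀ c ∈ D, c ≠ c0 → b ∉ p c) ∧ ((c0 ∈ D ∧ b ∈ p c0) ∨ ∀ c ∈ D, b ∉ p c) := by
  by_cases hex : ∃ c ∈ D, b ∈ p c
  · obtain ⟨c0, h1, h2⟩ := hex
    exact ⟨c0, fun c hc hne hb => h c hc c0 h1 hne b hb h2, Or.inl ⟨h1, h2⟩⟩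
  · push Not at hex
    exact ⟨b, fun c hc _ => hex c hc, Or.inr hex⟩

end LK

namespace LK
variable {V : Type u} {E : Type v} {inc inc' : E → Sym2 V}

theorem exc_inn {A : Set E} {o : V} {X : Set V} {e : E} (h : e ∈ ExC inc A X) :
    ∃ y, inc e = s(inn inc o X e, y) ∧ inn inc o X e ∈ X ∧ y ∉ X := h.2.inn

theorem claim3 {A : Set E} {o t z : V} {X : Set V} {r c0 c1 : E} {p : E → List E}
    {rest0 : List E}
    (hL : Loose inc A o t) (hE : Euler inc A o t) (ho : o ∈ X) (ht : t ∉ X)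
    (hr : r ∈ ExC inc A X) (hz : inn inc o X r = z)
    (hc0 : c0 ∈ ExC inc A X) (hc0r : c0 ≠ r)
    (hp : Cover inc A o X (ExC inc A X \ {r, c0}) p)
    (hw0 : W inc z rest0 (inn inc o X c0))
    (hf0 : ∀ e ∈ rest0, e ∈ Free {e | e ∈ A ∧ Ins inc X e} (ExC inc A X \ {r, c0}) p)
    (hc1 : c1 ∈ ExC inc A X) (hc1r : c1 ≠ r) (hc1o : inn inc o X c1 ≠ o) :
    ∃ q, Cover inc A o X (ExC inc A X \ {r, c1}) q ∧
      Cn inc (Free {e | e ∈ A ∧ Ins inc X e} (ExC inc A X \ {r, c1}) q) z (inn inc o X c1) := by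
  by_cases h01 : c1 = c0
  · subst h01
    exact ⟨p, hp, rest0, hf0, hw0⟩
  have hzX : z ∈ X := hz ▸ inn_mem ho
  set C : Set E := ExC inc A X \ {r, c0, c1} with hC
  have hCsub : ∀ e ∈ C, e ∈ ExC inc A X \ {r, c0} := by
    rintro e ⟨h1, h2⟩
    refine ⟨h1, fun h => h2 ?_⟩
    rcases h with h | h
    · exact Or.inl h
    · exact Or.inr (Or.inl h)
  have hp1 : Cover inc A o X C p := Sys.mono hp (fun c hc e he => hp.mem c (hCsub c hc) e he) hCsub
  have hins : insert c0 C = ExC inc A X \ {r, c1} := by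
    ext e
    simp only [hC, Set.mem_insert_iff, Set.mem_sdiff, Set.mem_singleton_iff, not_or]
    constructor
    · rintro (rfl | ⟨h1, h2, h3, h4⟩)
      · exact ⟨hc0, hc0r, fun h => h01 h.symm⟩
      · exact ⟨h1, h2, h4⟩
    · rintro ⟨h1, h2, h3⟩
      by_cases h : e = c0
      · exact Or.inl h
      · exact Or.inr ⟨h1, h2, h, h3⟩
  rcases augment hp1 (inn inc o X c0) with ⟨p1, hp1', hcn⟩ | ⟨Y, hvY, hY⟩
  · obtain ⟨q, hq, -⟩ := Sys.extend hp1' (b := c0) (by simp [hC]) hcn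
    rw [hins] at hq
    refine ⟨q, hq, ?_⟩
    by_contra hno
    have hq' : Cover inc (A \ {r}) o X ((ExC inc A X \ {r}) \ {c1}) q := by
      refine Sys.mono hq ?_ ?_
      · rintro c ⟨⟨h1, h2⟩, h3⟩ e he
        have := hq.mem c ⟨h1, by simp; exact ⟨h2, h3⟩⟩ e he
        exact ⟨⟨this.1, fun h => not_crs_of_ins this.2 (by rw [h]; exact hr.2)⟩, this.2⟩
      · rintro c ⟨⟨h1, h2⟩, h3⟩
        exact ⟨h1, by simp; exact ⟨h2, h3⟩⟩
    obtain ⟨q2, B, hq2, -, -⟩ := shift hE ho ht hc1 rfl hq' (by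
      rintro v' ⟨l, hl, hw⟩ ⟨f, hf, hfA, hvf⟩
      exfalso
      rw [Set.mem_singleton_iff] at hf
      subst hf
      have hvX : v' ∈ X := hw.mem_of_ins (inn_mem ho) (fun g hg => (hl g hg).1.2)
      obtain ⟨y, hy1, hy2, hy3⟩ := exc_inn (o := o) hr
      rw [hy1] at hvf
      rcases Sym2.mem_iff.1 hvf with h | h
      · apply hno
        rw [h, hz] at hw
        refine Cn.symm ⟨l, fun e he => ⟨⟨(hl e he).1.1.1, (hl e he).1.2⟩, fun c hc => ?_⟩, hw⟩
        refine (hl e he).2 c ⟨⟨hc.1, fun h => hc.2 (Or.inl h)⟩, fun h => hc.2 (Or.inr h)⟩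
      · exact hy3 (h ▸ hvX))
    refine hc1o (t31b (p := q2) (b := r) hL hE ho ht ?_ c1 hc1)
    rw [Set.insert_sdiff_singleton, Set.insert_eq_of_mem (show c1 ∈ ExC inc A X \ {r} from ⟨hc1, hc1r⟩)] at hq2
    exact Sys.mono hq2 (fun c hc e he => ⟨(hq2.mem c hc e he).1.1, (hq2.mem c hc e he).2⟩)
      (fun e he => he)
  · exfalso
    have hnc : ∀ e ∈ rest0.reverse, ¬ Crs inc Y e := by
      intro e he hc
      have := hf0 e (by simpa using he)
      obtain ⟨c, hc, hec⟩ := hY.used e this.1 hc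
      exact this.2 c (hCsub c hc) hec
    have hzY : z ∈ Y := (hw0.reverse.ins hvY hnc).1
    have hc1C : c1 ∈ ExC inc A X \ {r, c0} := ⟨hc1, by simp [hc1r, h01]⟩
    have hc1Y : inn inc o X c1 ∉ Y := by
      intro hin
      have := ((hp.walk c1 hc1C).reverse.ins hin (by
        intro e he hc
        rw [List.mem_reverse] at he
        obtain ⟨c, hc, hec⟩ := hY.used e (hp.mem c1 hc1C e he) hc
        exact hp.disj c1 hc1C c (hCsub c hc) (fun h => hc.2 (by simp [h])) e he hec)).1
      exact hY.notmem this
    obtain ⟨p', hp', -⟩ := truncate hp1 (fun c hc => hc.1) hY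
    have hnot : ∀ g, g ∈ ExC inc A X → inn inc o X g ∈ Y → g ∉ ExC inc A (X \ Y) := by
      intro g hg hgY hg'
      obtain ⟨y, hy1, hy2, hy3⟩ := exc_inn (o := o) hg
      rcases (crs_iff hy1).1 hg'.2 with h | h
      · exact h.1.2 hgY
      · exact hy3 h.1.1
    have hoXY : o ∈ X \ Y := ⟨ho, hY.notmem⟩
    have htXY : t ∉ X \ Y := fun h => ht h.1
    have hcov : Cover inc A o (X \ Y) (ExC inc A (X \ Y) \ {c1}) p' := by
      have hsub : ∀ g ∈ ExC inc A (X \ Y) \ {c1}, g ∈ {g | g ∈ ExC inc A (X \ Y) ∧ (g ∈ ExC inc A X → g ∈ C)} := by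
        rintro g ⟨hg, hg1⟩
        refine ⟨hg, fun hgX => ⟨hgX, ?_⟩⟩
        rintro (h | h | h)
        · subst h; exact hnot g hr (hz ▸ hzY) hg
        · subst h; exact hnot g hc0 hvY hg
        · exact hg1 h
      exact Sys.mono hp' (fun c hc e he => hp'.mem c (hsub c hc) e he) hsub
    obtain ⟨y, hy1, hy2, hy3⟩ := exc_inn (o := o) hc1
    have hyn : y ∉ X \ Y := fun h => hy3 h.1
    have hcX : c1 ∈ ExC inc A (X \ Y) := ⟨hc1.1, _, _, hy1, ⟨hy2, hc1Y⟩, hyn⟩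
    have := t31b hL hE hoXY htXY hcov c1 hcX
    have hiXY : inn inc o X c1 ∈ X \ Y := ⟨hy2, hc1Y⟩
    rw [inn_eq hy1 hiXY hyn] at this
    exact hc1o this

theorem loose_delete_t {A : Set E} {o t : V} {b : E} (hL : Loose inc A o t)
    (hE : Euler inc A o t) : Loose inc (A \ {b}) o t := by
  intro X p hp e he
  refine t31 (b := b) (p := p) hL hE hp.ho hp.ht ?_ e he.1
  have hsub : ∀ c ∈ ExC inc A X \ {b}, c ∈ ExC inc (A \ {b}) X := fun c hc => ⟨⟨hc.1.1, hc.2⟩, hc.1.2⟩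
  exact Sys.mono hp.cov (fun c hc e he =>
    ⟨(hp.cov.mem c (hsub c hc) e he).1.1, (hp.cov.mem c (hsub c hc) e he).2⟩) hsub

theorem euler_delete_t {A : Set E} {o t : V} {b : E} (hE : Euler inc A o t)
    (hb : inc b = s(o, t)) : Euler inc (A \ {b}) o t := by
  intro Y ho ht
  have : ExC inc (A \ {b}) Y = ExC inc A Y := by
    ext e
    refine ⟨fun h => ⟨h.1.1, h.2⟩, fun h => ⟨⟨h.1, ?_⟩, h.2⟩⟩
    rintro rfl
    rcases (crs_iff hb).1 h.2 with h | h
    · exact ho h.1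
    · exact ht h.1
  rw [this]; exact hE Y ho ht

open Classical in
theorem dstar {o t : V} (hot : o ≠ t) : ∀ (n : ℕ) (inc : E → Sym2 V) (A : Set E) (b : E) (x : V)
    (l : List E), l.length ≤ n → Loose inc A o t → Euler inc A o t → b ∈ A → inc b = s(o, x) →
    x ≠ o → Pth inc x l t → (∀ g ∈ l, g ∈ A ∧ o ∉ inc g) →
    ∃ rest, (∀ e ∈ b :: rest, e ∈ A) ∧ W inc x rest t ∧ (∀ g ∈ rest, o ∉ inc g) ∧
      PreLoose inc (A \ {e | e ∈ b :: rest}) o t := by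
  intro n
  induction n with
  | zero =>
    intro inc A b x l hn hL hE hb hbx hxo hP hl
    have : l = [] := by simpa using hn
    subst this
    have := hP.toW.eq_of_nil
    subst this
    refine ⟨[], by simpa using hb, W.nil _, by simp, ?_⟩
    have h1 : {e | e ∈ [b]} = ({b} : Set E) := by ext; simp
    rw [h1]
    exact (loose_delete_t hL hE).pre (euler_delete_t hE hbx) hot
  | succ n ih =>
    intro inc A b x l hn hL hE hb hbx hxo hP hl
    cases l with
    | nil => exact ih inc A b x [] (by simp) hL hE hb hbx hxo hP hl
    | cons r l1 =>
    obtain ⟨z, hrz, hP1⟩ : ∃ z, inc r = s(x, z) ∧ Pth inc z l1 t := by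
      cases hP with | cons he h _ _ => exact ⟨_, he, h⟩
    have hrA := (hl r (by simp)).1
    have hro := (hl r (by simp)).2
    have hbo : o ∈ inc b := by rw [hbx]; simp
    have hbr : b ≠ r := by rintro rfl; exact hro hbo
    have hzo : z ≠ o := by rintro rfl; exact hro (by rw [hrz]; simp)
    have hrl1 : r ∉ l1 := (List.nodup_cons.1 hP.nodup).1
    have hl1 : ∀ g ∈ l1, g ∈ A ∧ o ∉ inc g := fun g hg => hl g (by simp [hg])
    have hne : ∀ g, o ∉ inc g → g ≠ b := by rintro g hg rfl; exact hg hbo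
    set inc1 := Function.update inc b s(o, z) with hinc1
    have h1b : inc1 b = s(o, z) := by simp [hinc1]
    have h1 : ∀ e, e ≠ b → inc1 e = inc e := fun e he => by simp [hinc1, he]
    have hE1 : Euler inc1 (A \ {r}) o t := euler_shift hE hb hrA hbr hbx hrz
    by_cases hL1 : Loose inc1 (A \ {r}) o t
    · obtain ⟨rest, hr1, hr2, hr3, hr4⟩ := ih inc1 (A \ {r}) b z l1 (by simpa using hn) hL1 hE1
        ⟨hb, hbr⟩ h1b hzo (hP1.congr (fun e he => h1 e (hne e (hl1 e he).2))) (by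
          intro g hg
          refine ⟨⟨(hl1 g hg).1, fun h => hrl1 ?_⟩, ?_⟩
          · rw [Set.mem_singleton_iff] at h; rwa [← h]
          · rw [h1 g (hne g (hl1 g hg).2)]; exact (hl1 g hg).2)
      have hbrest : ∀ g ∈ rest, g ≠ b := by
        rintro g hg rfl; exact hr3 g hg (by rw [h1b]; simp)
      refine ⟨r :: rest, ?_, W.cons hrz (hr2.congr (fun e he => (h1 e (hbrest e he)).symm)), ?_, ?_⟩
      · intro e he
        simp only [List.mem_cons] at he
        rcases he with rfl | rfl | he
        · exact hb
        · exact hrA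
        · exact (hr1 e (by simp [he])).1
      · intro g hg
        rcases List.mem_cons.1 hg with rfl | hg
        · exact hro
        · rw [← h1 g (hbrest g hg)]; exact hr3 g hg
      · have hset : A \ {e | e ∈ b :: r :: rest} = (A \ {r}) \ {e | e ∈ b :: rest} := by
          ext e; simp; tauto
        rw [hset]
        exact hr4.congr (fun e he => (h1 e (fun h => he.2 (by simp [h]))).symm)
    unfold Loose at hL1
    push Not at hL1
    obtain ⟨X0, p0, hw0, e0, he0, x0, hx0, hx0o, hex0⟩ := hL1
    obtain ⟨X, p', hX0, hw', hLq⟩ := exists_max_wave hw0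
    obtain ⟨p, hw, hPp, -⟩ := hw'.prune
    have hxX0 : x0 ∈ X := hX0 hx0
    have ho := hw.ho
    have ht := hw.ht
    set D1 := ExC inc1 (A \ {r}) X with hD1
    have hD1mem : ∀ e, e ≠ b → e ≠ r → (e ∈ ExC inc A X ↔ e ∈ D1) := by
      intro e heb her
      rw [hD1]
      exact ⟨fun h => ⟨⟨h.1, her⟩, (crs_congr (h1 e heb)).2 h.2⟩,
        fun h => ⟨h.1.1, (crs_congr (h1 e heb)).1 h.2⟩⟩
    have build : ∀ (D : Set E), (∀ c ∈ D, c ∈ D1 ∧ inn inc o X c = inn inc1 o X c ∧ b ∉ p c) →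
        Cover inc A o X D p := by
      intro D hD
      refine ⟨fun c hc => ?_, fun c hc e he => ?_, fun c hc d hd => hw.cov.disj c (hD c hc).1 d (hD d hd).1,
        fun c hc => hw.cov.nodup c (hD c hc).1⟩
      · obtain ⟨h2, h3, h4⟩ := hD c hc
        rw [h3]
        exact (hw.cov.walk c h2).congr (fun e he => (h1 e (by rintro rfl; exact h4 he)).symm)
      · obtain ⟨h2, h3, h4⟩ := hD c hc
        have := hw.cov.mem c h2 e he
        exact ⟨this.1.1, (ins_congr (h1 e (by rintro rfl; exact h4 he))).1 this.2⟩
    obtain ⟨c0, hc0, hc0'⟩ := exists_owner (D := D1) hw.cov.disj b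
    by_cases hzX : z ∈ X
    swap
    · exfalso
      have hbn : ∀ c ∈ D1, b ∉ p c := by
        intro c hc hbc
        exact hzX ((hw.cov.mem c hc b hbc).2 z (by rw [h1b]; simp))
      by_cases hxX : x ∈ X
      · refine t31 (b := r) (p := p) hL hE ho ht (build _ ?_) b hb x hxX hxo hbx
        rintro c ⟨hc, hcr⟩
        have hcb : c ≠ b := by
          rintro rfl
          exact not_crs_of_ins ((ins_iff hbx).2 ⟨ho, hxX⟩) hc.2
        have := (hD1mem c hcb hcr).1 hc
        exact ⟨this, (inn_congr (h1 c hcb)).symm, hbn c this⟩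
      · have he0b : e0 ≠ b := by
          rintro rfl
          rw [h1b] at hex0
          have := Sym2.congr_right.mp hex0
          exact hzX (this ▸ hxX0)
        refine hL X p ⟨ho, ht, build _ ?_⟩ e0 he0.1 x0 hxX0 hx0o (by rw [← h1 e0 he0b]; exact hex0)
        intro c hc
        have hcr : c ≠ r := by
          rintro rfl
          rcases (crs_iff hrz).1 hc.2 with h | h
          · exact hxX h.1
          · exact hzX h.1
        by_cases hcb : c = b
        · subst hcb
          have hcD : c ∈ D1 := ⟨⟨hb, hbr⟩, o, z, h1b, ho, hzX⟩
          exact ⟨hcD, by rw [inn_eq hbx ho hxX, inn_eq h1b ho hzX], hbn c hcD⟩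
        · have := (hD1mem c hcb hcr).1 hc
          exact ⟨this, (inn_congr (h1 c hcb)).symm, hbn c this⟩
    have hbIns1 : Ins inc1 X b := (ins_iff h1b).2 ⟨ho, hzX⟩
    have hbD1 : b ∉ D1 := fun h => not_crs_of_ins hbIns1 h.2
    by_cases hxX : x ∈ X
    · exfalso
      refine t31 (b := c0) (p := p) hL hE ho ht (build _ ?_) b hb x hxX hxo hbx
      rintro c ⟨hc, hcc0⟩
      have hcb : c ≠ b := by
        rintro rfl
        exact not_crs_of_ins ((ins_iff hbx).2 ⟨ho, hxX⟩) hc.2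
      have hcr : c ≠ r := by
        rintro rfl
        exact not_crs_of_ins ((ins_iff hrz).2 ⟨hxX, hzX⟩) hc.2
      have := (hD1mem c hcb hcr).1 hc
      exact ⟨this, (inn_congr (h1 c hcb)).symm, hc0 c this hcc0⟩
    -- case iv
    have hbX : b ∈ ExC inc A X := ⟨hb, o, x, hbx, ho, hxX⟩
    have hrz' : inc r = s(z, x) := by rw [hrz, Sym2.eq_swap]
    have hrX : r ∈ ExC inc A X := ⟨hrA, z, x, hrz', hzX, hxX⟩
    have hinnr : inn inc o X r = z := inn_eq hrz' hzX hxX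
    have hinnb : inn inc o X b = o := inn_eq hbx ho hxX
    set pm := Function.update p b [] with hpm
    have hpmb : pm b = [] := by simp [hpm]
    have hpmn : ∀ c, c ≠ b → pm c = p c := fun c hc => by simp [hpm, hc]
    have build2 : ∀ (D : Set E), (∀ c ∈ D, c ≠ b → c ∈ D1 ∧ b ∉ p c) →
        Cover inc A o X D pm := by
      intro D hD
      have h2 : Cover inc A o X (D \ {b}) p :=
        build _ (fun c hc => ⟨(hD c hc.1 hc.2).1, (inn_congr (h1 c hc.2)).symm, (hD c hc.1 hc.2).2⟩)
      refine ⟨fun c hc => ?_, fun c hc e he => ?_, fun c hc d hd hcd e he => ?_, fun c hc => ?_⟩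
      · by_cases hcb : c = b
        · subst hcb; rw [hpmb, hinnb]; exact W.nil _
        · rw [hpmn c hcb]; exact h2.walk c ⟨hc, hcb⟩
      · by_cases hcb : c = b
        · subst hcb; rw [hpmb] at he; simp at he
        · rw [hpmn c hcb] at he; exact h2.mem c ⟨hc, hcb⟩ e he
      · by_cases hcb : c = b
        · subst hcb; rw [hpmb] at he; simp at he
        · rw [hpmn c hcb] at he
          by_cases hdb : d = b
          · subst hdb; rw [hpmb]; simp
          · rw [hpmn d hdb]; exact h2.disj c ⟨hc, hcb⟩ d ⟨hd, hdb⟩ hcd e he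
      · by_cases hcb : c = b
        · subst hcb; rw [hpmb]; simp
        · rw [hpmn c hcb]; exact h2.nodup c ⟨hc, hcb⟩
    rcases hc0' with ⟨hc0D, hbc0⟩ | hnone
    swap
    · exfalso
      have hcov : Cover inc A o X (ExC inc A X \ {r}) pm := build2 _ (by
        rintro c ⟨hc, hcr⟩ hcb
        have := (hD1mem c hcb hcr).1 hc
        exact ⟨this, hnone c this⟩)
      have := t31b hL hE ho ht hcov r hrX
      rw [hinnr] at this
      exact hzo this
    have hc0b : c0 ≠ b := fun h => hbD1 (h ▸ hc0D)
    have hc0r : c0 ≠ r := fun h => hc0D.1.2 h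
    have hc0X : c0 ∈ ExC inc A X := (hD1mem c0 hc0b hc0r).2 hc0D
    obtain ⟨rest0, hrest0, hwr0⟩ : ∃ rest0, p c0 = b :: rest0 ∧ W inc1 z rest0 (inn inc1 o X c0) := by
      have hh := hPp c0 hc0D
      cases hpc : p c0 with
      | nil => rw [hpc] at hbc0; simp at hbc0
      | cons a l' =>
        rw [hpc] at hh hbc0
        obtain ⟨v, ha1, ha2, ha3, ha4, ha5⟩ := hh.cons_o
        have hab : a = b := by
          rcases List.mem_cons.1 hbc0 with h | h
          · exact h.symm
          · exact absurd (by rw [h1b]; simp) (ha5 b h)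
        subst hab
        have : v = z := other_eq ha1 h1b
        subst this
        exact ⟨l', rfl, ha4.toW⟩
    have hbrest0 : b ∉ rest0 := by
      have := hw.cov.nodup c0 hc0D
      rw [hrest0] at this
      exact (List.nodup_cons.1 this).1
    have hwr : W inc z rest0 (inn inc o X c0) := by
      rw [← inn_congr (h1 c0 hc0b)]
      exact hwr0.congr (fun e he => (h1 e (by rintro rfl; exact hbrest0 he)).symm)
    have hcovm : Cover inc A o X (ExC inc A X \ {r, c0}) pm := build2 _ (by
      rintro c ⟨hc, hcr⟩ hcb
      simp only [Set.mem_insert_iff, Set.mem_singleton_iff, not_or] at hcr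
      have := (hD1mem c hcb hcr.1).1 hc
      exact ⟨this, hc0 c this hcr.2⟩)
    have hfree : ∀ e ∈ rest0, e ∈ Free {e | e ∈ A ∧ Ins inc X e} (ExC inc A X \ {r, c0}) pm := by
      intro e he
      have heb : e ≠ b := by rintro rfl; exact hbrest0 he
      have hep : e ∈ p c0 := by rw [hrest0]; simp [he]
      have := hw.cov.mem c0 hc0D e hep
      refine ⟨⟨this.1.1, (ins_congr (h1 e heb)).1 this.2⟩, ?_⟩
      rintro c ⟨hc, hcr⟩
      simp only [Set.mem_insert_iff, Set.mem_singleton_iff, not_or] at hcr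
      by_cases hcb : c = b
      · subst hcb; rw [hpmb]; simp
      · rw [hpmn c hcb]
        exact hw.cov.disj c0 hc0D c ((hD1mem c hcb hcr.1).1 hc) (fun h => hcr.2 h.symm) e hep
    obtain ⟨a, c1, rest, x1, y1, hl1eq, hwa, hc1i, hx1, hy1, hwrest, hrestI⟩ :=
      hP1.toW.last_exit hzX ht
    have hc1l : c1 ∈ l1 := by rw [hl1eq]; simp
    have hc1A := (hl1 c1 hc1l).1
    have hc1o := (hl1 c1 hc1l).2
    have hc1X : c1 ∈ ExC inc A X := ⟨hc1A, x1, y1, hc1i, hx1, hy1⟩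
    have hc1r : c1 ≠ r := by rintro rfl; exact hrl1 hc1l
    have hc1b : c1 ≠ b := hne c1 hc1o
    have hinn1 : inn inc o X c1 = x1 := inn_eq hc1i hx1 hy1
    have hx1o : x1 ≠ o := by rintro rfl; exact hc1o (by rw [hc1i]; simp)
    obtain ⟨q0, hq0, g0, hg0, hwg0⟩ := claim3 hL hE ho ht hrX hinnr hc0X hc0r hcovm hwr hfree
      hc1X hc1r (by rw [hinn1]; exact hx1o)
    rw [hinn1] at hwg0
    obtain ⟨q, hq, hqP, hqs⟩ := prune hq0.walk hq0.mem hq0.disj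
    have hq' : Cover inc A o X (ExC inc A X \ {r, c1}) q := hq
    have hg0q : ∀ e ∈ g0, ∀ c ∈ ExC inc A X \ {r, c1}, e ∉ q c :=
      fun e he c hc h => (hg0 e he).2 c hc (hqs c hc e h)
    have hg0o : ∀ e ∈ g0, o ∉ inc e := by
      have := (hwg0.ins (Y := {o}ᶜ) (by simpa using hzo) (by
        rintro g hg ⟨u, w, huw, hu, hw⟩
        simp only [Set.mem_compl_iff, Set.mem_singleton_iff, not_not] at hu hw
        subst hw
        have hh := hg0 g hg
        obtain ⟨c, hc, hgc⟩ := t32 hL hE ho ht hq' hh.1.1 (x := u)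
          (hh.1.2 u (by rw [huw]; simp)) hu (by rw [huw, Sym2.eq_swap])
        exact hg0q g hg c hc hgc)).2
      intro e he hoe
      exact this e he o hoe rfl
    have hg0I : ∀ e ∈ g0, Ins inc X e := fun e he => (hg0 e he).1.2
    have hInsOut : ∀ e, Ins inc X e → Ins inc Xᶜ e → False := by
      intro e h2 h3
      obtain ⟨u, w, huw⟩ := ends inc e
      exact h3 u (by rw [huw]; simp) (h2 u (by rw [huw]; simp))
    set A' : Set E := A \ {e | e = b ∨ e = r ∨ e ∈ g0} with hA'
    have hset1 : (A \ {r}) \ {e | e = b ∨ e ∈ g0} = A' := by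
      ext e; simp [hA']; tauto
    have hloops : ∀ e ∈ A \ {r}, e ∈ {e | e = b ∨ e ∈ g0} → qi inc1 o X e = s(o, o) := by
      rintro e - (rfl | he)
      · exact qi_loop hbIns1
      · exact qi_loop ((ins_congr (h1 e (hne e (hg0o e he)))).2 (hg0I e he))
    have hcong : ∀ e ∈ A', qi inc o X e = qi inc1 o X e :=
      fun e he => qi_congr (h1 e (fun h => he.2 (Or.inl h))).symm
    have hLA' : Loose (qi inc o X) A' o t := by
      have := hLq.loops hloops
      rw [hset1] at this
      exact this.congr hcong
    have hEA' : Euler (qi inc o X) A' o t := by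
      have := (hE1.qi X).loops hloops
      rw [hset1] at this
      exact this.congr hcong
    have hcrg0 : ∀ e ∈ g0, e ∉ ExC inc A X := fun e he h => not_crs_of_ins (hg0I e he) h.2
    have hPrest : Pth inc y1 rest t := by
      refine Pth.suffix (a := a ++ [c1]) (u := z) ?_ (hwa.append (W.single hc1i))
      rw [List.append_assoc]
      simpa [hl1eq] using hP1
    obtain ⟨rest', hr1, hr2, hr3, hr4⟩ := ih (qi inc o X) A' c1 y1 rest (by
        have : l1.length ≤ n := by simpa using hn
        rw [hl1eq] at this
        simp at this; omega) hLA' hEA'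
      ⟨hc1A, by rintro (h | h | h); exacts [hc1b h, hc1r h, hcrg0 c1 h hc1X]⟩
      (qi_of_crs hx1 hy1 hc1i) (by rintro rfl; exact hy1 ho)
      (hPrest.congr (fun e he => qi_eq_of_out (hrestI e he))) (by
        intro g hg
        have hgl : g ∈ l1 := by rw [hl1eq]; simp [hg]
        refine ⟨⟨(hl1 g hgl).1, ?_⟩, (qi_avoid ho).2 (hrestI g hg)⟩
        rintro (h | h | h)
        · exact hne g (hl1 g hgl).2 h
        · subst h; exact hrl1 hgl
        · exact hInsOut g (hg0I g h) (hrestI g hg))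
    have hr3' : ∀ g ∈ rest', Ins inc Xᶜ g := fun g hg => (qi_avoid ho).1 (hr3 g hg)
    have hwr' : W inc y1 rest' t := hr2.congr (fun e he => (qi_eq_of_out (hr3' e he)).symm)
    refine ⟨r :: (g0 ++ c1 :: rest'), ?_, W.cons hrz (hwg0.append (W.cons hc1i hwr')), ?_, ?_⟩
    · intro e he
      simp only [List.mem_cons, List.mem_append] at he
      rcases he with rfl | rfl | he | rfl | he
      · exact hb
      · exact hrA
      · exact (hg0 e he).1.1
      · exact hc1A
      · exact (hr1 e (by simp [he])).1
    · intro e he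
      simp only [List.mem_cons, List.mem_append] at he
      rcases he with rfl | he | rfl | he
      · exact hro
      · exact hg0o e he
      · exact hc1o
      · intro h; exact hr3' e he o h ho
    have hset2 : A \ {e | e ∈ b :: r :: (g0 ++ c1 :: rest')} = A' \ {e | e ∈ c1 :: rest'} := by
      ext e; simp [hA']; tauto
    rw [hset2]
    set B' := A' \ {e | e ∈ c1 :: rest'} with hB'
    have hsub : ∀ c ∈ ExC inc B' X, c ∈ ExC inc A X \ {r, c1} := by
      rintro c ⟨⟨⟨h2, h3⟩, h4⟩, h5⟩
      refine ⟨⟨h2, h5⟩, ?_⟩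
      rintro (h | h)
      · exact h3 (Or.inr (Or.inl h))
      · exact h4 (by rw [h]; simp)
    have hsub2 : ∀ c ∈ ExC inc A X \ {r, c1}, c ≠ b → c ∈ ExC inc B' X := by
      rintro c ⟨h2, h3⟩ h4
      simp only [Set.mem_insert_iff, Set.mem_singleton_iff, not_or] at h3
      refine ⟨⟨⟨h2.1, ?_⟩, ?_⟩, h2.2⟩
      · rintro (h | h | h)
        exacts [h4 h, h3.1 h, hcrg0 c h h2]
      · intro h
        rcases List.mem_cons.1 h with h | h
        · exact h3.2 h
        · obtain ⟨u, w, huw, hu, hw⟩ := h2.2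
          exact hr3' c h u (by rw [huw]; simp) hu
    have hqB : ∀ c ∈ ExC inc A X \ {r, c1}, ∀ e ∈ q c, e ∈ B' := by
      intro c hc e he
      have hh := hq.mem c hc e he
      refine ⟨⟨hh.1, ?_⟩, ?_⟩
      · rintro (h | h | h)
        · subst h; exact not_crs_of_ins hh.2 hbX.2
        · subst h; exact not_crs_of_ins hh.2 hrX.2
        · exact hg0q e h c hc he
      · intro h
        rcases List.mem_cons.1 h with h | h
        · subst h; exact not_crs_of_ins hh.2 hc1X.2
        · exact hInsOut e hh.2 (hr3' e h)
    refine comp_pre (X := X) (p := q) ⟨ho, ht, Sys.mono hq (fun c hc e he =>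
      ⟨hqB c (hsub c hc) e he, (hq.mem c (hsub c hc) e he).2⟩) hsub⟩
      (fun c hc => hqP c (hsub c hc)) ?_ hr4
    intro e he y hy hey
    by_cases hyX : y ∈ X
    · obtain ⟨c, hc, hec⟩ := t32 hL hE ho ht hq' he.1.1 hyX hy hey
      refine Or.inr ⟨c, hsub2 c hc ?_, hec⟩
      rintro rfl
      have := hqP c hc
      rw [hinnb] at this
      rw [this.self] at hec
      simp at hec
    · exact Or.inl ⟨he, o, y, hey, ho, hyX⟩

end LK

namespace LK
variable {V : Type u} {E : Type v} {inc inc' : E → Sym2 V}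

theorem dss {o t : V} (hot : o ≠ t) {B : Set E} {e : E} {y : V} (hB : PreLoose inc B o t)
    (he : e ∈ B) (hey : inc e = s(o, y)) (hy : y ≠ o) :
    ∃ l, (∀ g ∈ e :: l, g ∈ B) ∧ W inc y l t ∧ (∀ g ∈ l, o ∉ inc g) ∧
      PreLoose inc (B \ {g | g ∈ e :: l}) o t := by
  obtain ⟨X, p, hw, hP, hU, hL, hE⟩ := hB
  have ho := hw.ho
  obtain ⟨c, hc, l2, z, hl2, hw2, hl2o, hcz, hz⟩ : ∃ c ∈ ExC inc B X, ∃ l2 z, p c ++ [c] = e :: l2 ∧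
      W inc y l2 z ∧ (∀ g ∈ l2, o ∉ inc g) ∧ inc c = s(inn inc o X c, z) ∧ z ∉ X := by
    rcases hU e he y hy hey with h | ⟨c, hc, hec⟩
    · have hyX : y ∉ X := by
        intro hyX
        exact not_crs_of_ins ((ins_iff hey).2 ⟨ho, hyX⟩) h.2
      have hi : inn inc o X e = o := inn_eq hey ho hyX
      refine ⟨e, h, [], y, ?_, W.nil _, by simp, by rw [hi]; exact hey, hyX⟩
      have := hP e h
      rw [hi] at this
      rw [this.self]; rfl
    · have hh := hP c hc
      obtain ⟨z, hz1, hz2, hz3⟩ := exc_inn (o := o) hc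
      cases hpc : p c with
      | nil => rw [hpc] at hec; simp at hec
      | cons a l' =>
        rw [hpc] at hh hec
        obtain ⟨v, ha1, ha2, ha3, ha4, ha5⟩ := hh.cons_o
        have hab : a = e := by
          rcases List.mem_cons.1 hec with h | h
          · exact h.symm
          · exact absurd (by rw [hey]; simp) (ha5 e h)
        subst hab
        have : v = y := other_eq ha1 hey
        subst this
        refine ⟨c, hc, l' ++ [c], z, by simp [hpc], ha4.toW.append (W.single hz1), ?_, hz1, hz3⟩
        intro g hg
        rcases List.mem_append.1 hg with hg | hg
        · exact ha5 g hg
        · rw [List.mem_singleton] at hg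
          subst hg
          rw [hz1]
          simp only [Sym2.mem_iff, not_or]
          exact ⟨ha3, fun h => hz3 (h ▸ ho)⟩
  have hpI : ∀ g ∈ p c, Ins inc X g := fun g hg => (hw.cov.mem c hc g hg).2
  have hloop : ∀ g ∈ B, g ∈ {g | g ∈ p c} → qi inc o X g = s(o, o) :=
    fun g _ hg => qi_loop (hpI g hg)
  have hL2 := hL.loops hloop
  have hE2 := hE.loops hloop
  have hcp : ∀ d ∈ ExC inc B X, d ∉ p c := fun d hd h => not_crs_of_ins (hpI d h) hd.2
  have hqc : qi inc o X c = s(o, z) := qi_of_crs (inn_mem ho) hz hcz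
  have hzo : z ≠ o := by rintro rfl; exact hz ho
  have hcB : c ∈ B \ {g | g ∈ p c} := ⟨hc.1, hcp c hc⟩
  obtain ⟨l, hl, hlA⟩ := loose_path hL2 hot hcB hqc hzo
  obtain ⟨rest, hr1, hr2, hr3, hr4⟩ := dstar hot l.length (qi inc o X) _ c z l le_rfl hL2 hE2 hcB hqc
    hzo hl hlA
  have hr3' : ∀ g ∈ rest, Ins inc Xᶜ g := fun g hg => (qi_avoid ho).1 (hr3 g hg)
  have hwr' : W inc z rest t := hr2.congr (fun e he => (qi_eq_of_out (hr3' e he)).symm)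
  have hmem : ∀ g, g ∈ e :: (l2 ++ rest) ↔ g ∈ p c ∨ g ∈ c :: rest := by
    intro g
    rw [← List.cons_append, ← hl2]
    simp
  refine ⟨l2 ++ rest, ?_, hw2.append hwr', ?_, ?_⟩
  · intro g hg
    rcases (hmem g).1 hg with h | h
    · exact (hw.cov.mem c hc g h).1
    · exact (hr1 g h).1
  · intro g hg
    rcases List.mem_append.1 hg with h | h
    · exact hl2o g h
    · intro h'; exact hr3' g h o h' ho
  have hset : B \ {g | g ∈ e :: (l2 ++ rest)} = (B \ {g | g ∈ p c}) \ {g | g ∈ c :: rest} := by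
    ext g
    simp only [Set.mem_sdiff, Set.mem_ofPred_eq, hmem]
    tauto
  rw [hset]
  set B' := (B \ {g | g ∈ p c}) \ {g | g ∈ c :: rest} with hB'
  have hsub : ∀ d ∈ ExC inc B' X, d ∈ ExC inc B X := fun d hd => ⟨hd.1.1.1, hd.2⟩
  have hsub2 : ∀ d ∈ ExC inc B' X, d ≠ c := by
    rintro d hd rfl; exact hd.1.2 (by simp)
  have hsub3 : ∀ d ∈ ExC inc B X, d ≠ c → d ∈ ExC inc B' X := by
    intro d hd hdc
    refine ⟨⟨⟨hd.1, hcp d hd⟩, ?_⟩, hd.2⟩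
    intro h
    rcases List.mem_cons.1 h with h | h
    · exact hdc h
    · obtain ⟨u, w, huw, hu, hw⟩ := hd.2
      exact hr3' d h u (by rw [huw]; simp) hu
  refine comp_pre (X := X) (p := p) ⟨ho, hw.ht, Sys.mono hw.cov (fun d hd g hg => ?_) hsub⟩
    (fun d hd => hP d (hsub d hd)) ?_ hr4
  · have hh := hw.cov.mem d (hsub d hd) g hg
    refine ⟨⟨⟨hh.1, hw.cov.disj d (hsub d hd) c hc (hsub2 d hd) g hg⟩, ?_⟩, hh.2⟩
    intro h
    rcases List.mem_cons.1 h with h | h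
    · subst h; exact not_crs_of_ins hh.2 hc.2
    · obtain ⟨u, w, huw⟩ := ends inc g
      exact hr3' g h u (by rw [huw]; simp) (hh.2 u (by rw [huw]; simp))
  · intro g hg y' hy' hgy
    rcases hU g hg.1.1 y' hy' hgy with h | ⟨d, hd, hgd⟩
    · exact Or.inl ⟨hg, h.2⟩
    · exact Or.inr ⟨d, hsub3 d hd (by rintro rfl; exact hg.1.2 hgd), hgd⟩

/-- nonloop edge at `o` -/
def OE (inc : E → Sym2 V) (o : V) (e : E) : Prop := ∃ y, y ≠ o ∧ inc e = s(o, y)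

def Lk (inc : E → Sym2 V) (o t : V) (e : E) (l : List E) : Prop :=
  ∃ y, inc e = s(o, y) ∧ y ≠ o ∧ W inc y l t ∧ ∀ g ∈ l, o ∉ inc g

def Linked (inc : E → Sym2 V) (o t : V) (F : Set E) : Prop :=
  ∃ L : E → List E, (∀ e ∈ F, OE inc o e → Lk inc o t e (L e) ∧ ∀ g ∈ L e, g ∈ F) ∧
    ∀ e ∈ F, ∀ e' ∈ F, OE inc o e → OE inc o e' → e ≠ e' → ∀ g ∈ L e, g ∉ L e'

def Junk (inc : E → Sym2 V) (B : Set E) (o : V) (g : E) : Prop := ∀ v ∈ inc g, ¬ Cn inc B v o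

/-- the closing statement -/
def PP (V : Type u) (E : Type v) (μ : Cardinal.{v}) : Prop :=
  ∀ (inc : E → Sym2 V) (o t : V), o ≠ t → ∀ A D : Set E, ∀ Φ : E → Set E,
    Loose inc A o t → Euler inc A o t → D ⊆ A → Cardinal.mk D ≤ μ →
    (∀ e, Cardinal.mk (Φ e) ≤ μ) →
    ∃ F, F ⊆ A ∧ Cardinal.mk F ≤ μ ∧ Linked inc o t F ∧
      (∀ g ∈ D, g ∈ F ∨ Junk inc (A \ F) o g) ∧
      ∀ e ∈ F, ∀ g ∈ Φ e, g ∈ A → g ∈ F ∨ Junk inc (A \ F) o g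

/-- closure of a set -/
def ClN (Φ : E → Set E) (S : Set E) : ℕ → Set E
  | 0 => S
  | n + 1 => ClN Φ S n ∪ ⋃ e ∈ ClN Φ S n, Φ e

def Cl (Φ : E → Set E) (S : Set E) : Set E := ⋃ n, ClN Φ S n

theorem subset_cl {Φ : E → Set E} {S : Set E} : S ⊆ Cl Φ S := Set.subset_iUnion (ClN Φ S) 0

theorem cl_closed {Φ : E → Set E} {S : Set E} {e g : E} (he : e ∈ Cl Φ S) (hg : g ∈ Φ e) :
    g ∈ Cl Φ S := by
  obtain ⟨n, hn⟩ := Set.mem_iUnion.1 he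
  exact Set.mem_iUnion.2 ⟨n + 1, Or.inr (Set.mem_biUnion hn hg)⟩

theorem cl_sub {Φ : E → Set E} {S A : Set E} (hS : S ⊆ A) (h : ∀ e ∈ A, Φ e ⊆ A) : Cl Φ S ⊆ A := by
  refine Set.iUnion_subset fun n => ?_
  induction n with
  | zero => exact hS
  | succ n ih => exact Set.union_subset ih (Set.iUnion₂_subset fun e he => h e (ih he))

open Cardinal in
theorem card_union_le {μ : Cardinal.{v}} (hμ : ℵ₀ ≤ μ) {S T : Set E} (hS : #S ≤ μ) (hT : #T ≤ μ) :
    #(S ∪ T : Set E) ≤ μ :=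
  (mk_union_le S T).trans (Cardinal.add_le_of_le hμ hS hT)

open Cardinal in
theorem card_biUnion_le {ι : Type v} {μ : Cardinal.{v}} (hμ : ℵ₀ ≤ μ) {S : Set ι} {Φ : ι → Set E}
    (hS : #S ≤ μ) (h : ∀ e ∈ S, #(Φ e) ≤ μ) : #(⋃ e ∈ S, Φ e : Set E) ≤ μ := by
  refine (mk_biUnion_le Φ S).trans ?_
  refine Cardinal.mul_le_of_le hμ hS ?_
  exact ciSup_le' fun i => h i.1 i.2

open Cardinal in
theorem card_cl {μ : Cardinal.{v}} (hμ : ℵ₀ ≤ μ) {S : Set E} {Φ : E → Set E} (hS : #S ≤ μ)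
    (h : ∀ e, #(Φ e) ≤ μ) : #(Cl Φ S) ≤ μ := by
  have h1 : ∀ n, #(ClN Φ S n) ≤ μ := by
    intro n
    induction n with
    | zero => exact hS
    | succ n ih => exact card_union_le hμ ih (card_biUnion_le hμ ih (fun e _ => h e))
  have := card_biUnion_le (ι := ULift.{v} ℕ) (S := Set.univ) (Φ := fun n => ClN Φ S n.down) hμ
    (by simpa using hμ) (fun n _ => h1 n.down)
  refine (Cardinal.mk_le_mk_of_subset ?_).trans this
  intro e he
  obtain ⟨n, hn⟩ := Set.mem_iUnion.1 he
  exact Set.mem_biUnion (Set.mem_univ (ULift.up n)) hn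

/-- dovetailing recursion -/
theorem dovetail {S : Type*} {T : Type*} (s0 : S) (step : S → T → S) (en : S → ℕ → T) :
    ∃ s : ℕ → S, s 0 = s0 ∧ ∀ k, s (k + 1) = step (s k) (en (s (Nat.unpair k).1) (Nat.unpair k).2) := by
  classical
  let σ : ℕ → ℕ → S := fun k => Nat.rec (fun _ => s0) (fun k τ => Function.update τ (k + 1)
    (step (τ k) (en (τ (Nat.unpair k).1) (Nat.unpair k).2))) k
  have hσ : ∀ k, σ (k + 1) = Function.update (σ k) (k + 1)
    (step (σ k k) (en (σ k (Nat.unpair k).1) (Nat.unpair k).2)) := fun k => rfl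
  have key : ∀ k i, i ≤ k → σ k i = σ i i := by
    intro k
    induction k with
    | zero => intro i hi; obtain rfl : i = 0 := by omega
              rfl
    | succ k ih =>
      intro i hi
      by_cases h : i = k + 1
      · subst h; rfl
      · rw [hσ, Function.update_of_ne h, ih i (by omega)]
  refine ⟨fun k => σ k k, rfl, fun k => ?_⟩
  simp only
  rw [hσ, Function.update_self, key k _ (Nat.unpair_left_le k)]

end LK

namespace LK
variable {V : Type u} {E : Type v} {inc inc' : E → Sym2 V}

theorem cover_enum [Nonempty E] {S : Set E} (h : S.Countable) : ∃ f : ℕ → E, ∀ e ∈ S, ∃ n, f n = e := by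
  by_cases hS : S.Nonempty
  · obtain ⟨f, hf⟩ := h.exists_eq_range hS
    exact ⟨f, fun e he => by rw [hf] at he; exact he⟩
  · rw [Set.not_nonempty_iff_eq_empty] at hS
    exact ⟨fun _ => Classical.arbitrary E, by simp [hS]⟩

open Cardinal in
theorem pp_aleph0 : PP V E ℵ₀ := by
  classical
  intro inc o t hot A D Φ hL hE hDA hD hΦ
  rcases isEmpty_or_nonempty E with hem | hne
  · exact ⟨∅, by simp, by simp, ⟨fun _ => [], by simp, by simp⟩, fun g => (hem.false g).elim, by simp⟩
  let Ψ : E → Set E := fun e => Φ e ∩ A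
  have hΨ : ∀ e, #(Ψ e) ≤ ℵ₀ := fun e => (mk_le_mk_of_subset Set.inter_subset_left).trans (hΦ e)
  let S := {B : Set E // PreLoose inc B o t ∧ B ⊆ A ∧ (A \ B).Countable}
  have hstep : ∀ (B : S) (e : E), ∃ (B' : S) (l : List E), B'.1 ⊆ B.1 ∧
      (e ∈ B.1 → OE inc o e → Lk inc o t e l ∧ B'.1 = B.1 \ {g | g ∈ e :: l} ∧ ∀ g ∈ e :: l, g ∈ B.1) ∧
      (¬ (e ∈ B.1 ∧ OE inc o e) → B' = B) := by
    rintro ⟨B, hB1, hB2, hB3⟩ e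
    by_cases h : e ∈ B ∧ OE inc o e
    · obtain ⟨he, y, hy, hey⟩ := h
      obtain ⟨l, h1, h2, h3, h4⟩ := dss hot hB1 he hey hy
      refine ⟨⟨B \ {g | g ∈ e :: l}, h4, Set.sdiff_subset.trans hB2, ?_⟩, l, Set.sdiff_subset,
        fun _ _ => ⟨⟨y, hey, hy, h2, h3⟩, rfl, h1⟩, fun h => absurd ⟨he, y, hy, hey⟩ h⟩
      refine (hB3.union (List.finite_toSet (e :: l)).countable).mono ?_
      rintro g ⟨hg1, hg2⟩
      by_cases hgB : g ∈ B
      · exact Or.inr (by by_contra h; exact hg2 ⟨hgB, h⟩)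
      · exact Or.inl ⟨hg1, hgB⟩
    · exact ⟨⟨B, hB1, hB2, hB3⟩, [], subset_rfl, fun h1 h2 => absurd ⟨h1, h2⟩ h, fun _ => rfl⟩
  choose step lnk hs1 hs2 hs3 using hstep
  let C : S → Set E := fun B => Cl Ψ (D ∪ (A \ B.1))
  have hCc : ∀ B, (C B).Countable := by
    intro B
    rw [← Cardinal.le_aleph0_iff_set_countable]
    exact card_cl le_rfl (card_union_le le_rfl hD
      (Cardinal.le_aleph0_iff_set_countable.2 B.2.2.2)) hΨ
  choose en hen using fun B => cover_enum (hCc B)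
  obtain ⟨s, hs0, hsk⟩ := dovetail (S := S) (T := E) ⟨A, hL.pre hE hot, subset_rfl, by simp⟩ step en
  have hanti : ∀ i j, i ≤ j → (s j).1 ⊆ (s i).1 := by
    intro i j hij
    induction hij with
    | refl => exact subset_rfl
    | step _ ih => refine Set.Subset.trans ?_ ih; rw [hsk]; exact hs1 _ _
  -- what is removed at stage k
  have hrem : ∀ k e, OE inc o e → e ∈ (s k).1 → e ∉ (s (k + 1)).1 →
      Lk inc o t e (lnk (s k) e) ∧ (s (k + 1)).1 = (s k).1 \ {g | g ∈ e :: lnk (s k) e} ∧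
      ∀ g ∈ e :: lnk (s k) e, g ∈ (s k).1 := by
    intro k e heo hek hek1
    rw [hsk] at hek1 ⊢
    set e' := en (s (Nat.unpair k).1) (Nat.unpair k).2 with he'
    by_cases h : e' ∈ (s k).1 ∧ OE inc o e'
    · obtain ⟨h1, h2, h3⟩ := hs2 (s k) e' h.1 h.2
      have hee : e = e' := by
        by_contra hne
        apply hek1
        rw [h2]
        refine ⟨hek, fun hm => ?_⟩
        rcases List.mem_cons.1 hm with hm | hm
        · exact hne hm
        · obtain ⟨y, hy, hey⟩ := heo
          obtain ⟨-, -, -, -, hh⟩ := h1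
          exact hh e hm (by rw [hey]; simp)
      rw [hee]
      exact ⟨h1, h2, h3⟩
    · rw [hs3 (s k) e' h] at hek1
      exact absurd hek hek1
  have hs0A : (s 0).1 = A := by rw [hs0]
  -- leaving stage
  have hleave : ∀ e ∈ A, (∃ k, e ∉ (s k).1) → ∃ k, e ∈ (s k).1 ∧ e ∉ (s (k + 1)).1 := by
    rintro e heA ⟨k, hk⟩
    induction k with
    | zero => rw [hs0A] at hk; exact absurd heA hk
    | succ k ih =>
      by_cases h : e ∈ (s k).1
      · exact ⟨k, h, hk⟩
      · exact ih h
  set F : Set E := ⋃ k, C (s k) with hF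
  have hCA : ∀ B, C B ⊆ A := fun B => cl_sub (Set.union_subset hDA Set.sdiff_subset)
    (fun e _ => Set.inter_subset_right)
  have hFA : F ⊆ A := Set.iUnion_subset fun k => hCA _
  have hsF : ∀ k, ∀ g ∈ A, g ∉ (s k).1 → g ∈ F := fun k g hg hgk =>
    Set.mem_iUnion.2 ⟨k, subset_cl (Or.inr ⟨hg, hgk⟩)⟩
  have hFl : ∀ e ∈ F, OE inc o e → ∃ k, e ∈ (s k).1 ∧ e ∉ (s (k + 1)).1 := by
    intro e he heo
    refine hleave e (hFA he) ?_
    obtain ⟨i, hi⟩ := Set.mem_iUnion.1 he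
    obtain ⟨j, hj⟩ := hen (s i) e hi
    refine ⟨Nat.pair i j + 1, ?_⟩
    rw [hsk, Nat.unpair_pair]
    simp only [hj]
    by_cases h : e ∈ (s (Nat.pair i j)).1
    · obtain ⟨-, h2, -⟩ := hs2 _ e h heo
      rw [h2]; simp
    · rw [hs3 _ e (fun hh => h hh.1)]; exact h
  choose! K hK1 hK2 using hFl
  refine ⟨F, hFA, ?_, ⟨fun e => lnk (s (K e)) e, ?_, ?_⟩, ?_, ?_⟩
  · rw [Cardinal.le_aleph0_iff_set_countable]
    exact Set.countable_iUnion fun k => hCc _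
  · intro e he heo
    obtain ⟨h1, h2, h3⟩ := hrem (K e) e heo (hK1 e he heo) (hK2 e he heo)
    refine ⟨h1, fun g hg => hsF (K e + 1) g ((s (K e)).2.2.1 (h3 g (by simp [hg]))) ?_⟩
    rw [h2]
    exact fun h => h.2 (by simp [hg])
  · intro e he e' he' heo heo' hne g hg hg'
    obtain ⟨h1, h2, h3⟩ := hrem (K e) e heo (hK1 e he heo) (hK2 e he heo)
    obtain ⟨h1', h2', h3'⟩ := hrem (K e') e' heo' (hK1 e' he' heo') (hK2 e' he' heo')
    rcases lt_trichotomy (K e) (K e') with hlt | heq | hlt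
    · have := hanti (K e + 1) (K e') hlt (h3' g (by simp [hg']))
      rw [h2] at this
      exact this.2 (by simp [hg])
    · have hm := hK2 e' he' heo'
      rw [← heq, h2] at hm
      apply hm
      refine ⟨by rw [heq]; exact hK1 e' he' heo', fun h => ?_⟩
      rcases List.mem_cons.1 h with h | h
      · exact hne h.symm
      · obtain ⟨y, hy, hey⟩ := heo'
        obtain ⟨-, -, -, -, hh⟩ := h1
        exact hh e' h (by rw [hey]; simp)
    · have := hanti (K e' + 1) (K e) hlt (h3 g (by simp [hg]))
      rw [h2'] at this
      exact this.2 (by simp [hg'])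
  · intro g hg
    exact Or.inl (Set.mem_iUnion.2 ⟨0, subset_cl (Or.inl hg)⟩)
  · intro e he g hg hgA
    obtain ⟨i, hi⟩ := Set.mem_iUnion.1 he
    exact Or.inl (Set.mem_iUnion.2 ⟨i, cl_closed hi ⟨hg, hgA⟩⟩)

end LK

namespace LK
variable {V : Type u} {E : Type v} {inc inc' : E → Sym2 V}

/-- edges outside `F` still connected to `o` -/
def AF (inc : E → Sym2 V) (A : Set E) (o : V) (F : Set E) : Set E :=
  {g | g ∈ A \ F ∧ ¬ Junk inc (A \ F) o g}

def Closed (inc : E → Sym2 V) (A : Set E) (o : V) (μ : Cardinal.{v}) (F : Set E) : Prop :=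
  ∀ f ∈ F, ∀ v ∈ inc f, (∃ S : Set E, Cardinal.mk S ≤ μ ∧ ¬ Cn inc (A \ S) v o) →
    ¬ Cn inc (A \ F) v o

theorem af_iff {A F : Set E} {o : V} {g : E} :
    g ∈ AF inc A o F ↔ g ∈ A \ F ∧ Ins inc {v | Cn inc (A \ F) v o} g := by
  constructor
  · rintro ⟨h1, h2⟩
    unfold Junk at h2
    push Not at h2
    obtain ⟨v, hv, hc⟩ := h2
    exact ⟨h1, fun w hw => (Cn.of_mem h1 hw hv).trans hc⟩
  · rintro ⟨h1, h2⟩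
    obtain ⟨x, y, hxy⟩ := ends inc g
    exact ⟨h1, fun h => h x (by rw [hxy]; simp) (h2 x (by rw [hxy]; simp))⟩

theorem af_of_mem {A F : Set E} {o v : V} {g : E} (h : g ∈ A \ F) (hv : v ∈ inc g)
    (hc : Cn inc (A \ F) v o) : g ∈ AF inc A o F :=
  ⟨h, fun hj => hj v hv hc⟩

/-- all edges of a walk to `o` outside `F` are in `AF` -/
theorem W.af {A F : Set E} {o v : V} {l : List E} (h : W inc v l o) (hl : ∀ e ∈ l, e ∈ A \ F) :
    ∀ e ∈ l, e ∈ AF inc A o F := by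
  intro e he
  obtain ⟨x, y, hxy⟩ := ends inc e
  obtain ⟨a, b, rfl, h1, h2⟩ := h.split_at he (show x ∈ inc e by rw [hxy]; simp)
  exact af_of_mem (hl e he) (show x ∈ inc e by rw [hxy]; simp)
    ⟨b, fun g hg => hl g (by simp [hg]), h2⟩

open Cardinal in
theorem af_euler {A F : Set E} {o t : V} {μ : Cardinal.{v}} (hμ : ℵ₀ ≤ μ) (hE : Euler inc A o t)
    (hF : #F ≤ μ) (hcl : Closed inc A o μ F) : Euler inc (AF inc A o F) o t := by
  intro Y ho ht hfin
  set C := ExC inc (AF inc A o F) Y with hC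
  set C0 := {v | Cn inc (A \ F) v o} with hC0
  have hno : ∀ f ∈ F, ∀ v ∈ inc f, v ∈ C0 → v ∉ Y := by
    intro f hf v hv hvC hvY
    refine hcl f hf v hv ⟨F ∪ C, card_union_le hμ hF ?_, ?_⟩ hvC
    · exact (Cardinal.le_aleph0_iff_set_countable.2 hfin.countable).trans hμ
    · rintro ⟨l, hl, hw⟩
      have hl' : ∀ e ∈ l, e ∈ A \ F := fun e he => ⟨(hl e he).1, fun h => (hl e he).2 (Or.inl h)⟩
      obtain ⟨a, e, b, x, y, rfl, h1, h2, h3, h4, -, -⟩ := hw.first_exit hvY ho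
      exact (hl e (by simp)).2 (Or.inr ⟨hw.af hl' e (by simp), x, y, h2, h3, h4⟩)
  have key : ExC inc A (C0 ∩ Y) = C := by
    ext e
    constructor
    · rintro ⟨heA, x, y, hxy, hx, hy⟩
      have heF : e ∉ F := fun h => hno e h x (by rw [hxy]; simp) hx.1 hx.2
      have heAF : e ∈ AF inc A o F := af_of_mem ⟨heA, heF⟩ (v := x) (by rw [hxy]; simp) hx.1
      refine ⟨heAF, x, y, hxy, hx.2, fun h => hy ⟨(af_iff.1 heAF).2 y (by rw [hxy]; simp), h⟩⟩
    · rintro ⟨heA, x, y, hxy, hx, hy⟩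
      exact ⟨heA.1.1, x, y, hxy, ⟨(af_iff.1 heA).2 x (by rw [hxy]; simp), hx⟩, fun h => hy h.2⟩
  have := hE (C0 ∩ Y) (fun h => ho h.2) (fun h => ht h.2)
  rw [key] at this
  exact this hfin

open Cardinal in
theorem disjoint_choice {γ : Type*} [Nonempty γ] {μ : Cardinal.{v}} (hμ : ℵ₀ ≤ μ) {Δ : Set E}
    (hΔ : #Δ ≤ μ) (R : E → γ → Prop) (G : γ → Set E)
    (h : ∀ b ∈ Δ, ∀ Z : Set E, #Z ≤ μ → ∃ x, R b x ∧ (G x).Countable ∧ Disjoint (G x) Z) :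
    ∃ f : E → γ, (∀ b ∈ Δ, R b (f b)) ∧
      ∀ b ∈ Δ, ∀ b' ∈ Δ, b ≠ b' → Disjoint (G (f b)) (G (f b')) := by
  classical
  have wf : WellFounded (WellOrderingRel : E → E → Prop) := WellOrderingRel.isWellOrder.wf
  let P : (b : E) → (∀ b', WellOrderingRel b' b → γ) → γ → Prop := fun b ih x =>
    R b x ∧ (G x).Countable ∧ ∀ b' ∈ Δ, ∀ hb : WellOrderingRel b' b, Disjoint (G x) (G (ih b' hb))
  let f : E → γ := wf.fix (fun b ih => if hh : ∃ x, P b ih x then hh.choose else Classical.arbitrary γ)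
  have hf : ∀ b, f b = if hh : ∃ x, P b (fun b' _ => f b') x then hh.choose else
      Classical.arbitrary γ := fun b => wf.fix_eq _ b
  have hP : ∀ b ∈ Δ, P b (fun b' _ => f b') (f b) := by
    intro b
    induction b using wf.induction with
    | _ b ih =>
      intro hb
      have hex : ∃ x, P b (fun b' _ => f b') x := by
        obtain ⟨x, h1, h2, h3⟩ := h b hb (⋃ b' ∈ {b' | b' ∈ Δ ∧ WellOrderingRel b' b}, G (f b'))
          (card_biUnion_le hμ ((mk_le_mk_of_subset (fun _ h => h.1)).trans hΔ)
            (fun b' hb' => (Cardinal.le_aleph0_iff_set_countable.2 (ih b' hb'.2 hb'.1).2.1).trans hμ))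
        refine ⟨x, h1, h2, fun b' hb' hlt => h3.mono_right ?_⟩
        exact Set.subset_biUnion_of_mem (u := fun b' => G (f b')) (show b' ∈ {b' | b' ∈ Δ ∧ WellOrderingRel b' b} from ⟨hb', hlt⟩)
      rw [hf b, dif_pos hex]
      exact hex.choose_spec
  refine ⟨f, fun b hb => (hP b hb).1, fun b hb b' hb' hne => ?_⟩
  rcases trichotomous_of (WellOrderingRel : E → E → Prop) b b' with hlt | heq | hlt
  · exact ((hP b' hb').2.2 b hb hlt).symm
  · exact absurd heq hne
  · exact (hP b hb).2.2 b' hb' hlt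

end LK

namespace LK
variable {V : Type u} {E : Type v} {inc inc' : E → Sym2 V}

open Cardinal in
theorem gadget {A F X D : Set _} {o t : V} {μ : Cardinal.{v}} {p : E → List E} {b : E}
    (hμ : ℵ₀ ≤ μ) (hE : Euler inc A o t) (ho : o ∈ X) (ht : t ∉ X) (hF : #F ≤ μ)
    (hD : D = ExC inc A X \ F) (hp : Cover inc (A \ F) o X D p)
    (hb : b ∈ ExC inc A X) (hbF : b ∈ F)
    (hconn : ∀ S : Set E, #S ≤ μ → Cn inc (A \ S) (inn inc o X b) o)
    (Z : Set E) (hZ : #Z ≤ μ) :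
    ∃ x : (E → List E) × Set E × Set E,
      (Sys inc {e | e ∈ A ∧ Ins inc X e} o (insert b x.2.1) (inn inc o X) x.1 ∧ x.2.1 ⊆ D ∧
        (∀ c ∈ insert b x.2.1, ∀ e ∈ x.1 c, e ∈ x.2.2) ∧ (∀ c ∈ x.2.1, c ∈ x.2.2) ∧
        (∀ c ∈ D, c ∉ x.2.1 → ∀ e ∈ p c, e ∉ x.2.2)) ∧ x.2.2.Countable ∧ Disjoint x.2.2 Z := by
  classical
  have hsep : ∀ v : V, ∃ S : Set E, #S ≤ μ ∧
      ((∃ S' : Set E, #S' ≤ μ ∧ ¬ Cn inc (A \ S') v o) → ¬ Cn inc (A \ S) v o) := by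
    intro v
    by_cases h : ∃ S' : Set E, #S' ≤ μ ∧ ¬ Cn inc (A \ S') v o
    · obtain ⟨S, h1, h2⟩ := h
      exact ⟨S, h1, fun _ => h2⟩
    · exact ⟨∅, by simp, fun h' => absurd h' h⟩
  choose Sv hSv1 hSv2 using hsep
  let sat : E → Set E := fun e => {g | ∃ c ∈ D, (e = c ∨ e ∈ p c) ∧ (g = c ∨ g ∈ p c)}
  have hsat : ∀ e, (sat e).Countable := by
    intro e
    have h1 : ({c | c ∈ D ∧ e ∈ p c}).Countable := by
      refine Set.Subsingleton.countable ?_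
      rintro c ⟨hc, hc'⟩ d ⟨hd, hd'⟩
      by_contra hne
      exact hp.disj c hc d hd hne e hc' hd'
    have h2 : (({e} ∪ {c | c ∈ D ∧ e ∈ p c}) : Set E).Countable := (Set.countable_singleton e).union h1
    refine (h2.biUnion (t := fun c _ => {c} ∪ {g | g ∈ p c}) fun c _ =>
      (Set.countable_singleton c).union (List.finite_toSet (p c)).countable).mono ?_
    rintro g ⟨c, hc, h3, h4⟩
    refine Set.mem_biUnion (show c ∈ ({e} ∪ {c | c ∈ D ∧ e ∈ p c} : Set E) from ?_) ?_
    · rcases h3 with rfl | h3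
      · exact Or.inl rfl
      · exact Or.inr ⟨hc, h3⟩
    · rcases h4 with rfl | h4
      · exact Or.inl rfl
      · exact Or.inr h4
  let Φ : E → Set E := fun e => {g | ∃ v ∈ inc e, g ∈ Sv v} ∪ sat e
  have hΦ : ∀ e, #(Φ e) ≤ μ := by
    intro e
    refine card_union_le hμ ?_ ((Cardinal.le_aleph0_iff_set_countable.2 (hsat e)).trans hμ)
    obtain ⟨x, y, hxy⟩ := ends inc e
    refine (mk_le_mk_of_subset (t := Sv x ∪ Sv y) ?_).trans (card_union_le hμ (hSv1 x) (hSv1 y))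
    rintro g ⟨v, hv, hg⟩
    rw [hxy] at hv
    rcases Sym2.mem_iff.1 hv with rfl | rfl
    · exact Or.inl hg
    · exact Or.inr hg
  set F' : Set E := Cl Φ (F ∪ Z) with hF'
  have hF'c : #F' ≤ μ := card_cl hμ (card_union_le hμ hF hZ) hΦ
  have hFF : F ⊆ F' := fun e he => subset_cl (Or.inl he)
  have hZF : Z ⊆ F' := fun e he => subset_cl (Or.inr he)
  have hcl : ∀ f ∈ F', ∀ v ∈ inc f, (∃ S' : Set E, #S' ≤ μ ∧ ¬ Cn inc (A \ S') v o) →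
      ¬ Cn inc (A \ F') v o := by
    intro f hf v hv hS hc
    refine hSv2 v hS (hc.mono fun e he => ⟨he.1, fun h => he.2 ?_⟩)
    exact cl_closed hf (Or.inl ⟨v, hv, h⟩)
  have hsatF : ∀ c ∈ D, ∀ e, (e = c ∨ e ∈ p c) → e ∈ F' → ∀ g, (g = c ∨ g ∈ p c) → g ∈ F' :=
    fun c hc e he heF g hg => cl_closed heF (Or.inr ⟨c, hc, he, hg⟩)
  set C : Set E := (ExC inc A X \ F') \ {b} with hC
  have hCD : ∀ c ∈ C, c ∈ D := by
    intro c hc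
    rw [hD]
    exact ⟨hc.1.1, fun h => hc.1.2 (hFF h)⟩
  have hpC : Cover inc (A \ F') o X C p := by
    refine Sys.mono hp (fun c hc e he => ?_) hCD
    refine ⟨⟨(hp.mem c (hCD c hc) e he).1.1, fun h => hc.1.2 ?_⟩, (hp.mem c (hCD c hc) e he).2⟩
    exact hsatF c (hCD c hc) e (Or.inr he) h c (Or.inl rfl)
  obtain ⟨q, B0, hq, hB0, hqp⟩ := shift hE ho ht hb hC hpC (by
    rintro v' hv' ⟨f, hf, hfA, hvf⟩ N hN
    have h1 : Cn inc (A \ F') v' o := by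
      refine Cn.trans (hv'.mono fun e he => he.1.1).symm (hconn F' hF'c)
    by_contra hcon
    refine hcl f hf v' hvf ⟨F' ∪ N, card_union_le hμ hF'c
      ((Cardinal.le_aleph0_iff_set_countable.2 hN.countable).trans hμ), fun h => hcon (h.mono ?_)⟩ h1
    exact fun e he => ⟨⟨he.1, fun h => he.2 (Or.inl h)⟩, fun h => he.2 (Or.inr h)⟩)
  set B : Set E := B0 ∩ C with hB
  have hBC : ∀ c ∈ insert b B, c ∈ insert b C := by
    rintro c (rfl | hc)
    · exact Or.inl rfl
    · exact Or.inr hc.2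
  have hBcount : B.Countable := hB0.mono fun _ h => h.1
  refine ⟨⟨q, B, (⋃ c ∈ insert b B, {g | g ∈ q c}) ∪ B⟩, ⟨?_, fun c hc => hCD c hc.2, ?_, ?_, ?_⟩, ?_, ?_⟩
  · exact Sys.mono hq (fun c hc e he => ⟨(hq.mem c (hBC c hc) e he).1.1, (hq.mem c (hBC c hc) e he).2⟩) hBC
  · exact fun c hc e he => Or.inl (Set.mem_biUnion hc he)
  · exact fun c hc => Or.inr hc
  · intro c hc hcB e he heG
    have hins := (hp.mem c hc e he).2
    rcases heG with heG | heG
    · obtain ⟨d, hd, hed⟩ := Set.mem_iUnion₂.1 heG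
      by_cases hcC : c ∈ C
      · have hcB0 : c ∉ B0 := fun h => hcB ⟨h, hcC⟩
        have hne : c ≠ d := by
          rintro rfl
          rcases hd with rfl | hd
          · exact hcC.2 rfl
          · exact hcB hd
        refine hq.disj c (Or.inr hcC) d (hBC d hd) hne e ?_ hed
        rw [hqp c hcC hcB0]
        exact he
      · have hcF : c ∈ F' := by
          by_contra h
          rw [hD] at hc
          exact hcC ⟨⟨hc.1, h⟩, fun h' => hc.2 (by rw [Set.mem_singleton_iff.1 h']; exact hbF)⟩
        exact (hq.mem d (hBC d hd) e hed).1.2 (hsatF c hc c (Or.inl rfl) hcF e (Or.inr he))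
    · exact not_crs_of_ins hins heG.2.1.1.2
  · refine Set.Countable.union ?_ hBcount
    exact (hBcount.insert b).biUnion fun c _ => (List.finite_toSet (q c)).countable
  · rw [Set.disjoint_left]
    intro e he heZ
    rcases he with he | he
    · obtain ⟨d, hd, hed⟩ := Set.mem_iUnion₂.1 he
      exact (hq.mem d (hBC d hd) e hed).1.2 (hZF heZ)
    · exact he.2.1.2 (hZF heZ)

open Cardinal in
theorem af_loose {A F : Set E} {o t : V} {μ : Cardinal.{v}}
    (hμ : ℵ₀ ≤ μ) (hE : Euler inc A o t) (hL : Loose inc A o t) (hF : #F ≤ μ)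
    (hcl : Closed inc A o μ F) : Loose inc (AF inc A o F) o t := by
  classical
  intro X0 p hw e0 he0 x0 hx0 hx0o he0x
  set C0 : Set V := {v | Cn inc (A \ F) v o} with hC0
  set X : Set V := X0 ∩ C0 with hX
  have ho : o ∈ X := ⟨hw.ho, Cn.refl _ _⟩
  have ht : t ∉ X := fun h => hw.ht h.1
  set D : Set E := ExC inc A X \ F with hD
  have hins0 : ∀ g ∈ AF inc A o F, Ins inc C0 g := fun g hg => (af_iff.1 hg).2
  have hDD : ∀ c, c ∈ D → c ∈ ExC inc (AF inc A o F) X0 ∧ inn inc o X c = inn inc o X0 c := by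
    rintro c ⟨⟨hcA, x, y, hxy, hx, hy⟩, hcF⟩
    have h1 : c ∈ AF inc A o F := af_of_mem ⟨hcA, hcF⟩ (v := x) (by rw [hxy]; simp) hx.2
    have hy' : y ∉ X0 := fun h => hy ⟨h, hins0 c h1 y (by rw [hxy]; simp)⟩
    exact ⟨⟨h1, x, y, hxy, hx.1, hy'⟩, by rw [inn_eq hxy hx hy, inn_eq hxy hx.1 hy']⟩
  have hp : Cover inc (A \ F) o X D p := by
    refine ⟨fun c hc => ?_, fun c hc e he => ?_, fun c hc d hd => ?_, fun c hc => ?_⟩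
    · rw [(hDD c hc).2]; exact hw.cov.walk c (hDD c hc).1
    · have := hw.cov.mem c (hDD c hc).1 e he
      exact ⟨this.1.1, fun v hv => ⟨this.2 v hv, hins0 e this.1 v hv⟩⟩
    · exact hw.cov.disj c (hDD c hc).1 d (hDD d hd).1
    · exact hw.cov.nodup c (hDD c hc).1
  set Δ : Set E := ExC inc A X ∩ F with hΔ
  obtain ⟨f, hf1, hf2⟩ := disjoint_choice (γ := (E → List E) × Set E × Set E) hμ
    (Δ := Δ) ((mk_le_mk_of_subset fun _ h => h.2).trans hF)
    (fun b x => Sys inc {e | e ∈ A ∧ Ins inc X e} o (insert b x.2.1) (inn inc o X) x.1 ∧ x.2.1 ⊆ D ∧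
        (∀ c ∈ insert b x.2.1, ∀ e ∈ x.1 c, e ∈ x.2.2) ∧ (∀ c ∈ x.2.1, c ∈ x.2.2) ∧
        (∀ c ∈ D, c ∉ x.2.1 → ∀ e ∈ p c, e ∉ x.2.2)) (fun x => x.2.2) (by
      intro b hb Z hZ
      refine gadget hμ hE ho ht hF rfl hp hb.1 hb.2 ?_ Z hZ
      intro S hS
      obtain ⟨y, h1, h2, h3⟩ := hb.1.2.inn (o := o)
      by_contra hcon
      refine hcl b hb.2 (inn inc o X b) ?_ ⟨S, hS, hcon⟩ h2.2
      rw [h1]; simp)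
  let own : E → E → Prop := fun c b => b ∈ Δ ∧ c ∈ insert b (f b).2.1
  have hownu : ∀ c b b', own c b → own c b' → b = b' := by
    rintro c b b' ⟨hb, h1⟩ ⟨hb', h2⟩
    rcases h1 with rfl | h1
    · rcases h2 with rfl | h2
      · rfl
      · exact absurd hb.2 ((hf1 b' hb').2.1 h2).2
    · rcases h2 with rfl | h2
      · exact absurd hb'.2 ((hf1 b hb).2.1 h1).2
      · by_contra hne
        exact Set.disjoint_left.1 (hf2 b hb b' hb' hne) ((hf1 b hb).2.2.2.1 c h1)
          ((hf1 b' hb').2.2.2.1 c h2)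
  let p' : E → List E := fun c => if h : ∃ b, own c b then (f h.choose).1 c else p c
  have hp1 : ∀ c b, own c b → p' c = (f b).1 c := by
    intro c b h
    have hex : ∃ b, own c b := ⟨b, h⟩
    have : hex.choose = b := hownu c _ _ hex.choose_spec h
    simp only [p', dif_pos hex, this]
  have hp2 : ∀ c, (¬ ∃ b, own c b) → p' c = p c := fun c h => by simp only [p', dif_neg h]
  have hD2 : ∀ c ∈ ExC inc A X, (¬ ∃ b, own c b) → c ∈ D := by
    intro c hc h
    refine ⟨hc, fun hcF => h ⟨c, ⟨hc, hcF⟩, Or.inl rfl⟩⟩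
  have hdis : ∀ c b d, own c b → d ∈ ExC inc A X → (¬ ∃ b, own d b) → ∀ e ∈ (f b).1 c, e ∉ p d := by
    intro c b d hcb hd hdn e he hed
    exact (hf1 b hcb.1).2.2.2.2 d (hD2 d hd hdn) (fun h => hdn ⟨b, hcb.1, Or.inr h⟩) e hed
      ((hf1 b hcb.1).2.2.1 c hcb.2 e he)
  have hwave : Wave inc A o t X p' := by
    refine ⟨ho, ht, ⟨fun c hc => ?_, fun c hc e he => ?_, fun c hc d hd hne e he hed => ?_, fun c hc => ?_⟩⟩
    · by_cases h : ∃ b, own c b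
      · obtain ⟨b, hb⟩ := h
        rw [hp1 c b hb]
        exact (hf1 b hb.1).1.walk c hb.2
      · rw [hp2 c h]
        exact hp.walk c (hD2 c hc h)
    · by_cases h : ∃ b, own c b
      · obtain ⟨b, hb⟩ := h
        rw [hp1 c b hb] at he
        exact (hf1 b hb.1).1.mem c hb.2 e he
      · rw [hp2 c h] at he
        have := hp.mem c (hD2 c hc h) e he
        exact ⟨this.1.1, this.2⟩
    · by_cases h : ∃ b, own c b
      · obtain ⟨b, hb⟩ := h
        rw [hp1 c b hb] at he
        by_cases h' : ∃ b, own d b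
        · obtain ⟨b', hb'⟩ := h'
          rw [hp1 d b' hb'] at hed
          by_cases hbb : b = b'
          · subst hbb
            exact (hf1 b hb.1).1.disj c hb.2 d hb'.2 hne e he hed
          · exact Set.disjoint_left.1 (hf2 b hb.1 b' hb'.1 hbb) ((hf1 b hb.1).2.2.1 c hb.2 e he)
              ((hf1 b' hb'.1).2.2.1 d hb'.2 e hed)
        · rw [hp2 d h'] at hed
          exact hdis c b d hb hd h' e he hed
      · rw [hp2 c h] at he
        by_cases h' : ∃ b, own d b
        · obtain ⟨b', hb'⟩ := h'
          rw [hp1 d b' hb'] at hed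
          exact hdis d b' c hb' hc h e hed he
        · rw [hp2 d h'] at hed
          exact hp.disj c (hD2 c hc h) d (hD2 d hd h') hne e he hed
    · by_cases h : ∃ b, own c b
      · obtain ⟨b, hb⟩ := h
        rw [hp1 c b hb]
        exact (hf1 b hb.1).1.nodup c hb.2
      · rw [hp2 c h]
        exact hp.nodup c (hD2 c hc h)
  refine hL X p' hwave e0 he0.1.1 x0 ⟨hx0, hins0 e0 he0 x0 ?_⟩ hx0o he0x
  rw [he0x]; simp

end LK

namespace LK
variable {V : Type u} {E : Type v} {inc inc' : E → Sym2 V}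

open Cardinal in
theorem exists_code (S : Set E) :
    ∃ code : E → Ordinal.{v}, Set.InjOn code S ∧ ∀ x ∈ S, code x < (#S).ord := by
  classical
  obtain ⟨r, wo, hr⟩ := Cardinal.exists_ord_eq S
  refine ⟨fun x => if h : x ∈ S then Ordinal.typein r ⟨x, h⟩ else 0, ?_, ?_⟩
  · intro x hx y hy hxy
    simp only [dif_pos hx, dif_pos hy] at hxy
    exact congrArg Subtype.val ((Ordinal.typein_inj r).1 hxy)
  · intro x hx
    simp only [dif_pos hx]
    rw [hr]
    exact Ordinal.typein_lt_type r _

open Cardinal in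
theorem card_code {S : Set E} {code : E → Ordinal.{v}} (h : Set.InjOn code S) (β : Ordinal.{v}) :
    #{x | x ∈ S ∧ code x < β} ≤ β.card := by
  have h1 : Function.Injective (fun x : {x | x ∈ S ∧ code x < β} => (⟨code x.1, x.2.2⟩ : Set.Iio β)) := by
    intro x y hxy
    exact Subtype.ext (h x.2.1 y.2.1 (congrArg Subtype.val hxy))
  have h2 := Cardinal.lift_mk_le_lift_mk_of_injective h1
  rw [Cardinal.mk_Iio_ordinal, Cardinal.lift_id'.{v, v+1}] at h2
  exact Cardinal.lift_le.1 h2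

theorem capture {A F X F' : Set E} {o : V} {g : E} (hg : g ∈ A)
    (h : g ∈ AF inc A o F → g ∈ X ∨ Junk inc (AF inc A o F \ X) o g) (hF : F ⊆ F') (hX : X ⊆ F') :
    g ∈ F' ∨ Junk inc (A \ F') o g := by
  by_cases hgF : g ∈ F'
  · exact Or.inl hgF
  · right
    rintro v hv ⟨l, hl, hw⟩
    have hl' : ∀ e ∈ l, e ∈ A \ F := fun e he => ⟨(hl e he).1, fun h => (hl e he).2 (hF h)⟩
    rcases h (af_of_mem ⟨hg, fun h => hgF (hF h)⟩ hv ⟨l, hl', hw⟩) with h | h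
    · exact hgF (hX h)
    · exact h v hv ⟨l, fun e he => ⟨hw.af hl' e he, fun h => (hl e he).2 (hX h)⟩, hw⟩

open Cardinal in
theorem pp_succ {κ : Cardinal.{v}} (hκ : ℵ₀ < κ) (IH : ∀ μ : Cardinal.{v}, ℵ₀ ≤ μ → μ < κ → PP V E μ) :
    PP V E κ := by
  classical
  intro inc o t hot A D Φ hL hE hDA hD hΦ
  -- separators of minimal size
  have hsep : ∀ v : V, ∃ S : Set E, ∀ S', ¬ Cn inc (A \ S') v o → ¬ Cn inc (A \ S) v o ∧ #S ≤ #S' := by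
    intro v
    by_cases h : ∃ S', ¬ Cn inc (A \ S') v o
    · obtain ⟨S, hS, hmin⟩ := WellFounded.has_min (InvImage.wf (fun S : Set E => #S) Cardinal.lt_wf)
        {S' | ¬ Cn inc (A \ S') v o} h
      exact ⟨S, fun S' hS' => ⟨hS, not_lt.1 (hmin S' hS')⟩⟩
    · exact ⟨∅, fun S' hS' => absurd ⟨S', hS'⟩ h⟩
  choose S hS using hsep
  choose codeS hcS1 hcS2 using fun v => exists_code (S v)
  obtain ⟨codeD, hcD1, hcD2⟩ := exists_code D
  choose codeΦ hcΦ1 hcΦ2 using fun e => exists_code (Φ e)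
  let Θ : Ordinal.{v} → E → Set E := fun β e =>
    {g | g ∈ Φ e ∧ codeΦ e g < Order.succ β} ∪
      {g | ∃ v ∈ inc e, g ∈ S v ∧ (codeS v g < Order.succ β ∨ (S v).Countable)}
  let μ : Ordinal.{v} → Cardinal.{v} := fun β => max ℵ₀ (Order.succ β).card
  have hμ0 : ∀ β, ℵ₀ ≤ μ β := fun β => le_max_left _ _
  have hΘ : ∀ β e, #(Θ β e) ≤ μ β := by
    intro β e
    refine card_union_le (hμ0 β) ((card_code (hcΦ1 e) _).trans (le_max_right _ _)) ?_
    have h1 : ∀ v, #{g | g ∈ S v ∧ (codeS v g < Order.succ β ∨ (S v).Countable)} ≤ μ β := by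
      intro v
      by_cases h : (S v).Countable
      · exact (mk_le_mk_of_subset fun _ h => h.1).trans
          ((Cardinal.le_aleph0_iff_set_countable.2 h).trans (hμ0 β))
      · refine (mk_le_mk_of_subset ?_).trans ((card_code (hcS1 v) (Order.succ β)).trans (le_max_right _ _))
        rintro g ⟨h1, h2⟩
        exact ⟨h1, h2.resolve_right h⟩
    obtain ⟨x, y, hxy⟩ := ends inc e
    refine (mk_le_mk_of_subset ?_).trans (card_union_le (hμ0 β) (h1 x) (h1 y))
    rintro g ⟨v, hv, hg⟩
    rw [hxy] at hv
    rcases Sym2.mem_iff.1 hv with rfl | rfl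
    · exact Or.inl hg
    · exact Or.inr hg
  let Q : Ordinal.{v} → Set E → Set E → Prop := fun β F X =>
    X ⊆ AF inc A o F ∧ #X ≤ μ β ∧ Linked inc o t X ∧
    (∀ e ∈ F ∪ X, ∀ g ∈ Θ β e, g ∈ AF inc A o F → g ∈ X ∨ Junk inc (AF inc A o F \ X) o g) ∧
    (∀ g ∈ D, codeD g < Order.succ β → g ∈ AF inc A o F → g ∈ X ∨ Junk inc (AF inc A o F \ X) o g)
  let N : Ordinal.{v} → Set E := (wellFounded_lt (α := Ordinal.{v})).fix fun β ih =>
    if h : ∃ X, Q β {g | ∃ γ, ∃ hγ : γ < β, g ∈ ih γ hγ} X then h.choose else ∅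
  let F : Ordinal.{v} → Set E := fun β => ⋃ γ < β, N γ
  have hFmem : ∀ {β g}, g ∈ F β ↔ ∃ γ, γ < β ∧ g ∈ N γ := by
    intro β g
    simp [F]
  have hN : ∀ β, N β = if h : ∃ X, Q β (F β) X then h.choose else ∅ := by
    intro β
    have h1 : {g | ∃ γ, ∃ hγ : γ < β, g ∈ N γ} = F β := by
      ext g; rw [hFmem]; simp
    have h2 : N β = if h : ∃ X, Q β {g | ∃ γ, ∃ hγ : γ < β, g ∈ N γ} X then h.choose else ∅ :=
      (wellFounded_lt (α := Ordinal.{v})).fix_eq _ β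
    rw [h2]
    simp only [h1]
  have hNF : ∀ {γ α}, γ < α → N γ ⊆ F α := fun h g hg => hFmem.2 ⟨_, h, hg⟩
  have hFF : ∀ {γ α}, γ ≤ α → F γ ⊆ F α := by
    intro γ α h g hg
    obtain ⟨δ, h1, h2⟩ := hFmem.1 hg
    exact hFmem.2 ⟨δ, h1.trans_le h, h2⟩
  -- elements are captured
  have hcapt : ∀ α β, β < α → Q β (F β) (N β) → ∀ e ∈ F β ∪ N β, ∀ g ∈ Θ β e, g ∈ A →
      g ∈ F α ∨ Junk inc (A \ F α) o g := fun α β hβ hQ e he g hg hgA =>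
    capture hgA (hQ.2.2.2.1 e he g hg) (hFF hβ.le) (hNF hβ)
  have hcard : ∀ α, (∀ γ < α, Q γ (F γ) (N γ)) → ∀ ν, ℵ₀ ≤ ν → α.card ≤ ν → #(F α) ≤ ν := by
    intro α hα ν h0 hν
    refine mk_biUnion_le_of_le hν h0 _ fun γ hγ => (hα γ hγ).2.1.trans (max_le h0 ?_)
    exact (Ordinal.card_le_card (Order.succ_le_of_lt hγ)).trans hν
  have hclosed : ∀ α, (∀ γ < α, Q γ (F γ) (N γ)) → Closed inc A o (max ℵ₀ α.card) (F α) := by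
    rintro α hα f hf v hv ⟨S', hS'1, hS'2⟩ ⟨l, hl, hw⟩
    obtain ⟨h1, h2⟩ := hS v S' hS'2
    have h3 := h2.trans hS'1
    obtain ⟨β0, hβ0, hfN⟩ := hFmem.1 hf
    refine h1 ⟨l, fun g hg => ⟨(hl g hg).1, fun hgS => ?_⟩, hw⟩
    have hcap : g ∈ F α ∨ Junk inc (A \ F α) o g := by
      by_cases hc : (S v).Countable
      · exact hcapt α β0 hβ0 (hα β0 hβ0) f (Or.inr hfN) g (Or.inr ⟨v, hv, hgS, Or.inr hc⟩) (hl g hg).1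
      · have h4 : #(S v) ≤ α.card := by
          rcases le_max_iff.1 h3 with h | h
          · exact absurd (Cardinal.le_aleph0_iff_set_countable.1 h) hc
          · exact h
        have h5 : codeS v g < α :=
          (hcS2 v g hgS).trans_le ((Cardinal.ord_le_ord.2 h4).trans (Cardinal.ord_card_le α))
        have h6 : max β0 (codeS v g) < α := max_lt hβ0 h5
        refine hcapt α _ h6 (hα _ h6) f ?_ g (Or.inr ⟨v, hv, hgS, Or.inl (Order.lt_succ_of_le (le_max_right _ _))⟩) (hl g hg).1
        rcases (le_max_left β0 (codeS v g)).lt_or_eq with h | h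
        · exact Or.inl (hNF h hfN)
        · rw [← h]; exact Or.inr hfN
    rcases hcap with h | h
    · exact (hl g hg).2 h
    · obtain ⟨x, y, hxy⟩ := ends inc g
      have hx : x ∈ inc g := by rw [hxy]; simp
      obtain ⟨a, b, rfl, h7, h8⟩ := hw.split_at hg hx
      exact h x hx ⟨b, fun e he => hl e (by simp [he]), h8⟩
  have hμκ : ∀ β, β < κ.ord → μ β < κ := by
    intro β hβ
    refine max_lt hκ (Cardinal.lt_ord.1 ?_)
    exact (Cardinal.isSuccLimit_ord hκ.le).succ_lt hβ
  have hQ : ∀ β, β < κ.ord → Q β (F β) (N β) := by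
    intro β
    induction β using WellFoundedLT.induction with
    | _ β ih =>
      intro hβ
      have hα : ∀ γ < β, Q γ (F γ) (N γ) := fun γ hγ => ih γ hγ (hγ.trans hβ)
      have hFc : #(F β) ≤ max ℵ₀ β.card := hcard β hα _ (le_max_left _ _) (le_max_right _ _)
      have hL' := af_loose (le_max_left _ _) hE hL hFc (hclosed β hα)
      have hE' := af_euler (le_max_left _ _) hE hFc (hclosed β hα)
      have hβs : max ℵ₀ β.card ≤ μ β :=
        max_le_max le_rfl (Ordinal.card_le_card (Order.le_succ β))
      have hex : ∃ X, Q β (F β) X := by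
        obtain ⟨X, h1, h2, h3, h4, h5⟩ := IH (μ β) (hμ0 β) (hμκ β hβ) inc o t hot (AF inc A o (F β))
          (({g | g ∈ D ∧ codeD g < Order.succ β} ∪ ⋃ e ∈ F β, Θ β e) ∩ AF inc A o (F β)) (Θ β) hL' hE'
          Set.inter_subset_right ((mk_le_mk_of_subset Set.inter_subset_left).trans
            (card_union_le (hμ0 β) ((card_code hcD1 _).trans (le_max_right _ _))
              (card_biUnion_le (hμ0 β) (hFc.trans hβs) fun e _ => hΘ β e))) (hΘ β)
        refine ⟨X, h1, h2, h3, ?_, fun g hg hc hgA => h4 g ⟨Or.inl ⟨hg, hc⟩, hgA⟩⟩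
        rintro e (he | he) g hg hgA
        · exact h4 g ⟨Or.inr (Set.mem_biUnion he hg), hgA⟩
        · exact h5 e he g hg hgA
      rw [hN β, dif_pos hex]
      exact hex.choose_spec
  have hdj : ∀ γ γ' e, γ < κ.ord → γ' < κ.ord → e ∈ N γ → e ∈ N γ' → γ = γ' := by
    intro γ γ' e hγ hγ' h1 h2
    rcases lt_trichotomy γ γ' with h | h | h
    · exact absurd (hNF h h1) ((hQ γ' hγ').1 h2).1.2
    · exact h
    · exact absurd (hNF h h2) ((hQ γ hγ).1 h1).1.2
  refine ⟨F κ.ord, ?_, ?_, ?_, ?_, ?_⟩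
  · intro e he
    obtain ⟨γ, hγ, heN⟩ := hFmem.1 he
    exact ((hQ γ hγ).1 heN).1.1
  · exact hcard _ hQ κ hκ.le (by simp)
  · have : ∀ γ, ∃ L : E → List E, γ < κ.ord → (∀ e ∈ N γ, OE inc o e → Lk inc o t e (L e) ∧ ∀ g ∈ L e, g ∈ N γ) ∧
        ∀ e ∈ N γ, ∀ e' ∈ N γ, OE inc o e → OE inc o e' → e ≠ e' → ∀ g ∈ L e, g ∉ L e' := by
      intro γ
      by_cases h : γ < κ.ord
      · obtain ⟨L, hL⟩ := (hQ γ h).2.2.1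
        exact ⟨L, fun _ => hL⟩
      · exact ⟨fun _ => [], fun h' => absurd h' h⟩
    choose L hL1 using this
    have hst : ∀ e, ∃ γ, e ∈ F κ.ord → γ < κ.ord ∧ e ∈ N γ := by
      intro e
      by_cases h : e ∈ F κ.ord
      · obtain ⟨γ, hγ⟩ := hFmem.1 h
        exact ⟨γ, fun _ => hγ⟩
      · exact ⟨0, fun h' => absurd h' h⟩
    choose st hst using hst
    refine ⟨fun e => L (st e) e, ?_, ?_⟩
    · intro e he hoe
      obtain ⟨h1, h2⟩ := (hL1 (st e) (hst e he).1).1 e (hst e he).2 hoe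
      exact ⟨h1, fun g hg => hNF (hst e he).1 (h2 g hg)⟩
    · intro e he e' he' hoe hoe' hne g hg hg'
      have h1 := ((hL1 (st e) (hst e he).1).1 e (hst e he).2 hoe).2 g hg
      have h2 := ((hL1 (st e') (hst e' he').1).1 e' (hst e' he').2 hoe').2 g hg'
      have h3 := hdj _ _ g (hst e he).1 (hst e' he').1 h1 h2
      have h4 := (hst e' he').2
      simp only at hg'
      rw [← h3] at h4 hg'
      exact (hL1 (st e) (hst e he).1).2 e (hst e he).2 e' h4 hoe hoe' hne g hg hg'
  · intro g hg
    have h1 : codeD g < κ.ord := (hcD2 g hg).trans_le (Cardinal.ord_le_ord.2 hD)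
    exact capture (hDA hg) ((hQ _ h1).2.2.2.2 g hg (Order.lt_succ _)) (hFF h1.le) (hNF h1)
  · intro e he g hg hgA
    obtain ⟨γ, hγ, heN⟩ := hFmem.1 he
    have h1 : codeΦ e g < κ.ord := (hcΦ2 e g hg).trans_le (Cardinal.ord_le_ord.2 (hΦ e))
    have h6 : max γ (codeΦ e g) < κ.ord := max_lt hγ h1
    refine hcapt κ.ord _ h6 (hQ _ h6) e ?_ g (Or.inl ⟨hg, Order.lt_succ_of_le (le_max_right _ _)⟩) hgA
    rcases (le_max_left γ (codeΦ e g)).lt_or_eq with h | h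
    · exact Or.inl (hNF h heN)
    · rw [← h]; exact Or.inr heN

open Cardinal in
theorem pp_all (κ : Cardinal.{v}) (hκ : ℵ₀ ≤ κ) : PP V E κ := by
  induction κ using WellFoundedLT.induction with
  | _ κ ih =>
    rcases hκ.eq_or_lt with h | h
    · rw [← h]; exact pp_aleph0
    · exact pp_succ h fun μ h1 h2 => ih μ h2 h1

open Cardinal in
/-- the linking theorem -/
theorem linking {o t : V} (hot : o ≠ t) {A : Set E} (hL : Loose inc A o t) (hE : Euler inc A o t) :
    ∃ L : E → List E, (∀ e ∈ A, OE inc o e → Lk inc o t e (L e) ∧ ∀ g ∈ L e, g ∈ A) ∧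
      ∀ e ∈ A, ∀ e' ∈ A, OE inc o e → OE inc o e' → e ≠ e' → ∀ g ∈ L e, g ∉ L e' := by
  obtain ⟨F, h1, h2, ⟨L, h3, h4⟩, h5, h6⟩ := pp_all (V := V) (E := E) (max ℵ₀ #E) (le_max_left _ _) inc o t hot A A
    (fun _ => ∅) hL hE subset_rfl ((mk_set_le A).trans (le_max_right _ _)) (by simp)
  have hin : ∀ e ∈ A, OE inc o e → e ∈ F := by
    rintro e he ⟨y, hy, hey⟩
    rcases h5 e he with h | h
    · exact h
    · exact absurd (Cn.refl _ _) (h o (by rw [hey]; simp))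
  exact ⟨L, fun e he hoe => ⟨(h3 e (hin e he hoe) hoe).1, fun g hg => h1 ((h3 e (hin e he hoe) hoe).2 g hg)⟩,
    fun e he e' he' hoe hoe' => h4 e (hin e he hoe) e' (hin e' he' hoe') hoe hoe'⟩

end LK

namespace LK
variable {V : Type u} {E : Type v} {inc inc' : E → Sym2 V}

theorem add_link {o t : V} (hot : o ≠ t) (hL : Loose inc Set.univ o t) (hE : Euler inc Set.univ o t)
    {f h : E} {y : E → V} (hy : ∀ e, OE inc o e → inc e = s(o, y e) ∧ y e ≠ o)
    {C : Set E} (hC : ∀ e ∈ C, OE inc o e) {p : E → List E}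
    (hp : Sys inc {g | g ≠ f ∧ g ≠ h ∧ o ∉ inc g} t C y p) {e0 : E} (he0 : OE inc o e0)
    (hn : e0 ∉ C) : ∃ q, Sys inc {g | g ≠ f ∧ g ≠ h ∧ o ∉ inc g} t (insert e0 C) y q := by
  classical
  rcases augment hp (y e0) with ⟨p', h1, h2⟩ | ⟨Y, hvY, hY⟩
  · obtain ⟨q, hq, -⟩ := h1.extend hn h2
    exact ⟨q, hq⟩
  exfalso
  set X : Set V := insert o Y with hX
  have ho : o ∈ X := Or.inl rfl
  have ht : t ∉ X := by
    rintro (h | h)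
    · exact hot h.symm
    · exact hY.notmem h
  have hYX : Y ⊆ X := fun x hx => Or.inr hx
  -- construct the lists
  have key : ∀ c', ∃ l : List E, c' ∈ ExC inc Set.univ X \ {f, h} →
      W inc o l (inn inc o X c') ∧ (∀ e ∈ l, Ins inc X e) ∧
      ((l = []) ∨ ∃ c ∈ C, ∃ a b, p c = a ++ c' :: b ∧ l = c :: b.reverse ∧ (∀ g ∈ a, Ins inc Yᶜ g) ∧
        (∀ g ∈ b, Ins inc Y g) ∧ Crs inc Y c') := by
    intro c'
    by_cases hc' : c' ∈ ExC inc Set.univ X \ {f, h}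
    swap
    · exact ⟨[], fun h => absurd h hc'⟩
    obtain ⟨⟨-, x, z, hxz, hx, hz⟩, hfh⟩ := hc'
    have hinn : inn inc o X c' = x := inn_eq hxz hx hz
    have hzo : z ≠ o := fun h => hz (h ▸ ho)
    by_cases hxo : x = o
    · refine ⟨[], fun _ => ⟨?_, by simp, Or.inl rfl⟩⟩
      rw [hinn, hxo]
      exact W.nil o
    have hxY : x ∈ Y := hx.resolve_left hxo
    have hzY : z ∉ Y := fun h => hz (hYX h)
    have hcr : Crs inc Y c' := ⟨x, z, hxz, hxY, hzY⟩
    have hR : c' ∈ {g | g ≠ f ∧ g ≠ h ∧ o ∉ inc g} := by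
      refine ⟨fun h => hfh (Or.inl h), fun h => hfh (Or.inr h), ?_⟩
      rw [hxz, Sym2.mem_iff]
      rintro (h | h)
      · exact hxo h.symm
      · exact hzo h.symm
    obtain ⟨c, hc, a, b, u, u', h1, h2, h3, h4, h5, h6⟩ := hY.edge hp hR hcr
    have hu' : u' = x := by
      rw [h3] at hxz
      rcases Sym2.eq_iff.1 hxz with ⟨rfl, rfl⟩ | ⟨rfl, rfl⟩
      · exact absurd hxY h4
      · rfl
    subst hu'
    have hw := hp.walk c hc
    rw [h1] at hw
    obtain ⟨u2, hw1, hw2⟩ := hw.append_inv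
    obtain rfl := h2.det hw1
    obtain ⟨u3, hw3, hw4⟩ := hw2.cons_inv
    obtain rfl := other_eq h3 hw3
    have hac : W inc t (a ++ [c']) u' := h2.append (W.single h3)
    have hyc : y c ∈ Y := hY.later c hc (a ++ [c']) b [] u' (y c) (by rw [h1]; simp) hac h5 hw4
    have hbY : ∀ g ∈ b, Ins inc Y g := by
      intro g hg v hv
      obtain ⟨b1, b2, hb, hv1, -⟩ := hw4.split_at hg hv
      exact hY.later c hc (a ++ [c']) b1 b2 u' v (by rw [h1, hb]; simp) hac h5 hv1
    refine ⟨c :: b.reverse, fun _ => ⟨?_, ?_, Or.inr ⟨c, hc, a, b, h1, rfl, h6, hbY, hcr⟩⟩⟩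
    · rw [hinn]
      exact W.cons (hy c (hC c hc)).1 hw4.reverse
    · intro e he
      rcases List.mem_cons.1 he with rfl | he
      · rw [ins_iff (hy e (hC e hc)).1]
        exact ⟨ho, hYX hyc⟩
      · exact (hbY e (List.mem_reverse.1 he)).mono hYX
  choose l hl using key
  have hRo : ∀ c ∈ C, ∀ g ∈ p c, o ∉ inc g := fun c hc g hg => (hp.mem c hc g hg).2.2
  have hoC : ∀ c ∈ C, o ∈ inc c := fun c hc => by rw [(hy c (hC c hc)).1]; simp
  obtain ⟨p', hp', -, hsub⟩ := prune (inc := inc) (A := {e | e ∈ Set.univ ∧ Ins inc X e})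
    (C := ExC inc Set.univ X \ {f, h}) (o := o) (y := inn inc o X) (p := l)
    (fun c hc => (hl c hc).1) (fun c hc e he => ⟨trivial, (hl c hc).2.1 e he⟩) (by
      intro c hc d hd hne e he he'
      rcases (hl c hc).2.2 with h1 | ⟨c1, hc1, a, b, h1, h2, h3, h4, h5⟩
      · rw [h1] at he; simp at he
      rcases (hl d hd).2.2 with h1' | ⟨d1, hd1, a', b', h1', h2', h3', h4', h5'⟩
      · rw [h1'] at he'; simp at he'
      have hcd : c1 ≠ d1 := by
        rintro rfl
        have hdm : d ∈ p c1 := by rw [h1']; simp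
        rw [h1] at hdm
        rcases List.mem_append.1 hdm with hm | hm
        · obtain ⟨x, z, hxz, hx, hz⟩ := h5'
          exact h3 d hm x (by rw [hxz]; simp) hx
        · rcases List.mem_cons.1 hm with hm | hm
          · exact hne hm.symm
          · exact not_crs_of_ins (h4 d hm) h5'
      rw [h2] at he
      rw [h2'] at he'
      rcases List.mem_cons.1 he with h6 | h6 <;> rcases List.mem_cons.1 he' with h7 | h7
      · exact hcd (h6.symm.trans h7)
      · rw [h6] at h7
        exact hRo d1 hd1 c1 (by rw [h1']; simp [List.mem_reverse.1 h7]) (hoC c1 hc1)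
      · rw [h7] at h6
        exact hRo c1 hc1 d1 (by rw [h1]; simp [List.mem_reverse.1 h6]) (hoC d1 hd1)
      · exact hp.disj c1 hc1 d1 hd1 hcd e (by rw [h1]; simp [List.mem_reverse.1 h6])
          (by rw [h1']; simp [List.mem_reverse.1 h7]))
  obtain ⟨c, hc, hce⟩ := t32 hL hE ho ht hp' (Set.mem_univ e0) (hYX hvY) (hy e0 he0).2 (hy e0 he0).1
  have he := hsub c hc e0 hce
  rcases (hl c hc).2.2 with h1 | ⟨c1, hc1, a, b, h1, h2, h3, h4, h5⟩
  · rw [h1] at he; simp at he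
  · rw [h2] at he
    rcases List.mem_cons.1 he with h6 | h6
    · exact hn (h6 ▸ hc1)
    · exact hRo c1 hc1 e0 (by rw [h1]; simp [List.mem_reverse.1 h6]) (by rw [(hy e0 he0).1]; simp)

theorem linking2 {o t : V} (hot : o ≠ t) (hL : Loose inc Set.univ o t) (hE : Euler inc Set.univ o t)
    (f h : E) {y : E → V} (hy : ∀ e, OE inc o e → inc e = s(o, y e) ∧ y e ≠ o) :
    ∃ q, Sys inc {g | g ≠ f ∧ g ≠ h ∧ o ∉ inc g} t {e | OE inc o e} y q := by
  classical
  obtain ⟨L, hL1, hL2⟩ := linking hot hL hE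
  set C0 : Set E := {e | OE inc o e ∧ f ∉ L e ∧ h ∉ L e} with hC0
  set M : Set E := {e | OE inc o e ∧ (f ∈ L e ∨ h ∈ L e)} with hM
  have hMf : M.Finite := by
    have hs : ∀ g, ({e | OE inc o e ∧ g ∈ L e} : Set E).Finite := by
      intro g
      refine Set.Subsingleton.finite ?_
      rintro c ⟨hc, hc'⟩ d ⟨hd, hd'⟩
      by_contra hne
      exact hL2 c trivial d trivial hc hd hne g hc' hd'
    refine ((hs f).union (hs h)).subset ?_
    rintro e ⟨h1, h2 | h2⟩
    · exact Or.inl ⟨h1, h2⟩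
    · exact Or.inr ⟨h1, h2⟩
  have h0 : ∃ q, Sys inc {g | g ≠ f ∧ g ≠ h ∧ o ∉ inc g} t C0 y q := by
    obtain ⟨q, hq, -⟩ := prune (inc := inc) (A := {g | g ≠ f ∧ g ≠ h ∧ o ∉ inc g})
      (C := C0) (o := t) (y := y) (p := fun e => (L e).reverse) (by
        rintro e ⟨h1, h2, h3⟩
        obtain ⟨z, h4, h5, h6, h7⟩ := (hL1 e trivial h1).1
        obtain rfl := other_eq h4 (hy e h1).1
        exact h6.reverse) (by
        rintro e ⟨h1, h2, h3⟩ g hg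
        have hg' := List.mem_reverse.1 hg
        obtain ⟨z, h4, h5, h6, h7⟩ := (hL1 e trivial h1).1
        exact ⟨fun h => h2 (h ▸ hg'), fun h => h3 (h ▸ hg'), h7 g hg'⟩) (by
        rintro c hc d hd hne e he he'
        exact hL2 c trivial d trivial hc.1 hd.1 hne e (List.mem_reverse.1 he) (List.mem_reverse.1 he'))
    exact ⟨q, hq⟩
  have h1 : ∀ M' : Set E, M'.Finite → (∀ e ∈ M', OE inc o e) →
      ∃ q, Sys inc {g | g ≠ f ∧ g ≠ h ∧ o ∉ inc g} t (C0 ∪ M') y q := by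
    intro M' hM'
    induction M', hM' using Set.Finite.induction_on with
    | empty => intro _; simpa using h0
    | @insert a s ha hs ih =>
      intro hall
      obtain ⟨q, hq⟩ := ih (fun e he => hall e (Or.inr he))
      have heq : C0 ∪ insert a s = insert a (C0 ∪ s) := Set.union_insert
      rw [heq]
      by_cases haC : a ∈ C0 ∪ s
      · rw [Set.insert_eq_of_mem haC]; exact ⟨q, hq⟩
      · refine add_link hot hL hE hy ?_ hq (hall a (Or.inl rfl)) haC
        rintro e (he | he)
        · exact he.1
        · exact hall e (Or.inr he)
  obtain ⟨q, hq⟩ := h1 M hMf (fun e he => he.1)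
  refine ⟨q, ?_⟩
  convert hq using 1
  ext e
  simp only [hC0, hM, Set.mem_union, Set.mem_ofPred_eq]
  tauto

end LK

namespace LK
variable {V : Type u} {E : Type v} {inc inc' : E → Sym2 V}

theorem Pth.walk {G : Multigraph V E} {u w : V} {l : List E} (h : Pth G.inc u l w) :
    ∃ q : G.Walk u w, q.edges = l ∧ q.support.Nodup ∧
      ∀ x ∈ q.support, x = w ∨ ∃ g ∈ l, x ∈ G.inc g := by
  induction h with
  | nil v => exact ⟨.nil v, rfl, by simp [Multigraph.Walk.support], by simp [Multigraph.Walk.support]⟩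
  | @cons u v w e l he h hne hav ih =>
    obtain ⟨q, h1, h2, h3⟩ := ih
    refine ⟨.cons e he q, by simp [Multigraph.Walk.edges, h1], ?_, ?_⟩
    · simp only [Multigraph.Walk.support, List.nodup_cons]
      refine ⟨fun hu => ?_, h2⟩
      rcases h3 u hu with h | ⟨g, hg, h⟩
      · exact hne h
      · exact hav g hg h
    · intro x hx
      simp only [Multigraph.Walk.support, List.mem_cons] at hx
      rcases hx with rfl | hx
      · exact Or.inr ⟨e, by simp, by rw [he]; simp⟩
      · rcases h3 x hx with h | ⟨g, hg, h⟩
        · exact Or.inl h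
        · exact Or.inr ⟨g, by simp [hg], h⟩

theorem Pth.delete {G : Multigraph V E} {F : Set E} {u w : V} {l : List E} (h : Pth G.inc u l w)
    (hF : ∀ g ∈ l, g ∉ F) :
    ∃ l' : List {e // e ∉ F}, l'.map Subtype.val = l ∧ Pth (G.deleteEdges F).inc u l' w := by
  induction h with
  | nil v => exact ⟨[], rfl, .nil v⟩
  | @cons u v w e l he h hne hav ih =>
    obtain ⟨l', h1, h2⟩ := ih (fun g hg => hF g (by simp [hg]))
    refine ⟨⟨e, hF e (by simp)⟩ :: l', by simp [h1], .cons he h2 hne ?_⟩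
    intro g hg
    exact hav g.1 (by rw [← h1]; exact List.mem_map_of_mem hg)

theorem Pth.liftB {B : Set V} {t0 : V} (ht0 : t0 ∈ B) {π : V → V} (hπ1 : ∀ v ∈ B, π v = t0)
    (hπ2 : ∀ v, v ∉ B → π v = v) {u w : V} {l : List E}
    (h : Pth (fun e => Sym2.map π (inc e)) u l w) (hw : w = t0) (hu : u ∉ B) :
    ∃ b ∈ B, Pth inc u l b ∧ ∀ g ∈ l, ∀ v ∈ inc g, v ∈ B → v = b := by
  induction h with
  | nil v => subst hw; exact absurd ht0 hu
  | @cons u v w e l he h hne hav ih =>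
    subst hw
    have hor : ∃ a c, inc e = s(a, c) ∧ π a = u ∧ π c = v := by
      obtain ⟨a, c, hac⟩ := ends inc e
      simp only [hac, Sym2.map_mk] at he
      rcases Sym2.eq_iff.1 he with ⟨h1, h2⟩ | ⟨h1, h2⟩
      · exact ⟨a, c, hac, h1, h2⟩
      · exact ⟨c, a, by rw [hac, Sym2.eq_swap], h2, h1⟩
    obtain ⟨a, c, hac, ha, hc⟩ := hor
    have haB : a ∉ B := fun h => hne (by rw [← ha, hπ1 a h])
    have hau : a = u := by rw [← ha, hπ2 a haB]
    subst hau
    by_cases hcB : c ∈ B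
    · have hv : v = w := by rw [← hc, hπ1 c hcB]
      subst hv
      obtain rfl := h.self
      refine ⟨c, hcB, .cons hac (.nil c) (fun h => hu (h ▸ hcB)) (by simp), ?_⟩
      intro g hg v hv hvB
      simp only [List.mem_singleton] at hg
      subst hg
      rw [hac] at hv
      rcases Sym2.mem_iff.1 hv with rfl | rfl
      · exact absurd hvB hu
      · rfl
    · have hcv : c = v := by rw [← hc, hπ2 c hcB]
      subst hcv
      obtain ⟨b, hb, h1, h2⟩ := ih rfl hcB
      refine ⟨b, hb, .cons hac h1 (fun h => hu (h ▸ hb)) ?_, ?_⟩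
      · intro g hg hug
        refine hav g hg ?_
        rw [Sym2.mem_map]
        exact ⟨a, hug, hπ2 a hu⟩
      · intro g hg v hv hvB
        rcases List.mem_cons.1 hg with rfl | hg
        · rw [hac] at hv
          rcases Sym2.mem_iff.1 hv with rfl | rfl
          · exact absurd hvB hu
          · exact absurd hvB hcB
        · exact h2 g hg v hv hvB

theorem nowave_aux {G : Multigraph V E} {B : Set V} {s : V}
    (hnowave : ∀ W : Set (G.SPath s), G.IsWave s B W → G.lastEdges W = G.inci s)
    {X : Set V} (hs : s ∈ X) (hB : ∀ b ∈ B, b ∉ X) {p : E → List E}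
    (hp : Cover G.inc Set.univ s X (ExC G.inc Set.univ X) p) {e0 : E} {x0 : V} (hx0 : x0 ∈ X)
    (he0 : G.inc e0 = s(s, x0)) : False := by
  classical
  obtain ⟨p', hp', hP, -⟩ := prune hp.walk hp.mem hp.disj
  set X0 : Set V := {v | Cn G.inc {e | Ins G.inc X e} s v} with hX0
  have hsX0 : s ∈ X0 := Cn.refl _ _
  have hX0X : X0 ⊆ X := by
    rintro v ⟨l, hl, hw⟩
    exact hw.mem_of_ins hs hl
  set Yc : Set V := {v | ∃ b ∈ B, Cn G.inc {e | Ins G.inc X0ᶜ e} v b} with hYc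
  have hYX : ∀ v ∈ Yc, v ∉ X0 := by
    rintro v ⟨b, hb, l, hl, hw⟩
    exact hw.reverse.mem_of_ins (Y := X0ᶜ) (fun h => hB b hb (hX0X h)) (by simpa using hl)
  set D : Set E := G.cut Ycᶜ with hD
  have hDe : ∀ d ∈ D, ∃ x y, G.inc d = s(x, y) ∧ x ∈ X0 ∧ y ∈ Yc ∧ y ∉ X := by
    rintro d ⟨x, y, hxy, hx, hy⟩
    have hy : y ∈ Yc := not_not.1 hy
    have hxX : x ∈ X0 := by
      by_contra hxn
      obtain ⟨b, hb, hc⟩ := hy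
      refine hx ⟨b, hb, (Cn.edge ?_ hxy).trans hc⟩
      rw [Set.mem_ofPred_eq, ins_iff hxy]
      exact ⟨hxn, hYX y ⟨b, hb, hc⟩⟩
    refine ⟨x, y, hxy, hxX, hy, fun hyX => hYX y hy ?_⟩
    refine Cn.trans (show Cn G.inc {e | Ins G.inc X e} s x from hxX) (Cn.edge (e := d) ?_ hxy)
    rw [Set.mem_ofPred_eq, ins_iff hxy]
    exact ⟨hX0X hxX, hyX⟩
  have hDX : ∀ d ∈ D, d ∈ ExC G.inc Set.univ X := by
    intro d hd
    obtain ⟨x, y, h1, h2, h3, h4⟩ := hDe d hd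
    exact ⟨trivial, x, y, h1, hX0X h2, h4⟩
  have hSP : ∀ d : D, ∃ P : G.SPath s, P.walk.edges = p' d.1 ++ [d.1] := by
    rintro ⟨d, hd⟩
    obtain ⟨x, y, h1, h2, h3, h4⟩ := hDe d hd
    have h5 := hP d (hDX d hd)
    rw [inn_eq h1 (hX0X h2) h4] at h5
    have h6 : Pth G.inc s (p' d ++ [d]) y := h5.append_sep (fun g hg => (hp'.mem d (hDX d hd) g hg).2)
      (hX0X h2) h1 h4 (.nil y) (by simp)
    obtain ⟨q, hq1, hq2, -⟩ := h6.walk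
    exact ⟨⟨y, q, hq2, by rw [hq1]; simp⟩, hq1⟩
  choose Pf hPf using hSP
  have hlast : G.lastEdges (Set.range Pf) = D := by
    ext e
    constructor
    · rintro ⟨P, ⟨d, rfl⟩, hP⟩
      rw [hPf d] at hP
      simp at hP
      exact hP ▸ d.2
    · intro he
      exact ⟨Pf ⟨e, he⟩, ⟨_, rfl⟩, by rw [hPf]; simp⟩
  have hmin : G.IsMinSepCut {s} B D := by
    refine ⟨⟨Ycᶜ, ?_, ?_, rfl⟩, ?_⟩
    · rintro v rfl
      exact fun h => hYX v h hsX0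
    · intro b hb h
      exact h ⟨b, hb, Cn.refl _ _⟩
    · rintro D' ⟨Z, hZ1, hZ2, rfl⟩ hsub
      refine hsub.antisymm ?_
      intro d hd
      obtain ⟨x, y, h1, h2, h3, h4⟩ := hDe d hd
      refine ⟨x, y, h1, ?_, ?_⟩
      · obtain ⟨l, hl, hw⟩ := (show Cn G.inc {e | Ins G.inc X e} s x from h2)
        refine (hw.ins (hZ1 rfl) fun g hg hc => ?_).1
        obtain ⟨a, b, h5, h6, h7, h8⟩ := hDe g (hsub hc)
        exact h8 (hl g hg b (by rw [h5]; simp))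
      · obtain ⟨b, hb, l, hl, hw⟩ := h3
        intro hy
        refine hZ2 b hb (hw.ins hy fun g hg hc => ?_).1
        obtain ⟨a, b, h5, h6, h7, h8⟩ := hDe g (hsub hc)
        exact hl g hg a (by rw [h5]; simp) h6
  have hwave : G.IsWave s B (Set.range Pf) := by
    refine ⟨?_, by rw [hlast]; exact hmin⟩
    rintro P ⟨d, rfl⟩ Q ⟨d', rfl⟩ hne e he he'
    have hdd : d ≠ d' := fun h => hne (by rw [h])
    have hdd' : d.1 ≠ d'.1 := fun h => hdd (Subtype.ext h)
    have hd1 := hDX d.1 d.2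
    have hd2 := hDX d'.1 d'.2
    rw [hPf, List.mem_append, List.mem_singleton] at he he'
    rcases he with he | he <;> rcases he' with he' | he'
    · exact hp'.disj _ hd1 _ hd2 hdd' e he he'
    · exact not_crs_of_ins (hp'.mem _ hd1 e he).2 (he' ▸ hd2.2)
    · exact not_crs_of_ins (hp'.mem _ hd2 e he').2 (he ▸ hd1.2)
    · exact hdd' (he.symm.trans he')
  have hfin := hnowave _ hwave
  rw [hlast] at hfin
  have he0D : e0 ∈ D := by
    rw [hfin]
    change s ∈ G.inc e0
    rw [he0]; simp
  obtain ⟨x, y, h1, h2, h3, h4⟩ := hDe e0 he0D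
  have : y ∈ G.inc e0 := by rw [h1]; simp
  rw [he0] at this
  rcases Sym2.mem_iff.1 this with rfl | rfl
  · exact h4 hs
  · exact h4 hx0

open Classical in
theorem main {G : Multigraph V E} {T : Set V}
    (hEul : ∀ X : Set V, X ⊆ Tᶜ → ¬ ((G.cut X).Finite ∧ Odd (G.cut X).ncard))
    {s : V} (hs : s ∈ T)
    (hnowave : ∀ W : Set (G.SPath s), G.IsWave s (T \ {s}) W →
      G.lastEdges W = G.inci s) (f h : E) :
      ∃ P : Set ((G.deleteEdges {f, h}).TPath T),
        (G.deleteEdges {f, h}).TPathDisjoint P ∧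
        ∀ e ∈ (G.deleteEdges {f, h}).inci s, ∃ p ∈ P, e ∈ p.walk.edges := by
  set B : Set V := T \ {s} with hB
  have hsB : s ∉ B := fun h => h.2 rfl
  by_cases hBne : ¬ B.Nonempty
  · have hB0 : B = ∅ := Set.not_nonempty_iff_eq_empty.1 hBne
    have hl : G.lastEdges (∅ : Set (G.SPath s)) = ∅ := by
      ext e; simp [Multigraph.lastEdges]
    have hW : G.IsWave s B ∅ := by
      refine ⟨by simp [Multigraph.SPathDisjoint], ?_⟩
      rw [hl]
      refine ⟨⟨Set.univ, by simp, by simp [hB0], ?_⟩, fun D _ hD => Set.subset_empty_iff.1 hD⟩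
      ext e; simp [Multigraph.cut]
    have h1 := hnowave ∅ hW
    rw [hl] at h1
    refine ⟨∅, by simp [Multigraph.TPathDisjoint], fun e he => ?_⟩
    have : e.1 ∈ G.inci s := he
    rw [← h1] at this
    exact absurd this (by simp)
  obtain ⟨t0, ht0⟩ := not_not.1 hBne
  have hst : s ≠ t0 := fun h => hsB (h ▸ ht0)
  obtain ⟨π, hπ1, hπ2⟩ : ∃ π : V → V, (∀ v ∈ B, π v = t0) ∧ ∀ v, v ∉ B → π v = v :=
    ⟨fun v => if v ∈ B then t0 else v, fun v hv => if_pos hv, fun v hv => if_neg hv⟩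
  have hπs : ∀ v, π v = s → v = s := by
    intro v hv
    by_cases h : v ∈ B
    · rw [hπ1 v h] at hv; exact absurd hv.symm hst
    · rwa [hπ2 v h] at hv
  have hpre : ∀ Y : Set V, t0 ∉ Y → ∀ v, v ∈ π ⁻¹' Y ↔ v ∈ Y ∧ v ∉ B := by
    intro Y hY v
    by_cases h : v ∈ B
    · simp [hπ1 v h, hY, h]
    · simp [hπ2 v h, h]
  set inc' : E → Sym2 V := fun e => Sym2.map π (G.inc e) with hinc'
  have hcrs : ∀ Y e, Crs inc' Y e ↔ Crs G.inc (π ⁻¹' Y) e := fun Y e => crs_map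
  have hins : ∀ Y e, Ins inc' Y e ↔ Ins G.inc (π ⁻¹' Y) e := fun Y e => ins_map
  have hEuler : Euler inc' Set.univ s t0 := by
    intro Y hsY htY hfin
    have heq : ExC inc' Set.univ Y = G.cut (π ⁻¹' Y) := by
      ext e
      exact ⟨fun h => (hcrs Y e).1 h.2, fun h => ⟨trivial, (hcrs Y e).2 h⟩⟩
    rw [heq] at hfin ⊢
    by_contra hodd
    refine hEul (π ⁻¹' Y) ?_ ⟨hfin, Nat.not_even_iff_odd.1 hodd⟩
    intro v hv hvT
    obtain ⟨h1, h2⟩ := (hpre Y htY v).1 hv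
    exact h2 ⟨hvT, fun h => hsY (h ▸ h1)⟩
  have hLoose : Loose inc' Set.univ s t0 := by
    intro X p hw e0 _ x0 hx0 hx0s he0
    have hXB : ∀ b ∈ B, b ∉ π ⁻¹' X := fun b hb h => ((hpre X hw.ht b).1 h).2 hb
    have hsX : s ∈ π ⁻¹' X := (hpre X hw.ht s).2 ⟨hw.ho, hsB⟩
    have hsame : ∀ g, Ins inc' X g → G.inc g = inc' g := by
      intro g hg
      have hg' := (hins X g).1 hg
      obtain ⟨x, y, hxy⟩ := ends G.inc g
      have h1 := ((hpre X hw.ht x).1 (hg' x (by rw [hxy]; simp))).2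
      have h2 := ((hpre X hw.ht y).1 (hg' y (by rw [hxy]; simp))).2
      simp only [hinc', hxy, Sym2.map_mk, hπ2 x h1, hπ2 y h2]
    have hex : ∀ c ∈ ExC G.inc Set.univ (π ⁻¹' X), c ∈ ExC inc' Set.univ X :=
      fun c hc => ⟨trivial, (hcrs X c).2 hc.2⟩
    have hcov : Cover G.inc Set.univ s (π ⁻¹' X) (ExC G.inc Set.univ (π ⁻¹' X)) p := by
      refine ⟨fun c hc => ?_, fun c hc e he => ?_, fun c hc d hd => ?_, fun c hc => ?_⟩
      · have h1 := (hw.cov.walk c (hex c hc)).congr (inc' := G.inc)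
          (fun g hg => hsame g (hw.cov.mem c (hex c hc) g hg).2)
        obtain ⟨-, x, y, hxy, hx, hy⟩ := hc
        have h2 : inc' c = s(π x, π y) := by simp only [hinc', hxy, Sym2.map_mk]
        have h3 : inn inc' s X c = π x := inn_eq h2 hx hy
        rw [h3, hπ2 x ((hpre X hw.ht x).1 hx).2] at h1
        rw [inn_eq hxy hx hy]
        exact h1
      · exact ⟨trivial, (hins X e).1 (hw.cov.mem c (hex c hc) e he).2⟩
      · exact hw.cov.disj c (hex c hc) d (hex d hd)
      · exact hw.cov.nodup c (hex c hc)
    have he0i : Ins inc' X e0 := by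
      rw [ins_iff he0]; exact ⟨hw.ho, hx0⟩
    have he0G : G.inc e0 = s(s, x0) := by rw [hsame e0 he0i, he0]
    have hx0' : x0 ∈ π ⁻¹' X := (hins X e0).1 he0i x0 (by rw [he0G]; simp)
    exact nowave_aux hnowave hsX hXB hcov hx0' he0G
  have hyex : ∀ e, ∃ y, OE inc' s e → inc' e = s(s, y) ∧ y ≠ s := by
    intro e
    by_cases h : OE inc' s e
    · obtain ⟨y, h1, h2⟩ := h
      exact ⟨y, fun _ => ⟨h2, h1⟩⟩
    · exact ⟨s, fun h' => absurd h' h⟩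
  choose y hy using hyex
  obtain ⟨q, hq⟩ := linking2 hst hLoose hEuler f h hy
  have hOE : ∀ e, s ∈ G.inc e → OE inc' s e := by
    intro e he
    obtain ⟨z, hz⟩ := Sym2.mem_iff_exists.1 he
    refine ⟨π z, fun h => ?_, ?_⟩
    · have := hπs z h
      subst this
      exact G.not_isDiag e (by rw [hz]; simp)
    · simp only [hinc', hz, Sym2.map_mk, hπ2 s hsB]
  have hpath : ∀ e : {e : {e : E // e ∉ ({f, h} : Set E)} // s ∈ G.inc e.1},
      ∃ P : (G.deleteEdges {f, h}).TPath T, e.1 ∈ P.walk.edges ∧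
        ∀ g ∈ P.walk.edges, g = e.1 ∨ g.1 ∈ q e.1.1 := by
    rintro ⟨⟨e, he⟩, hse⟩
    have hoe := hOE e hse
    obtain ⟨hy1, hy2⟩ := hy e hoe
    obtain ⟨l, hl1, hl2⟩ := (hq.walk e hoe).reverse.toPth
    have hlq : ∀ g ∈ l, g ∈ q e := fun g hg => List.mem_reverse.1 (hl1.subset hg)
    have hP : Pth inc' s (e :: l) t0 := .cons hy1 hl2 hst
      (fun g hg => (hq.mem e hoe g (hlq g hg)).2.2)
    obtain ⟨b, hb, hP2, hP3⟩ := Pth.liftB ht0 hπ1 hπ2 hP rfl hsB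
    have hF : ∀ g ∈ e :: l, g ∉ ({f, h} : Set E) := by
      intro g hg
      rcases List.mem_cons.1 hg with rfl | hg
      · exact he
      · have := hq.mem e hoe g (hlq g hg)
        rintro (h' | h')
        · exact this.1 h'
        · exact this.2.1 h'
    obtain ⟨l', hl', hP4⟩ := hP2.delete hF
    obtain ⟨w, hw1, hw2, hw3⟩ := hP4.walk
    refine ⟨⟨s, b, w, hs, hb.1, fun h => hsB (h ▸ hb), hw2, ?_⟩, ?_, ?_⟩
    · intro x hx hxT
      by_cases hxs : x = s
      · exact Or.inl hxs
      · right
        rcases hw3 x hx with h | ⟨g, hg, hxg⟩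
        · exact h
        · refine hP3 g.1 ?_ x hxg ⟨hxT, hxs⟩
          rw [← hl']
          exact List.mem_map_of_mem hg
    · have : e ∈ l'.map Subtype.val := by rw [hl']; simp
      obtain ⟨g, hg, hge⟩ := List.mem_map.1 this
      have hgg : g = ⟨e, he⟩ := Subtype.ext hge
      change _ ∈ w.edges
      rw [hw1]
      exact hgg ▸ hg
    · intro g hg
      change g ∈ w.edges at hg
      rw [hw1] at hg
      have : g.1 ∈ e :: l := by rw [← hl']; exact List.mem_map_of_mem hg
      rcases List.mem_cons.1 this with h | h
      · exact Or.inl (Subtype.ext h)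
      · exact Or.inr (hlq _ h)
  choose Pf hPf1 hPf2 using hpath
  refine ⟨Set.range Pf, ?_, fun e he => ⟨Pf ⟨e, he⟩, ⟨_, rfl⟩, hPf1 ⟨e, he⟩⟩⟩
  rintro P ⟨d, rfl⟩ Q ⟨d', rfl⟩ hne e he he'
  have hdd : d.1.1 ≠ d'.1.1 := fun h => hne (by rw [Subtype.ext (Subtype.ext h)])
  have hsn : ∀ d : {e : {e : E // e ∉ ({f, h} : Set E)} // s ∈ G.inc e.1}, s ∈ inc' d.1.1 := by
    intro d
    rw [(hy _ (hOE _ d.2)).1]; simp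
  rcases hPf2 d e he with h1 | h1 <;> rcases hPf2 d' e he' with h2 | h2
  · exact hdd (by rw [← h1, ← h2])
  · rw [h1] at h2
    exact (hq.mem _ (hOE _ d'.2) _ h2).2.2 (hsn d)
  · rw [h2] at h1
    exact (hq.mem _ (hOE _ d.2) _ h1).2.2 (hsn d')
  · exact hq.disj _ (hOE _ d.2) _ (hOE _ d'.2) hdd _ h1 h2

end LK

/-- If `G` is inner Eulerian w.r.t. `T` and `s ∈ T` admits no non-trivial
`s(T−s)`-wave, then for every pair of edges `f, h` there is a system of
pairwise edge-disjoint `T`-paths in `G − f − h` covering all edges of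
`G − f − h` incident with `s`. -/
theorem linkability_after_two_deletions {V : Type u} {E : Type v}
    (G : Multigraph V E) (T : Set V)
    (hEul : ∀ X : Set V, X ⊆ Tᶜ → ¬ ((G.cut X).Finite ∧ Odd (G.cut X).ncard))
    (s : V) (hs : s ∈ T)
    (hnowave : ∀ W : Set (G.SPath s), G.IsWave s (T \ {s}) W →
      G.lastEdges W = G.inci s) :
    ∀ f h : E,
      ∃ P : Set ((G.deleteEdges {f, h}).TPath T),
        (G.deleteEdges {f, h}).TPathDisjoint P ∧
        ∀ e ∈ (G.deleteEdges {f, h}).inci s, ∃ p ∈ P, e ∈ p.walk.edges := by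
  intro f h
  exact LK.main hEul hs hnowave f h
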